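/- arXiv:1105.1084 — 4 statements merged into one kernel-verified Lean document; each statement's English description precedes it below -/
import Mathlib

section
/- Let H be a complex Hilbert space with orthonormal basis {e_k : k ∈ ℕ} and let Φ be the canonical phase observable, i.e. the POVM on (𝕋, ℬ(𝕋)) acting on H determined by ⟨e_k, Φ(B) e_l⟩ = ∫_B z^{k−l} dμ(z) for all k, l ∈ ℕ and Borel B ⊆ 𝕋, where μ is the normalized Haar measure on 𝕋. Then Φ is an extreme point of the convex set of ALL POVMs on (𝕋, ℬ(𝕋)) acting on H. -/
open MeasureTheory Set

local notation "⟪" x ", " y "⟫" => @inner ℂ _ _ x y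

noncomputable instance : MeasurableSpace Circle := borel Circle
instance : BorelSpace Circle := ⟨rfl⟩

/-- A normalized positive operator valued measure (POVM). -/
structure POVM (Ω : Type*) [MeasurableSpace Ω] (H : Type*) [NormedAddCommGroup H]
    [InnerProductSpace ℂ H] [CompleteSpace H] where
  toFun : Set Ω → (H →L[ℂ] H)
  isPositive : ∀ B : Set Ω, MeasurableSet B → (toFun B).IsPositive
  normalized : toFun Set.univ = 1
  m_iUnion : ∀ B : ℕ → Set Ω, (∀ k, MeasurableSet (B k)) →
    Pairwise (Function.onFun Disjoint B) → ∀ φ ψ : H,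
      HasSum (fun k => ⟪φ, toFun (B k) ψ⟫) ⟪φ, toFun (⋃ k, B k) ψ⟫

/-!
If `Φ = t M₁ + (1 - t) M₂`, then each `M = Mᵢ` satisfies `M ≤ c Φ` for some constant `c`. The matrix
`Φ_{kl}` has the rank-one density `g_k * conj g_l` with `g_k(z) = z ^ k` and `g_0 = 1`. On a small
set `A` where `g_k` is nearly equal to a constant `a`, the vector `e_k - conj a • e_0` is almost
null for `Φ(A)`, hence for `M(A)`, and Cauchy–Schwarz for the positive form `M(A)` gives
`M_{kl}(A) ≈ a * conj b * M_{00}(A)`, where `b` is the approximate value of `g_l`, with an error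
`o(1) μ(A)`. Summing over ever finer partitions, `M_{kl}` has the same density `g_k * conj g_l`, but
with respect to the measure `m = M_{00}`. Finally `M(𝕋) = 1` prescribes all Fourier coefficients of
`m`, so `m = μ` and `M = Φ`.
-/

open scoped ComplexConjugate BoundedContinuousFunction

section PositiveOperators

variable {H : Type*} [NormedAddCommGroup H] [InnerProductSpace ℂ H]

theorem norm_inner_sq_le_of_isPositive [CompleteSpace H] {T : H →L[ℂ] H} (hT : T.IsPositive)
    (x y : H) : ‖⟪x, T y⟫‖ ^ 2 ≤ (⟪x, T x⟫).re * (⟪y, T y⟫).re := by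
  obtain ⟨S, rfl⟩ := CStarAlgebra.nonneg_iff_eq_star_mul_self.1
    ((ContinuousLinearMap.nonneg_iff_isPositive T).2 hT)
  have inner_eq (u v : H) : ⟪u, (star S * S) v⟫ = ⟪S u, S v⟫ :=
    ContinuousLinearMap.adjoint_inner_right S u (S v)
  have re_inner_self (u : H) : (⟪S u, S u⟫).re = ‖S u‖ ^ 2 :=
    (norm_sq_eq_re_inner (𝕜 := ℂ) (S u)).symm
  rw [inner_eq, inner_eq, inner_eq, re_inner_self, re_inner_self, ← mul_pow]
  gcongr
  exact norm_inner_le_norm (S x) (S y)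

theorem re_inner_le_of_le_smul {S T : H →L[ℂ] H} {c : ℝ} (h : S ≤ (c : ℂ) • T) (x : H) :
    (⟪x, S x⟫).re ≤ c * (⟪x, T x⟫).re := by
  have hsub : 0 ≤ (⟪x, ((c : ℂ) • T - S) x⟫).re := h.re_inner_nonneg_right x
  simpa [inner_sub_right, inner_smul_right] using hsub

theorem le_inv_smul_of_eq_smul_add_smul {R S T : H →L[ℂ] H} {s t : ℝ} (ht : 0 < t) (hs : 0 ≤ s)
    (hS : S.IsPositive) (h : R = (t : ℂ) • T + (s : ℂ) • S) : T ≤ ((t⁻¹ : ℝ) : ℂ) • R := by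
  have hdiff : ((t⁻¹ : ℝ) : ℂ) • R - T = ((t⁻¹ * s : ℝ) : ℂ) • S := by
    have ht' : (t : ℂ) ≠ 0 := by exact_mod_cast ht.ne'
    rw [h, smul_add, smul_smul, smul_smul]
    simp [ht']
  rw [ContinuousLinearMap.le_def, hdiff]
  exact hS.smul_of_nonneg (by exact_mod_cast mul_nonneg (inv_nonneg.2 ht.le) hs)

end PositiveOperators

section Measures

variable {Ω : Type*} [MeasurableSpace Ω]

theorem vectorMeasure_eq_zero_of_locally_small {E F : Type*} [NormedAddCommGroup E]
    [PseudoMetricSpace F] [MeasurableSpace F] [OpensMeasurableSpace F]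
    [TopologicalSpace.SeparableSpace F] {ν : VectorMeasure Ω E} {μ : Measure Ω}
    [IsFiniteMeasure μ] {f : Ω → F} (hf : Measurable f)
    (h : ∀ ε > 0, ∃ δ > 0, ∀ A, MeasurableSet A →
      (∀ z ∈ A, ∀ w ∈ A, dist (f z) (f w) ≤ δ) → ‖ν A‖ ≤ ε * μ.real A) : ν = 0 := by
  have norm_le {ε : ℝ} (hε : 0 < ε) {B : Set Ω} (hB : MeasurableSet B) :
      ‖ν B‖ ≤ ε * μ.real B := by
    obtain ⟨δ, hδ, hν⟩ := h ε hε
    obtain ⟨P, hPm, hPb, hPd, hPu, hPdisj⟩ :=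
      SeparableSpace.exists_measurable_partition_diam_le F hδ
    let A (n : ℕ) : Set Ω := B ∩ f ⁻¹' P n
    have hAm (n : ℕ) : MeasurableSet (A n) := hB.inter (hf (hPm n))
    have hAdisj : Pairwise (Function.onFun Disjoint A) := fun i j hij =>
      ((hPdisj hij).preimage f).mono inter_subset_right inter_subset_right
    have hAu : ⋃ n, A n = B := by
      rw [← inter_iUnion, ← preimage_iUnion, hPu, preimage_univ, inter_univ]
    have hν_sum := ν.hasSum_of_disjoint_iUnion hAm hAdisj
    have hμ_sum := μ.toSignedMeasure.hasSum_of_disjoint_iUnion hAm hAdisj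
    rw [hAu] at hν_sum hμ_sum
    simp only [Measure.toSignedMeasure_apply_measurable, hAm, hB] at hμ_sum
    rw [← hν_sum.tsum_eq]
    refine tsum_of_norm_bounded (hμ_sum.mul_left ε) fun n => hν (A n) (hAm n) fun z hz w hw => ?_
    exact (Metric.dist_le_diam_of_mem (hPb n) hz.2 hw.2).trans (hPd n)
  ext B hB
  refine norm_le_zero_iff.1 (le_of_forall_pos_le_add fun ε hε => ?_)
  calc ‖ν B‖ ≤ ε / (μ.real B + 1) * μ.real B := norm_le (by positivity) hB
    _ ≤ 0 + ε := by
      rw [zero_add, div_mul_eq_mul_div, div_le_iff₀ (by positivity)]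
      gcongr
      exact le_add_of_nonneg_right zero_le_one

theorem norm_setIntegral_mul_conj_sub_le {m : Measure Ω} [IsFiniteMeasure m] {p q : Ω → ℂ}
    {A : Set Ω} {a b : ℂ} {δ : ℝ} (hpq : Integrable (fun z => p z * conj (q z)) m)
    (ha : ‖a‖ ≤ 1) (hq : ∀ z, ‖q z‖ ≤ 1) (hpa : ∀ z ∈ A, ‖p z - a‖ ≤ δ)
    (hqb : ∀ z ∈ A, ‖q z - b‖ ≤ δ) :
    ‖∫ z in A, p z * conj (q z) ∂m - a * conj b * m.real A‖ ≤ 2 * δ * m.real A := by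
  have pointwise : ∀ z ∈ A, ‖p z * conj (q z) - a * conj b‖ ≤ 2 * δ := fun z hz => by
    have hδ : 0 ≤ δ := (norm_nonneg _).trans (hpa z hz)
    calc ‖p z * conj (q z) - a * conj b‖
        = ‖(p z - a) * conj (q z) + a * conj (q z - b)‖ := by rw [map_sub]; ring_nf
      _ ≤ ‖p z - a‖ * ‖q z‖ + ‖a‖ * ‖q z - b‖ := by
        simpa only [norm_mul, RCLike.norm_conj] using
          norm_add_le ((p z - a) * conj (q z)) (a * conj (q z - b))
      _ ≤ δ * 1 + 1 * δ := by gcongr <;> simp_all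
      _ = 2 * δ := by ring
  have hsub : ∫ z in A, p z * conj (q z) ∂m - a * conj b * m.real A
      = ∫ z in A, (p z * conj (q z) - a * conj b) ∂m := by
    rw [integral_sub hpq.restrict (integrable_const _), setIntegral_const, Complex.real_smul,
      mul_comm]
  rw [hsub]
  exact norm_setIntegral_le_of_norm_le_const (measure_lt_top _ _) pointwise

end Measures

section FourierUniqueness

theorem ext_of_forall_mem_submonoid_integral_eq_of_polish {E : Type*} [MeasurableSpace E]
    [TopologicalSpace E] [PolishSpace E] [BorelSpace E] {m₁ m₂ : Measure E} [IsFiniteMeasure m₁]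
    [IsFiniteMeasure m₂] (S : Submonoid (E →ᵇ ℂ)) (hstar : ∀ f ∈ S, star f ∈ S)
    (hsep : ∀ x y, x ≠ y → ∃ f ∈ S, f x ≠ f y) (h : ∀ f ∈ S, ∫ x, f x ∂m₁ = ∫ x, f x ∂m₂) :
    m₁ = m₂ := by
  have mem_span {f : E →ᵇ ℂ} (hf : f ∈ StarAlgebra.adjoin ℂ (S : Set (E →ᵇ ℂ))) :
      f ∈ Submodule.span ℂ (S : Set (E →ᵇ ℂ)) := by
    have hSstar : (S : Set (E →ᵇ ℂ)) ∪ star (S : Set (E →ᵇ ℂ)) = S :=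
      union_eq_left.2 fun f hf => star_star f ▸ hstar _ hf
    have hspan := StarAlgebra.adjoin_eq_span (R := ℂ) (S : Set (E →ᵇ ℂ))
    rw [hSstar, Submonoid.closure_eq] at hspan
    exact hspan.le hf
  refine ext_of_forall_mem_subalgebra_integral_eq_of_polish (𝕜 := ℂ)
    (A := StarAlgebra.adjoin ℂ (S : Set (E →ᵇ ℂ))) (fun x y hxy => ?_) fun f hf => ?_
  · obtain ⟨f, hf, hfxy⟩ := hsep x y hxy
    exact ⟨f, ⟨_, ⟨f, StarAlgebra.subset_adjoin ℂ _ hf, rfl⟩, rfl⟩, hfxy⟩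
  · replace hf := mem_span hf
    induction hf using Submodule.span_induction with
    | mem f hf => exact h f hf
    | zero => simp
    | add f g _ _ hf hg =>
      simp only [BoundedContinuousFunction.coe_add, Pi.add_apply]
      rw [integral_add (f.integrable _) (g.integrable _),
        integral_add (f.integrable _) (g.integrable _), hf, hg]
    | smul a f _ hf =>
      simp only [BoundedContinuousFunction.coe_smul, integral_smul, hf]

/-- The characters `z ↦ z ^ n` of the unit circle, as bounded continuous functions. They are
indexed multiplicatively so that their range is a submonoid of `Circle →ᵇ ℂ`. -/
noncomputable def circleCharacter : Multiplicative ℤ →* (Circle →ᵇ ℂ) where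
  toFun n := BoundedContinuousFunction.mkOfCompact
    ⟨fun z => ((z ^ n.toAdd : Circle) : ℂ), continuous_subtype_val.comp (continuous_zpow _)⟩
  map_one' := by ext; simp
  map_mul' m n := by ext; simp [zpow_add]

theorem circleCharacter_apply (n : Multiplicative ℤ) (z : Circle) :
    circleCharacter n z = (z : ℂ) ^ n.toAdd :=
  Circle.coe_zpow z n.toAdd

theorem star_circleCharacter (n : Multiplicative ℤ) :
    star (circleCharacter n) = circleCharacter n⁻¹ := by
  ext z
  simp [circleCharacter_apply, ← Circle.coe_inv_eq_conj]

theorem ext_of_forall_integral_zpow_eq {m₁ m₂ : Measure Circle} [IsFiniteMeasure m₁]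
    [IsFiniteMeasure m₂] (h : ∀ n : ℤ, ∫ z, (z : ℂ) ^ n ∂m₁ = ∫ z, (z : ℂ) ^ n ∂m₂) :
    m₁ = m₂ := by
  refine ext_of_forall_mem_submonoid_integral_eq_of_polish (MonoidHom.mrange circleCharacter)
    ?_ (fun z w hzw => ?_) ?_
  · rintro _ ⟨n, rfl⟩
    exact ⟨n⁻¹, (star_circleCharacter n).symm⟩
  · refine ⟨_, ⟨Multiplicative.ofAdd 1, rfl⟩, ?_⟩
    simpa [circleCharacter_apply, Circle.ext_iff] using hzw
  · rintro _ ⟨n, rfl⟩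
    simpa only [circleCharacter_apply] using h n.toAdd

theorem circle_zpow_natCast_sub_natCast (z : Circle) (k l : ℕ) :
    (z : ℂ) ^ ((k : ℤ) - (l : ℤ)) = (z : ℂ) ^ k * conj ((z : ℂ) ^ l) := by
  rw [zpow_sub₀ z.coe_ne_zero, zpow_natCast, zpow_natCast, map_pow, ← Circle.coe_inv_eq_conj,
    Circle.coe_inv, inv_pow, div_eq_mul_inv]

theorem ext_of_forall_integral_pow_mul_conj_pow_eq {m₁ m₂ : Measure Circle} [IsFiniteMeasure m₁]
    [IsFiniteMeasure m₂]
    (h : ∀ k l : ℕ, ∫ z, (z : ℂ) ^ k * conj ((z : ℂ) ^ l) ∂m₁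
      = ∫ z, (z : ℂ) ^ k * conj ((z : ℂ) ^ l) ∂m₂) : m₁ = m₂ := by
  simp_rw [← circle_zpow_natCast_sub_natCast] at h
  refine ext_of_forall_integral_zpow_eq fun n => ?_
  simpa only [Int.toNat_sub_toNat_neg] using h n.toNat (-n).toNat

end FourierUniqueness

namespace POVM

variable {Ω H : Type*} [MeasurableSpace Ω] [NormedAddCommGroup H] [InnerProductSpace ℂ H]
  [CompleteSpace H]

theorem inner_toFun_empty (M : POVM Ω H) (x y : H) : ⟪x, M.toFun ∅ y⟫ = 0 := by
  have hsum := M.m_iUnion (fun _ => ∅) (fun _ => MeasurableSet.empty)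
    (fun _ _ _ => disjoint_empty ∅) x y
  simpa using (summable_const_iff (β := ℕ) _).1 hsum.summable

open Classical in
/-- The complex measure `B ↦ ⟪x, M(B) y⟫`; as for every vector measure, its value at a
non-measurable set is `0`, whatever `M.toFun` is there. -/
noncomputable def sesqMeasure (M : POVM Ω H) (x y : H) : ComplexMeasure Ω where
  measureOf' B := if MeasurableSet B then ⟪x, M.toFun B y⟫ else 0
  empty' := by simp [inner_toFun_empty]
  not_measurable' _ hB := if_neg hB
  m_iUnion' B hB hdisj := by simpa [hB, MeasurableSet.iUnion hB] using M.m_iUnion B hB hdisj x y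

theorem sesqMeasure_apply (M : POVM Ω H) (x y : H) {B : Set Ω} (hB : MeasurableSet B) :
    M.sesqMeasure x y B = ⟪x, M.toFun B y⟫ :=
  if_pos hB

theorem zero_le_restrict_re_sesqMeasure (M : POVM Ω H) (x : H) :
    0 ≤[univ] ComplexMeasure.re (M.sesqMeasure x x) := by
  rw [VectorMeasure.le_restrict_univ_iff_le]
  intro B hB
  have hpos := (M.isPositive B hB).re_inner_nonneg_right x
  rw [← M.sesqMeasure_apply x x hB] at hpos
  exact hpos

/-- The finite positive measure `B ↦ ⟪x, M(B) x⟫`. -/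
noncomputable def diagMeasure (M : POVM Ω H) (x : H) : Measure Ω :=
  SignedMeasure.toMeasureOfZeroLE (ComplexMeasure.re (M.sesqMeasure x x)) univ MeasurableSet.univ
    (M.zero_le_restrict_re_sesqMeasure x)

instance (M : POVM Ω H) (x : H) : IsFiniteMeasure (M.diagMeasure x) :=
  SignedMeasure.toMeasureOfZeroLE_finite _ _ _

theorem diagMeasure_real_apply (M : POVM Ω H) (x : H) {B : Set Ω} (hB : MeasurableSet B) :
    (M.diagMeasure x).real B = (⟪x, M.toFun B x⟫).re := by
  rw [diagMeasure, SignedMeasure.toMeasureOfZeroLE_real_apply _ _ _ hB, univ_inter,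
    ← M.sesqMeasure_apply x x hB]
  rfl

theorem ofReal_diagMeasure_real_apply (M : POVM Ω H) (x : H) {B : Set Ω} (hB : MeasurableSet B) :
    (((M.diagMeasure x).real B : ℝ) : ℂ) = ⟪x, M.toFun B x⟫ := by
  rw [M.diagMeasure_real_apply x hB]
  exact (Complex.eq_re_of_ofReal_le ((M.isPositive B hB).inner_nonneg_right x)).symm

/-- `M` has matrix elements `⟪e k, M(B) (e l)⟫ = ∫_B g k * conj (g l) ∂μ`, that is, in the vectors
`e` its density with respect to `μ` is at each point `z` the rank-one matrix built from the vector
`(g k z)_k`. For the phase observable, `g k z = z ^ k`. The bound on `g` makes these integrals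
converge for finite `μ`. -/
structure HasRankOneDensity {ι : Type*} (M : POVM Ω H) (μ : Measure Ω) (e : ι → H)
    (g : ι → Ω → ℂ) : Prop where
  measurable : ∀ k, Measurable (g k)
  norm_le_one : ∀ k z, ‖g k z‖ ≤ 1
  inner_eq : ∀ k l, ∀ B, MeasurableSet B →
    ⟪e k, M.toFun B (e l)⟫ = ∫ z in B, g k z * conj (g l z) ∂μ

namespace HasRankOneDensity

variable {ι : Type*} {e : ι → H} {g : ι → Ω → ℂ} {μ : Measure Ω}
  {Φ M : POVM Ω H}

theorem integrable_mul_conj (hΦ : Φ.HasRankOneDensity μ e g) (m : Measure Ω) [IsFiniteMeasure m]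
    (k l : ι) : Integrable (fun z => g k z * conj (g l z)) m := by
  have hmeas : Measurable fun z => g k z * conj (g l z) :=
    (hΦ.measurable k).mul (RCLike.continuous_conj.measurable.comp (hΦ.measurable l))
  refine Integrable.of_bound hmeas.aestronglyMeasurable 1 (.of_forall fun z => ?_)
  rw [norm_mul, RCLike.norm_conj]
  exact mul_le_one₀ (hΦ.norm_le_one k z) (norm_nonneg _) (hΦ.norm_le_one l z)

theorem integral_mul_conj (hΦ : Φ.HasRankOneDensity μ e g) (k l : ι) :
    ∫ z, g k z * conj (g l z) ∂μ = ⟪e k, e l⟫ := by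
  rw [← setIntegral_univ, ← hΦ.inner_eq k l univ MeasurableSet.univ, Φ.normalized]
  rfl

theorem toFun_eq {b : HilbertBasis ι ℂ H} (hM : M.HasRankOneDensity μ b g)
    (hΦ : Φ.HasRankOneDensity μ b g) {B : Set Ω} (hB : MeasurableSet B) :
    M.toFun B = Φ.toFun B := by
  have hdense : Dense (Submodule.span ℂ (range b) : Set H) :=
    Submodule.dense_iff_topologicalClosure_eq_top.2 b.dense_span
  refine ContinuousLinearMap.ext_on hdense ?_
  rintro _ ⟨l, rfl⟩
  refine b.repr.injective (lp.ext (funext fun k => ?_))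
  rw [b.repr_apply_apply, b.repr_apply_apply, hM.inner_eq k l B hB, hΦ.inner_eq k l B hB]

variable [IsFiniteMeasure μ]

theorem re_inner_self_le (hΦ : Φ.HasRankOneDensity μ e g) (k : ι) {A : Set Ω}
    (hA : MeasurableSet A) : (⟪e k, Φ.toFun A (e k)⟫).re ≤ μ.real A := by
  rw [hΦ.inner_eq k k A hA, ← one_mul (μ.real A)]
  refine (Complex.re_le_norm _).trans
    (norm_setIntegral_le_of_norm_le_const (measure_lt_top _ _) fun z _ => ?_)
  rw [norm_mul, RCLike.norm_conj]
  exact mul_le_one₀ (hΦ.norm_le_one k z) (norm_nonneg _) (hΦ.norm_le_one k z)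

theorem inner_sub_smul_self (hΦ : Φ.HasRankOneDensity μ e g) {o : ι} (ho : g o = 1) (k : ι)
    (a : ℂ) {A : Set Ω} (hA : MeasurableSet A) :
    ⟪e k - conj a • e o, Φ.toFun A (e k - conj a • e o)⟫
      = ∫ z in A, (g k z - a) * conj (g k z - a) ∂μ := by
  have hint (i j : ι) : Integrable (fun z => g i z * conj (g j z)) (μ.restrict A) :=
    hΦ.integrable_mul_conj _ i j
  have expand (z : Ω) : (g k z - a) * conj (g k z - a)
      = g k z * conj (g k z) - conj a * (g k z * conj (g o z))
        - a * (g o z * conj (g k z) - conj a * (g o z * conj (g o z))) := by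
    simp only [ho, Pi.one_apply, map_sub, map_one]
    ring
  simp_rw [expand]
  have hfirst : Integrable (fun z => g k z * conj (g k z) - conj a * (g k z * conj (g o z)))
      (μ.restrict A) := (hint k k).sub ((hint k o).const_mul _)
  have hsecond : Integrable (fun z => a * (g o z * conj (g k z)
      - conj a * (g o z * conj (g o z)))) (μ.restrict A) :=
    ((hint o k).sub ((hint o o).const_mul _)).const_mul _
  rw [integral_sub hfirst hsecond,
    integral_sub (hint k k) ((hint k o).const_mul _), integral_const_mul, integral_const_mul,
    integral_sub (hint o k) ((hint o o).const_mul _), integral_const_mul]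
  simp only [← hΦ.inner_eq _ _ A hA, map_sub, map_smul, inner_sub_left, inner_sub_right,
    inner_smul_left, inner_smul_right, Complex.conj_conj]
  ring

theorem re_inner_sub_smul_self_le (hΦ : Φ.HasRankOneDensity μ e g) {o : ι} (ho : g o = 1) {k : ι}
    {a : ℂ} {δ : ℝ} {A : Set Ω} (hA : MeasurableSet A) (hδ : ∀ z ∈ A, ‖g k z - a‖ ≤ δ) :
    (⟪e k - conj a • e o, Φ.toFun A (e k - conj a • e o)⟫).re ≤ δ ^ 2 * μ.real A := by
  rw [hΦ.inner_sub_smul_self ho k a hA]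
  refine (Complex.re_le_norm _).trans
    (norm_setIntegral_le_of_norm_le_const (measure_lt_top _ _) fun z hz => ?_)
  rw [norm_mul, RCLike.norm_conj, ← sq]
  exact pow_le_pow_left₀ (norm_nonneg _) (hδ z hz) 2

theorem norm_inner_sub_smul_le (hΦ : Φ.HasRankOneDensity μ e g) {o : ι} (ho : g o = 1)
    {c : ℝ} (hc : 0 < c) {k : ι} (l : ι) {a : ℂ} {δ : ℝ} (hδ₀ : 0 ≤ δ) {A : Set Ω}
    (hA : MeasurableSet A) (hM : M.toFun A ≤ (c : ℂ) • Φ.toFun A)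
    (hδ : ∀ z ∈ A, ‖g k z - a‖ ≤ δ) :
    ‖⟪e k - conj a • e o, M.toFun A (e l)⟫‖ ≤ c * δ * μ.real A := by
  have hMA := M.isPositive A hA
  set u := e k - conj a • e o
  have hu_le : (⟪u, M.toFun A u⟫).re ≤ c * (δ ^ 2 * μ.real A) :=
    (re_inner_le_of_le_smul hM u).trans (by gcongr; exact hΦ.re_inner_sub_smul_self_le ho hA hδ)
  have hl_le : (⟪e l, M.toFun A (e l)⟫).re ≤ c * μ.real A :=
    (re_inner_le_of_le_smul hM (e l)).trans (by gcongr; exact hΦ.re_inner_self_le l hA)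
  refine le_of_sq_le_sq ?_ (by positivity)
  calc ‖⟪u, M.toFun A (e l)⟫‖ ^ 2
      ≤ (⟪u, M.toFun A u⟫).re * (⟪e l, M.toFun A (e l)⟫).re :=
        norm_inner_sq_le_of_isPositive hMA u (e l)
    _ ≤ c * (δ ^ 2 * μ.real A) * (c * μ.real A) :=
        mul_le_mul hu_le hl_le (hMA.re_inner_nonneg_right _) (by positivity)
    _ = (c * δ * μ.real A) ^ 2 := by ring

theorem norm_inner_sub_mul_inner_le (hΦ : Φ.HasRankOneDensity μ e g) {o : ι} (ho : g o = 1)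
    {c : ℝ} (hc : 0 < c) {k l : ι} {a b : ℂ} {δ : ℝ} (hδ₀ : 0 ≤ δ) {A : Set Ω}
    (hA : MeasurableSet A) (hM : M.toFun A ≤ (c : ℂ) • Φ.toFun A) (ha : ‖a‖ ≤ 1)
    (hk : ∀ z ∈ A, ‖g k z - a‖ ≤ δ) (hl : ∀ z ∈ A, ‖g l z - b‖ ≤ δ) :
    ‖⟪e k, M.toFun A (e l)⟫ - a * conj b * ⟪e o, M.toFun A (e o)⟫‖ ≤ 2 * c * δ * μ.real A := by
  have hfirst := hΦ.norm_inner_sub_smul_le ho hc l hδ₀ hA hM hk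
  have hsecond : ‖⟪e o, M.toFun A (e l - conj b • e o)⟫‖ ≤ c * δ * μ.real A := by
    rw [← (M.isPositive A hA).inner_left_eq_inner_right, norm_inner_symm]
    exact hΦ.norm_inner_sub_smul_le ho hc o hδ₀ hA hM hl
  have split : ⟪e k, M.toFun A (e l)⟫ - a * conj b * ⟪e o, M.toFun A (e o)⟫
      = ⟪e k - conj a • e o, M.toFun A (e l)⟫
        + a * ⟪e o, M.toFun A (e l - conj b • e o)⟫ := by
    simp only [map_sub, map_smul, inner_sub_left, inner_sub_right, inner_smul_left,
      inner_smul_right, Complex.conj_conj]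
    ring
  calc ‖⟪e k, M.toFun A (e l)⟫ - a * conj b * ⟪e o, M.toFun A (e o)⟫‖
      ≤ ‖⟪e k - conj a • e o, M.toFun A (e l)⟫‖
        + ‖a‖ * ‖⟪e o, M.toFun A (e l - conj b • e o)⟫‖ := by
        rw [split, ← norm_mul]
        exact norm_add_le _ _
    _ ≤ c * δ * μ.real A + 1 * (c * δ * μ.real A) := by gcongr
    _ = 2 * c * δ * μ.real A := by ring

theorem norm_inner_sub_setIntegral_le (hΦ : Φ.HasRankOneDensity μ e g) {o : ι} (ho : g o = 1)
    {c : ℝ} (hc : 0 < c) {k l : ι} {δ : ℝ} {A : Set Ω} (hA : MeasurableSet A)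
    (hM : M.toFun A ≤ (c : ℂ) • Φ.toFun A) (hk : ∀ z ∈ A, ∀ w ∈ A, ‖g k z - g k w‖ ≤ δ)
    (hl : ∀ z ∈ A, ∀ w ∈ A, ‖g l z - g l w‖ ≤ δ) :
    ‖⟪e k, M.toFun A (e l)⟫ - ∫ z in A, g k z * conj (g l z) ∂(M.diagMeasure (e o))‖
      ≤ 4 * c * δ * μ.real A := by
  rcases A.eq_empty_or_nonempty with rfl | ⟨w, hw⟩
  · simp [inner_toFun_empty]
  set m := M.diagMeasure (e o)
  have hkw : ∀ z ∈ A, ‖g k z - g k w‖ ≤ δ := fun z hz => hk z hz w hw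
  have hlw : ∀ z ∈ A, ‖g l z - g l w‖ ≤ δ := fun z hz => hl z hz w hw
  have hδ₀ : 0 ≤ δ := (norm_nonneg _).trans (hkw w hw)
  have hmμ : m.real A ≤ c * μ.real A := by
    rw [M.diagMeasure_real_apply (e o) hA]
    exact (re_inner_le_of_le_smul hM (e o)).trans (by gcongr; exact hΦ.re_inner_self_le o hA)
  have hinner := hΦ.norm_inner_sub_mul_inner_le ho hc hδ₀ hA hM (hΦ.norm_le_one k w) hkw hlw
  rw [← M.ofReal_diagMeasure_real_apply (e o) hA] at hinner
  have hintegral := norm_setIntegral_mul_conj_sub_le (hΦ.integrable_mul_conj m k l)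
    (hΦ.norm_le_one k w) (hΦ.norm_le_one l) hkw hlw
  rw [norm_sub_rev] at hintegral
  calc _ ≤ _ := norm_sub_le_norm_sub_add_norm_sub _ (g k w * conj (g l w) * m.real A) _
    _ ≤ 2 * c * δ * μ.real A + 2 * δ * m.real A := add_le_add hinner hintegral
    _ ≤ 2 * c * δ * μ.real A + 2 * δ * (c * μ.real A) := by gcongr
    _ = 4 * c * δ * μ.real A := by ring

theorem of_le_smul (hΦ : Φ.HasRankOneDensity μ e g) {o : ι} (ho : g o = 1) {c : ℝ} (hc : 0 < c)
    (hM : ∀ B, MeasurableSet B → M.toFun B ≤ (c : ℂ) • Φ.toFun B) :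
    M.HasRankOneDensity (M.diagMeasure (e o)) e g where
  measurable := hΦ.measurable
  norm_le_one := hΦ.norm_le_one
  inner_eq k l B hB := by
    set ρ := (M.diagMeasure (e o)).withDensityᵥ fun z => g k z * conj (g l z)
    have hρ {A : Set Ω} (hA : MeasurableSet A) :
        ρ A = ∫ z in A, g k z * conj (g l z) ∂(M.diagMeasure (e o)) :=
      withDensityᵥ_apply (hΦ.integrable_mul_conj _ k l) hA
    have hzero : M.sesqMeasure (e k) (e l) - ρ = 0 := by
      refine vectorMeasure_eq_zero_of_locally_small (μ := μ)
        ((hΦ.measurable k).prodMk (hΦ.measurable l)) fun ε hε =>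
          ⟨ε / (4 * c), by positivity, fun A hA hdist => ?_⟩
      simp only [Prod.dist_eq, max_le_iff] at hdist
      simp only [dist_eq_norm] at hdist
      have hle := hΦ.norm_inner_sub_setIntegral_le ho hc hA (hM A hA)
        (fun z hz w hw => (hdist z hz w hw).1) fun z hz w hw => (hdist z hz w hw).2
      rw [mul_div_cancel₀ ε (by positivity)] at hle
      rwa [sub_apply, M.sesqMeasure_apply _ _ hA, hρ hA]
    rw [← M.sesqMeasure_apply _ _ hB, sub_eq_zero.1 hzero, hρ hB]

theorem toFun_eq_of_le_smul {b : HilbertBasis ι ℂ H} (hΦ : Φ.HasRankOneDensity μ b g) {o : ι}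
    (ho : g o = 1)
    (hdet : ∀ m : Measure Ω, IsFiniteMeasure m →
      (∀ k l, ∫ z, g k z * conj (g l z) ∂m = ∫ z, g k z * conj (g l z) ∂μ) → m = μ)
    {c : ℝ} (hc : 0 < c) (hM : ∀ B, MeasurableSet B → M.toFun B ≤ (c : ℂ) • Φ.toFun B)
    {B : Set Ω} (hB : MeasurableSet B) : M.toFun B = Φ.toFun B := by
  have hMm := hΦ.of_le_smul ho hc hM
  have hmμ : M.diagMeasure (b o) = μ := hdet _ inferInstance fun k l => by
    rw [hMm.integral_mul_conj, hΦ.integral_mul_conj]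
  exact (hmμ ▸ hMm).toFun_eq hΦ hB

end HasRankOneDensity

end POVM

theorem stmt11_general {Ω ι H : Type*} [MeasurableSpace Ω] [NormedAddCommGroup H]
    [InnerProductSpace ℂ H] [CompleteSpace H] {b : HilbertBasis ι ℂ H} {g : ι → Ω → ℂ} {o : ι}
    (ho : g o = 1) {μ : Measure Ω} [IsFiniteMeasure μ] {Φ : POVM Ω H}
    (hΦ : Φ.HasRankOneDensity μ b g)
    (hdet : ∀ m : Measure Ω, IsFiniteMeasure m →
      (∀ k l, ∫ z, g k z * conj (g l z) ∂m = ∫ z, g k z * conj (g l z) ∂μ) → m = μ)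
    (M₁ M₂ : POVM Ω H) (t : ℝ) (ht₀ : 0 < t) (ht₁ : t < 1)
    (hmix : ∀ B, MeasurableSet B →
      Φ.toFun B = (t : ℂ) • M₁.toFun B + ((1 - t : ℝ) : ℂ) • M₂.toFun B)
    (B : Set Ω) (hB : MeasurableSet B) : M₁.toFun B = Φ.toFun B ∧ M₂.toFun B = Φ.toFun B := by
  have ht₁' : 0 < 1 - t := sub_pos.2 ht₁
  have hle₁ : ∀ A, MeasurableSet A → M₁.toFun A ≤ ((t⁻¹ : ℝ) : ℂ) • Φ.toFun A := fun A hA =>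
    le_inv_smul_of_eq_smul_add_smul ht₀ ht₁'.le (M₂.isPositive A hA) (hmix A hA)
  have hle₂ : ∀ A, MeasurableSet A → M₂.toFun A ≤ (((1 - t)⁻¹ : ℝ) : ℂ) • Φ.toFun A :=
    fun A hA => le_inv_smul_of_eq_smul_add_smul ht₁' ht₀.le (M₁.isPositive A hA)
      ((hmix A hA).trans (add_comm _ _))
  exact ⟨hΦ.toFun_eq_of_le_smul ho hdet (inv_pos.2 ht₀) hle₁ hB,
    hΦ.toFun_eq_of_le_smul ho hdet (inv_pos.2 ht₁') hle₂ hB⟩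

theorem hasRankOneDensity_pow {H : Type*} [NormedAddCommGroup H] [InnerProductSpace ℂ H]
    [CompleteSpace H] {e : ℕ → H} {μ : Measure Circle} {Φ : POVM Circle H}
    (hΦ : ∀ k l : ℕ, ∀ B : Set Circle, MeasurableSet B →
      ⟪e k, Φ.toFun B (e l)⟫ = ∫ z in B, (z : ℂ) ^ ((k : ℤ) - (l : ℤ)) ∂μ) :
    Φ.HasRankOneDensity μ e fun k (z : Circle) => (z : ℂ) ^ k where
  measurable k := Continuous.measurable (by fun_prop)
  norm_le_one k z := by rw [norm_pow, Circle.norm_coe, one_pow]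
  inner_eq k l B hB := by simp_rw [hΦ k l B hB, circle_zpow_natCast_sub_natCast]

theorem stmt11
    (H : Type*) [NormedAddCommGroup H] [InnerProductSpace ℂ H] [CompleteSpace H]
    -- an orthonormal basis `{e_k : k ∈ ℕ}` of `H`
    (b : HilbertBasis ℕ ℂ H)
    -- the normalized Haar measure on `𝕋`
    (μ : Measure Circle) (hHaar : μ.IsHaarMeasure) (hProb : IsProbabilityMeasure μ)
    -- the canonical phase observable
    (Φ : POVM Circle H)
    (hΦ : ∀ k l : ℕ, ∀ B : Set Circle, MeasurableSet B →
      ⟪b k, Φ.toFun B (b l)⟫ = ∫ z in B, (z : ℂ) ^ ((k : ℤ) - (l : ℤ)) ∂μ) :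
    -- `Φ` is an extreme point of the convex set of ALL POVMs on `(𝕋, ℬ(𝕋))` acting on `H`
    ∀ M₁ M₂ : POVM Circle H, ∀ t : ℝ, 0 < t → t < 1 →
      (∀ B : Set Circle, MeasurableSet B →
        Φ.toFun B = (t : ℂ) • M₁.toFun B + ((1 - t : ℝ) : ℂ) • M₂.toFun B) →
      ∀ B : Set Circle, MeasurableSet B →
        M₁.toFun B = Φ.toFun B ∧ M₂.toFun B = Φ.toFun B := by
  exact stmt11_general (funext fun z : Circle => pow_zero (z : ℂ)) (hasRankOneDensity_pow hΦ)
    fun _ _ => ext_of_forall_integral_pow_mul_conj_pow_eq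
end

section
/- Let H = ℂ² with orthonormal basis {|0⟩, |1⟩}, let μ be the normalized Haar measure on 𝕋, let U: 𝕋 → unitaries on ℂ² be U(z) = |0⟩⟨0| + z|1⟩⟨1|, and define M(B) = μ(B)(|0⟩⟨0| + |1⟩⟨1|) + (∫_B conj(z) dμ(z)) |0⟩⟨1| + (∫_B z dμ(z)) |1⟩⟨0| for Borel B ⊆ 𝕋. Then: (a) M is a POVM on (𝕋, ℬ(𝕋)) acting on ℂ²; (b) M is covariant, i.e. U(w) M(B) U(w)* = M(w·B) for all w ∈ 𝕋 and Borel B; (c) the second moment operator vanishes: ∫_𝕋 z² dM(z) = 0, i.e. μ-integrating z² against every matrix element of M gives the zero operator; (d) M is an extreme point of the convex set of U-covariant POVMs on (𝕋, ℬ(𝕋)) acting on ℂ², but M is NOT an extreme point of the convex set of all POVMs on (𝕋, ℬ(𝕋)) acting on ℂ². -/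
open MeasureTheory Set ContinuousLinearMap

local notation "⟪" x ", " y "⟫" => @inner ℂ _ _ x y

noncomputable section

/-- The qubit Hilbert space `ℂ²`. -/
abbrev Qubit : Type := EuclideanSpace ℂ (Fin 2)

/-- The basis vector `|0⟩`. -/
def qzero : Qubit := EuclideanSpace.single 0 1

/-- The basis vector `|1⟩`. -/
def qone : Qubit := EuclideanSpace.single 1 1

/-- The rank-one operator `|a⟩⟨b| : φ ↦ ⟨b, φ⟩ a`. -/
def ketbra (a b : Qubit) : Qubit →L[ℂ] Qubit := (innerSL ℂ b).smulRight a

/-- The operator `M(B) = μ(B)(|0⟩⟨0| + |1⟩⟨1|) + (∫_B conj z dμ)|0⟩⟨1| + (∫_B z dμ)|1⟩⟨0|`. -/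
def Mop (μ : Measure Circle) (B : Set Circle) : Qubit →L[ℂ] Qubit :=
  (((μ B).toReal : ℂ)) • (1 : Qubit →L[ℂ] Qubit)
    + (∫ z in B, (starRingEnd ℂ) (z : ℂ) ∂μ) • ketbra qzero qone
    + (∫ z in B, (z : ℂ) ∂μ) • ketbra qone qzero

/-- The unitary `U(z) = |0⟩⟨0| + z|1⟩⟨1|`. -/
def Uop (w : Circle) : Qubit →L[ℂ] Qubit := ketbra qzero qzero + ((w : ℂ)) • ketbra qone qone

/-- The density `z ↦ |0⟩⟨0| + |1⟩⟨1| + conj z |0⟩⟨1| + z |1⟩⟨0|` of `M` w.r.t. `μ`. -/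
def Dz (z : Circle) : Qubit →L[ℂ] Qubit :=
  (1 : Qubit →L[ℂ] Qubit) + ((starRingEnd ℂ) (z : ℂ)) • ketbra qzero qone
    + ((z : ℂ)) • ketbra qone qzero

/-- `N` is covariant with respect to the representation `U(z) = |0⟩⟨0| + z|1⟩⟨1|`. -/
def QubitCovariant (N : POVM Circle Qubit) : Prop :=
  ∀ w : Circle, ∀ B : Set Circle, MeasurableSet B →
    Uop w ∘L N.toFun B ∘L adjoint (Uop w) = N.toFun ((fun z => w * z) '' B)

/-!
Write `Dz z = |v z⟩⟨v z|` with `v z = |0⟩ + z|1⟩`; this is positive and `U(w)` maps `v z` to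
`v (w z)`, so translation invariance of `μ` gives covariance. The Fourier modes of `Dz` are only
`-1`, `0` and `1`, so `∫ z ^ n Dz z dμ = 0` whenever `|n| ≥ 2`.

A covariant POVM has both diagonal entries equal to `μ`, since the basis vectors are eigenvectors
of every `U(w)` and Haar measure is unique. It is thus determined by its off-diagonal entry, a
complex measure whose variation is at most `μ` by the Cauchy–Schwarz inequality. For `M` this
entry has a unimodular density, and such measures are extreme among those with variation at most
`μ` because the closed unit disc is strictly convex. Hence `M` is extreme among covariant POVMs.
Without covariance, `(1 ± Re (z ^ 2)) Dz z` are the densities of two distinct POVMs with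
midpoint `M`.
-/

section Integral

variable {Ω : Type*} [MeasurableSpace Ω] {μ : Measure Ω}
  {H : Type*} [NormedAddCommGroup H] [InnerProductSpace ℂ H] [CompleteSpace H]

lemma norm_inner_le_sqrt_mul_sqrt_of_isPositive {T : H →L[ℂ] H} (hT : T.IsPositive) (x y : H) :
    ‖⟪x, T y⟫‖ ≤ √(⟪x, T x⟫).re * √(⟪y, T y⟫).re := by
  obtain ⟨S, rfl⟩ := CStarAlgebra.nonneg_iff_eq_star_mul_self.1 ((nonneg_iff_isPositive T).2 hT)
  have hS (a b : H) : ⟪a, (star S * S) b⟫ = ⟪S a, S b⟫ := adjoint_inner_right S a (S b)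
  have hsqrt (a : H) : √(⟪S a, S a⟫).re = ‖S a‖ := (norm_eq_sqrt_re_inner (𝕜 := ℂ) (S a)).symm
  simpa only [hS, hsqrt] using norm_inner_le_norm (𝕜 := ℂ) (S x) (S y)

lemma inner_integral_apply {D : Ω → H →L[ℂ] H} (hD : Integrable D μ) (φ ψ : H) :
    ⟪φ, (∫ z, D z ∂μ) ψ⟫ = ∫ z, ⟪φ, D z ψ⟫ ∂μ := by
  rw [ContinuousLinearMap.integral_apply hD, integral_inner (hD.apply_continuousLinearMap ψ)]

lemma isPositive_integral {D : Ω → H →L[ℂ] H} (hD : ∀ᵐ z ∂μ, (D z).IsPositive) :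
    (∫ z, D z ∂μ).IsPositive := by
  simp only [← nonneg_iff_isPositive] at hD ⊢
  exact integral_nonneg_of_ae hD

end Integral

section ComplexMeasure

variable {Ω : Type*} [MeasurableSpace Ω] {μ : Measure Ω} {c : ComplexMeasure Ω}

lemma withDensityᵥ_rnDeriv_eq_of_absolutelyContinuous [SigmaFinite μ]
    (h : c ≪ᵥ μ.toENNRealVectorMeasure) : μ.withDensityᵥ (c.rnDeriv μ) = c := by
  obtain ⟨hre, him⟩ := (c.absolutelyContinuous_ennreal_iff _).1 h
  have hint := c.integrable_rnDeriv μ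
  ext B hB
  rw [withDensityᵥ_apply hint hB]
  apply Complex.ext
  · calc (∫ z in B, c.rnDeriv μ z ∂μ).re = ∫ z in B, (ComplexMeasure.re c).rnDeriv μ z ∂μ :=
          (integral_re hint.integrableOn).symm
      _ = ComplexMeasure.re c B := by
          rw [← withDensityᵥ_apply (SignedMeasure.integrable_rnDeriv _ _) hB,
            SignedMeasure.withDensityᵥ_rnDeriv_eq _ _ hre]
  · calc (∫ z in B, c.rnDeriv μ z ∂μ).im = ∫ z in B, (ComplexMeasure.im c).rnDeriv μ z ∂μ :=
          (integral_im hint.integrableOn).symm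
      _ = ComplexMeasure.im c B := by
          rw [← withDensityᵥ_apply (SignedMeasure.integrable_rnDeriv _ _) hB,
            SignedMeasure.withDensityᵥ_rnDeriv_eq _ _ him]

lemma absolutelyContinuous_of_variation_le (hc : c.variation ≤ μ) :
    c ≪ᵥ μ.toENNRealVectorMeasure := by
  refine VectorMeasure.AbsolutelyContinuous.mk fun B hB hμB => ?_
  rw [Measure.toENNRealVectorMeasure_apply_measurable hB] at hμB
  simpa [le_antisymm ((hc B).trans_eq hμB) bot_le] using c.enorm_measure_le_variation B

lemma ae_norm_le_one_of_variation_withDensityᵥ_le [SigmaFinite μ] {p : Ω → ℂ}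
    (hp : Integrable p μ) (hc : (μ.withDensityᵥ p).variation ≤ μ) : ∀ᵐ z ∂μ, ‖p z‖ ≤ 1 := by
  rw [Measure.variation_withDensityᵥ hp] at hc
  have h : (fun z => ‖p z‖ₑ) ≤ᵐ[μ] 1 := by
    refine ae_le_of_forall_setLIntegral_le_of_sigmaFinite₀ hp.1.enorm fun B hB _ => ?_
    simpa [withDensity_apply _ hB] using hc B
  filter_upwards [h] with z hz
  exact (enorm_le_iff_norm_le (y := (1 : ℂ))).1 (by simpa using hz) |>.trans_eq norm_one

lemma exists_density_of_variation_le [SigmaFinite μ] (hc : c.variation ≤ μ) :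
    ∃ p : Ω → ℂ, Integrable p μ ∧ (∀ᵐ z ∂μ, ‖p z‖ ≤ 1) ∧ μ.withDensityᵥ p = c := by
  have hp := c.integrable_rnDeriv μ
  have hpc := withDensityᵥ_rnDeriv_eq_of_absolutelyContinuous
    (absolutelyContinuous_of_variation_le hc)
  exact ⟨c.rnDeriv μ, hp, ae_norm_le_one_of_variation_withDensityᵥ_le hp (hpc.symm ▸ hc), hpc⟩

lemma withDensityᵥ_mem_extremePoints [SigmaFinite μ] {u : Ω → ℂ} (hu : Integrable u μ)
    (hnorm : ∀ᵐ z ∂μ, ‖u z‖ = 1) :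
    μ.withDensityᵥ u ∈ extremePoints ℝ {c : ComplexMeasure Ω | c.variation ≤ μ} := by
  refine ⟨?_, ?_⟩
  · have h : (fun z => ‖u z‖ₑ) =ᵐ[μ] 1 := hnorm.mono fun z hz => by simp [← ofReal_norm, hz]
    simp [Measure.variation_withDensityᵥ hu, withDensity_congr_ae h]
  rintro c₁ hc₁ c₂ hc₂ ⟨a, b, ha, hb, hab, hcomb⟩
  obtain ⟨p₁, hp₁, hle₁, rfl⟩ := exists_density_of_variation_le hc₁
  obtain ⟨p₂, hp₂, hle₂, rfl⟩ := exists_density_of_variation_le hc₂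
  have hae : a • p₁ + b • p₂ =ᵐ[μ] u := by
    refine ((hp₁.smul a).add (hp₂.smul b)).ae_eq_of_withDensityᵥ_eq hu ?_
    rw [← hcomb, withDensityᵥ_add (hp₁.smul a) (hp₂.smul b), withDensityᵥ_smul, withDensityᵥ_smul]
  refine WithDensityᵥEq.congr_ae ?_
  filter_upwards [hle₁, hle₂, hae, hnorm] with z h₁ h₂ hz hu₁
  have hext : u z ∈ extremePoints ℝ (Metric.closedBall (0 : ℂ) 1) :=
    StrictConvexSpace.sphere_subset_extremePoints_closedBall 0 one_ne_zero (by simpa using hu₁)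
  exact hext.2 (by simpa using h₁) (by simpa using h₂) ⟨a, b, ha, hb, hab, hz⟩

end ComplexMeasure

namespace POVM

variable {Ω H : Type*} [MeasurableSpace Ω] {μ : Measure Ω}
  [NormedAddCommGroup H] [InnerProductSpace ℂ H] [CompleteSpace H]

/-- The POVM `B ↦ ∫_B D dμ` with operator density `D` with respect to `μ`. -/
def ofDensity (μ : Measure Ω) (D : Ω → H →L[ℂ] H) (hD : Integrable D μ)
    (hpos : ∀ᵐ z ∂μ, (D z).IsPositive) (hone : ∫ z, D z ∂μ = 1) : POVM Ω H where
  toFun B := ∫ z in B, D z ∂μ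
  isPositive _ _ := isPositive_integral (ae_restrict_of_ae hpos)
  normalized := by rw [setIntegral_univ, hone]
  m_iUnion B hB hdisj φ ψ := by
    simp only [inner_integral_apply hD.integrableOn]
    exact hasSum_integral_iUnion hB hdisj
      ((hD.apply_continuousLinearMap ψ).const_inner φ).integrableOn

lemma toFun_empty (N : POVM Ω H) : N.toFun ∅ = 0 := by
  refine ContinuousLinearMap.ext fun ψ => ext_inner_left ℂ fun φ => ?_
  have hsum := N.m_iUnion (fun _ => ∅) (fun _ => .empty) (fun _ _ _ => disjoint_bot_left) φ ψ
  simpa using tendsto_nhds_unique tendsto_const_nhds hsum.summable.tendsto_atTop_zero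

open scoped Classical in
/-- The matrix element `B ↦ ⟪φ, N(B) ψ⟫` of a POVM as a complex measure. -/
def complexMeasure (N : POVM Ω H) (φ ψ : H) : ComplexMeasure Ω where
  measureOf' B := if MeasurableSet B then ⟪φ, N.toFun B ψ⟫ else 0
  empty' := by simp [N.toFun_empty]
  not_measurable' _ hB := if_neg hB
  m_iUnion' B hB hdisj := by
    simpa [hB, MeasurableSet.iUnion hB] using N.m_iUnion B hB hdisj φ ψ

lemma complexMeasure_apply (N : POVM Ω H) (φ ψ : H) {B : Set Ω} (hB : MeasurableSet B) :
    N.complexMeasure φ ψ B = ⟪φ, N.toFun B ψ⟫ := if_pos hB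

lemma zero_le_re_complexMeasure (N : POVM Ω H) (φ : H) :
    0 ≤[univ] ComplexMeasure.re (N.complexMeasure φ φ) := by
  refine (VectorMeasure.le_restrict_univ_iff_le _ _).2 fun B hB => ?_
  have h := (N.isPositive B hB).re_inner_nonneg_right φ
  rwa [← N.complexMeasure_apply φ φ hB] at h

/-- The positive measure `B ↦ ⟪φ, N(B) φ⟫`: the outcome distribution of `N` in the state `φ`. -/
def scalarMeasure (N : POVM Ω H) (φ : H) : Measure Ω :=
  (ComplexMeasure.re (N.complexMeasure φ φ)).toMeasureOfZeroLE univ .univ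
    (N.zero_le_re_complexMeasure φ)

instance (N : POVM Ω H) (φ : H) : IsFiniteMeasure (N.scalarMeasure φ) :=
  SignedMeasure.toMeasureOfZeroLE_finite _ _ _

lemma scalarMeasure_real_apply (N : POVM Ω H) (φ : H) {B : Set Ω} (hB : MeasurableSet B) :
    ((N.scalarMeasure φ).real B : ℂ) = ⟪φ, N.toFun B φ⟫ := by
  have h : (N.scalarMeasure φ).real B = (⟪φ, N.toFun B φ⟫).re := by
    rw [scalarMeasure, SignedMeasure.toMeasureOfZeroLE_real_apply _ _ _ hB, univ_inter,
      ← N.complexMeasure_apply φ φ hB]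
    rfl
  rw [h]
  exact Complex.ext rfl (Complex.nonneg_iff.1 ((N.isPositive B hB).inner_nonneg_right φ)).2

lemma variation_complexMeasure_le (N : POVM Ω H) {φ ψ : H} (hφ : N.scalarMeasure φ ≤ μ)
    (hψ : N.scalarMeasure ψ ≤ μ) : (N.complexMeasure φ ψ).variation ≤ μ := by
  refine VectorMeasure.variation_le_of_forall_enorm_le fun B hB => ?_
  set a := (N.scalarMeasure φ).real B with ha
  set b := (N.scalarMeasure ψ).real B with hb
  have hnorm : ‖⟪φ, N.toFun B ψ⟫‖ ≤ max a b := calc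
    ‖⟪φ, N.toFun B ψ⟫‖ ≤ √a * √b := by
      simpa only [← scalarMeasure_real_apply N _ hB, Complex.ofReal_re] using
        norm_inner_le_sqrt_mul_sqrt_of_isPositive (N.isPositive B hB) φ ψ
    _ ≤ √(max a b) * √(max a b) := by gcongr <;> simp
    _ = max a b := Real.mul_self_sqrt (le_max_of_le_left measureReal_nonneg)
  calc ‖N.complexMeasure φ ψ B‖ₑ = ENNReal.ofReal ‖⟪φ, N.toFun B ψ⟫‖ := by
        rw [N.complexMeasure_apply φ ψ hB, ofReal_norm]
    _ ≤ ENNReal.ofReal (max a b) := ENNReal.ofReal_le_ofReal hnorm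
    _ = max (N.scalarMeasure φ B) (N.scalarMeasure ψ B) := by
        rw [ENNReal.ofReal_max, ha, hb, ofReal_measureReal, ofReal_measureReal]
    _ ≤ μ B := max_le (hφ B) (hψ B)

end POVM

section CompactGroup

variable {G : Type*} [Group G] [TopologicalSpace G] [IsTopologicalGroup G] [CompactSpace G]
  [MeasurableSpace G] [BorelSpace G]

lemma eq_measure_univ_smul_of_isMulLeftInvariant (ν μ : Measure G) [ν.IsMulLeftInvariant]
    [IsFiniteMeasure ν] [μ.IsHaarMeasure] [IsProbabilityMeasure μ] : ν = ν univ • μ := by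
  have h := Measure.isMulInvariant_eq_smul_of_compactSpace ν μ
  have huniv : ν univ = Measure.haarScalarFactor ν μ := calc
    ν univ = (Measure.haarScalarFactor ν μ • μ) univ := DFunLike.congr_fun h univ
    _ = Measure.haarScalarFactor ν μ := by
      rw [Measure.smul_apply, measure_univ, ENNReal.smul_def, smul_eq_mul, mul_one]
  rw [huniv]
  exact h

lemma POVM.scalarMeasure_eq_of_invariant {H : Type*} [NormedAddCommGroup H]
    [InnerProductSpace ℂ H] [CompleteSpace H] (μ : Measure G) [μ.IsHaarMeasure]
    [IsProbabilityMeasure μ] (N : POVM G H) {φ : H} (hφ : ‖φ‖ = 1)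
    (hinv : ∀ (g : G) (B : Set G), MeasurableSet B →
      ⟪φ, N.toFun ((g * ·) '' B) φ⟫ = ⟪φ, N.toFun B φ⟫) :
    N.scalarMeasure φ = μ := by
  have hreal {B C : Set G} (hB : MeasurableSet B) (hC : MeasurableSet C)
      (h : ⟪φ, N.toFun B φ⟫ = ⟪φ, N.toFun C φ⟫) : N.scalarMeasure φ B = N.scalarMeasure φ C := by
    rw [← N.scalarMeasure_real_apply φ hB, ← N.scalarMeasure_real_apply φ hC,
      Complex.ofReal_inj] at h
    exact (measureReal_eq_measureReal_iff).1 h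
  have : (N.scalarMeasure φ).IsMulLeftInvariant := by
    refine (forall_measure_preimage_mul_iff _).1 fun g B hB => ?_
    have himage : (g * ·) ⁻¹' B = (g⁻¹ * ·) '' B := by simp
    refine hreal (measurable_const_mul g hB) hB ?_
    rw [himage, hinv g⁻¹ B hB]
  have huniv : N.scalarMeasure φ univ = 1 := by
    have h := N.scalarMeasure_real_apply φ .univ
    rw [N.normalized, one_apply_eq_self, inner_self_eq_norm_sq_to_K, hφ, RCLike.ofReal_one,
      one_pow] at h
    exact (ENNReal.toReal_eq_one_iff _).1 (Complex.ofReal_eq_one.1 h)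
  rw [eq_measure_univ_smul_of_isMulLeftInvariant (N.scalarMeasure φ) μ, huniv, one_smul]

end CompactGroup

namespace POVM

variable {Ω H : Type*} [MeasurableSpace Ω] {μ : Measure Ω}
  [NormedAddCommGroup H] [InnerProductSpace ℂ H] [CompleteSpace H]

/-- `M` is an extreme point of the convex set `𝔐` of POVMs. Two POVMs count as equal when they
agree on measurable sets, the values of `toFun` elsewhere being meaningless. -/
def IsExtreme (𝔐 : Set (POVM Ω H)) (M : POVM Ω H) : Prop :=
  M ∈ 𝔐 ∧ ∀ M₁ M₂ : POVM Ω H, M₁ ∈ 𝔐 → M₂ ∈ 𝔐 → ∀ t : ℝ, 0 < t → t < 1 →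
    (∀ B : Set Ω, MeasurableSet B →
      M.toFun B = (t : ℂ) • M₁.toFun B + ((1 - t : ℝ) : ℂ) • M₂.toFun B) →
    ∀ B : Set Ω, MeasurableSet B → M₁.toFun B = M.toFun B ∧ M₂.toFun B = M.toFun B

lemma exists_toFun_eq_add_setIntegral_smul {M : POVM Ω H} {D : Ω → H →L[ℂ] H} {g : Ω → ℝ}
    (hM : ∀ B, MeasurableSet B → M.toFun B = ∫ z in B, D z ∂μ) (hD : Integrable D μ)
    (hpos : ∀ᵐ z ∂μ, (D z).IsPositive) (hg : ∀ᵐ z ∂μ, -1 ≤ g z)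
    (hgD : Integrable (fun z => g z • D z) μ) (hzero : ∫ z, g z • D z ∂μ = 0) :
    ∃ P : POVM Ω H, ∀ B, MeasurableSet B → P.toFun B = M.toFun B + ∫ z in B, g z • D z ∂μ := by
  have hone : ∫ z, D z ∂μ = 1 := by rw [← setIntegral_univ, ← hM _ .univ, M.normalized]
  have hpos' : ∀ᵐ z ∂μ, (D z + g z • D z).IsPositive := by
    filter_upwards [hpos, hg] with z hz hgz
    have h : 0 ≤ 1 + g z := by linarith
    have hsmul : D z + g z • D z = ((1 + g z : ℝ) : ℂ) • D z := by
      rw [Complex.coe_smul, add_smul, one_smul]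
    exact hsmul ▸ hz.smul_of_nonneg (RCLike.ofReal_nonneg.2 h)
  refine ⟨ofDensity μ _ (hD.add hgD) hpos' ?_, fun B hB => ?_⟩
  · exact (integral_add hD hgD).trans (by rw [hone, hzero, add_zero])
  · rw [hM B hB]
    exact integral_add hD.integrableOn hgD.integrableOn

lemma not_isExtreme_univ_of_integral_smul_eq_zero {M : POVM Ω H} {D : Ω → H →L[ℂ] H} {g : Ω → ℝ}
    (hM : ∀ B, MeasurableSet B → M.toFun B = ∫ z in B, D z ∂μ) (hD : Integrable D μ)
    (hpos : ∀ᵐ z ∂μ, (D z).IsPositive) (hg : ∀ᵐ z ∂μ, |g z| ≤ 1)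
    (hgD : Integrable (fun z => g z • D z) μ) (hzero : ∫ z, g z • D z ∂μ = 0)
    (hne : ¬ (fun z => g z • D z) =ᵐ[μ] 0) : ¬ IsExtreme univ M := by
  rintro ⟨-, hext⟩
  obtain ⟨P, hP⟩ := exists_toFun_eq_add_setIntegral_smul hM hD hpos
    (hg.mono fun z hz => (abs_le.1 hz).1) hgD hzero
  obtain ⟨Q, hQ⟩ := exists_toFun_eq_add_setIntegral_smul (g := -g) hM hD hpos
    (hg.mono fun z hz => neg_le_neg (abs_le.1 hz).2)
    (hgD.neg.congr (.of_forall fun z => (neg_smul (g z) (D z)).symm))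
    (by simp only [Pi.neg_apply, neg_smul, integral_neg, hzero, neg_zero])
  have hmid (B : Set Ω) (hB : MeasurableSet B) :
      M.toFun B = ((1 / 2 : ℝ) : ℂ) • P.toFun B + ((1 - 1 / 2 : ℝ) : ℂ) • Q.toFun B := by
    simp only [hP B hB, hQ B hB, Pi.neg_apply, neg_smul, integral_neg]
    push_cast
    module
  have hPM := hext P Q trivial trivial (1 / 2) (by norm_num) (by norm_num) hmid
  refine hne (hgD.ae_eq_zero_of_forall_setIntegral_eq_zero fun B hB _ => ?_)
  simpa only [hP B hB, add_eq_left] using (hPM B hB).1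

end POVM

section Qubit

@[simp] lemma norm_qzero : ‖qzero‖ = 1 := by simp [qzero]

@[simp] lemma norm_qone : ‖qone‖ = 1 := by simp [qone]

@[simp] lemma inner_qzero_qone : ⟪qzero, qone⟫ = 0 := by
  simp [qzero, qone, EuclideanSpace.inner_single_left]

@[simp] lemma inner_qone_qzero : ⟪qone, qzero⟫ = 0 := by
  simp [qzero, qone, EuclideanSpace.inner_single_left]

lemma ketbra_eq_rankOne (a b : Qubit) : ketbra a b = InnerProductSpace.rankOne ℂ a b := rfl

lemma ketbra_apply (a b φ : Qubit) : ketbra a b φ = ⟪b, φ⟫ • a := rfl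

lemma adjoint_ketbra (a b : Qubit) : adjoint (ketbra a b) = ketbra b a :=
  InnerProductSpace.adjoint_rankOne a b

lemma ketbra_qzero_add_ketbra_qone : ketbra qzero qzero + ketbra qone qone = 1 := by
  have h := (EuclideanSpace.basisFun (Fin 2) ℂ).sum_rankOne_eq_id
  rwa [Fin.sum_univ_two, EuclideanSpace.basisFun_apply, EuclideanSpace.basisFun_apply] at h

lemma inner_smul_qzero_add_inner_smul_qone (φ : Qubit) :
    ⟪qzero, φ⟫ • qzero + ⟪qone, φ⟫ • qone = φ :=
  DFunLike.congr_fun ketbra_qzero_add_ketbra_qone φ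

lemma eq_of_isPositive_of_inner_eq {S T : Qubit →L[ℂ] Qubit} (hS : S.IsPositive)
    (hT : T.IsPositive) (h00 : ⟪qzero, S qzero⟫ = ⟪qzero, T qzero⟫)
    (h11 : ⟪qone, S qone⟫ = ⟪qone, T qone⟫) (h01 : ⟪qzero, S qone⟫ = ⟪qzero, T qone⟫) :
    S = T := by
  have h10 : ⟪qone, S qzero⟫ = ⟪qone, T qzero⟫ := by
    rw [← hS.inner_left_eq_inner_right, ← hT.inner_left_eq_inner_right, ← inner_conj_symm, h01,
      inner_conj_symm]
  refine ContinuousLinearMap.ext fun φ => ?_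
  rw [← inner_smul_qzero_add_inner_smul_qone φ, map_add, map_add, map_smul, map_smul, map_smul,
    map_smul, ← inner_smul_qzero_add_inner_smul_qone (S qzero),
    ← inner_smul_qzero_add_inner_smul_qone (S qone), h00, h01, h10, h11,
    inner_smul_qzero_add_inner_smul_qone, inner_smul_qzero_add_inner_smul_qone]

lemma adjoint_Uop (w : Circle) : adjoint (Uop w) = Uop w⁻¹ := by
  simp [Uop, adjoint_ketbra, LinearIsometryEquiv.map_smulₛₗ, ← Circle.coe_inv_eq_conj]

lemma Uop_qzero (w : Circle) : Uop w qzero = qzero := by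
  simp [Uop, ketbra_apply]

lemma Uop_qone (w : Circle) : Uop w qone = (w : ℂ) • qone := by
  simp [Uop, ketbra_apply]

/-- The vector `|0⟩ + z|1⟩`, on which the density `Dz z` projects (up to the factor `2`). -/
def phaseVec (z : Circle) : Qubit := qzero + (z : ℂ) • qone

lemma Uop_phaseVec (w z : Circle) : Uop w (phaseVec z) = phaseVec (w * z) := by
  simp [phaseVec, Uop_qzero, Uop_qone, smul_smul, mul_comm]

lemma inner_qzero_phaseVec (z : Circle) : ⟪qzero, phaseVec z⟫ = 1 := by
  simp [phaseVec]

lemma inner_qone_phaseVec (z : Circle) : ⟪qone, phaseVec z⟫ = z := by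
  simp [phaseVec]

lemma Dz_eq_ketbra_phaseVec (z : Circle) : Dz z = ketbra (phaseVec z) (phaseVec z) := by
  have hz : (starRingEnd ℂ) z * (z : ℂ) = 1 := by rw [← Circle.coe_inv_eq_conj]; simp
  simp only [Dz, phaseVec, ← ketbra_qzero_add_ketbra_qone, ketbra_eq_rankOne, map_add, map_smulₛₗ,
    _root_.add_apply, _root_.smul_apply, smul_add, smul_smul, RingHom.id_apply, hz]
  module

lemma isPositive_Dz (z : Circle) : (Dz z).IsPositive := by
  rw [Dz_eq_ketbra_phaseVec]
  exact InnerProductSpace.isPositive_rankOne_self _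

lemma inner_Dz_apply (z : Circle) (φ ψ : Qubit) :
    ⟪φ, Dz z ψ⟫ = ⟪phaseVec z, ψ⟫ * ⟪φ, phaseVec z⟫ := by
  rw [Dz_eq_ketbra_phaseVec, ketbra_apply, inner_smul_right]

lemma Uop_comp_Dz_comp_adjoint_Uop (w z : Circle) :
    Uop w ∘L Dz z ∘L adjoint (Uop w) = Dz (w * z) := by
  simp only [Dz_eq_ketbra_phaseVec, ketbra_eq_rankOne, InnerProductSpace.comp_rankOne,
    InnerProductSpace.rankOne_comp, adjoint_adjoint, Uop_phaseVec]

lemma continuous_Dz : Continuous Dz := by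
  unfold Dz
  fun_prop

end Qubit

section Moments

variable {μ : Measure Circle}

lemma integrable_of_continuous_circle [IsFiniteMeasure μ] {E : Type*} [NormedAddCommGroup E]
    {f : Circle → E} (hf : Continuous f) : Integrable f μ :=
  hf.integrable_of_hasCompactSupport (.of_compactSpace f)

lemma continuous_coe_zpow (n : ℤ) : Continuous fun z : Circle => (z : ℂ) ^ n :=
  continuous_subtype_val.zpow₀ n fun z => Or.inl (Circle.coe_ne_zero z)

lemma integral_zpow_eq_zero [μ.IsMulLeftInvariant] {n : ℤ} (hn : n ≠ 0) :
    ∫ z : Circle, (z : ℂ) ^ n ∂μ = 0 := by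
  refine integral_eq_zero_of_mul_left_eq_neg (g := Circle.exp (Real.pi / n)) fun z => ?_
  have hexp : (Circle.exp (Real.pi / n) : ℂ) ^ n = -1 := by
    have hn' : (n : ℂ) ≠ 0 := by exact_mod_cast hn
    rw [Circle.coe_exp, ← Complex.exp_int_mul, ← Complex.exp_pi_mul_I]
    congr 1
    push_cast
    field_simp
  rw [Circle.coe_mul, mul_zpow, hexp, neg_one_mul]

lemma integral_smul_Dz [IsFiniteMeasure μ] {f : Circle → ℂ} (hf : Continuous f) :
    ∫ z, f z • Dz z ∂μ = (∫ z, f z ∂μ) • (1 : Qubit →L[ℂ] Qubit)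
      + (∫ z, f z * (starRingEnd ℂ) z ∂μ) • ketbra qzero qone
      + (∫ z, f z * z ∂μ) • ketbra qone qzero := by
  simp only [Dz, smul_add, smul_smul]
  rw [integral_add, integral_add, integral_smul_const, integral_smul_const, integral_smul_const]
  all_goals exact integrable_of_continuous_circle (by fun_prop)

lemma Mop_eq_setIntegral_Dz [IsFiniteMeasure μ] (B : Set Circle) :
    Mop μ B = ∫ z in B, Dz z ∂μ := by
  have h := integral_smul_Dz (μ := μ.restrict B) (f := fun _ => 1) continuous_const
  simpa [Mop, measureReal_def] using h.symm

lemma inner_Mop [IsFiniteMeasure μ] (B : Set Circle) (φ ψ : Qubit) :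
    ⟪φ, Mop μ B ψ⟫ = ∫ z in B, ⟪φ, Dz z ψ⟫ ∂μ := by
  rw [Mop_eq_setIntegral_Dz, inner_integral_apply (integrable_of_continuous_circle continuous_Dz)]

lemma integral_zpow_smul_Dz [IsFiniteMeasure μ] (n : ℤ) :
    ∫ z : Circle, (z : ℂ) ^ n • Dz z ∂μ = (∫ z : Circle, (z : ℂ) ^ n ∂μ) • (1 : Qubit →L[ℂ] Qubit)
      + (∫ z : Circle, (z : ℂ) ^ (n - 1) ∂μ) • ketbra qzero qone
      + (∫ z : Circle, (z : ℂ) ^ (n + 1) ∂μ) • ketbra qone qzero := by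
  have hsub (z : Circle) : (z : ℂ) ^ n * (starRingEnd ℂ) z = (z : ℂ) ^ (n - 1) := by
    rw [← Circle.coe_inv_eq_conj, Circle.coe_inv, zpow_sub_one₀ z.coe_ne_zero]
  have hadd (z : Circle) : (z : ℂ) ^ n * z = (z : ℂ) ^ (n + 1) :=
    (zpow_add_one₀ z.coe_ne_zero n).symm
  simp only [integral_smul_Dz (continuous_coe_zpow n), hsub, hadd]

lemma integral_zpow_smul_Dz_eq_zero [IsFiniteMeasure μ] [μ.IsMulLeftInvariant] {n : ℤ}
    (hn : 1 < |n|) : ∫ z : Circle, (z : ℂ) ^ n • Dz z ∂μ = 0 := by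
  rw [integral_zpow_smul_Dz, integral_zpow_eq_zero (by grind : n ≠ 0),
    integral_zpow_eq_zero (by grind : n - 1 ≠ 0), integral_zpow_eq_zero (by grind : n + 1 ≠ 0)]
  module

lemma integral_Dz [IsProbabilityMeasure μ] [μ.IsMulLeftInvariant] : ∫ z, Dz z ∂μ = 1 := by
  have h := integral_zpow_smul_Dz (μ := μ) 0
  rw [integral_zpow_eq_zero (by norm_num : (0 : ℤ) - 1 ≠ 0),
    integral_zpow_eq_zero (by norm_num : (0 : ℤ) + 1 ≠ 0)] at h
  calc ∫ z, Dz z ∂μ = ∫ z : Circle, (z : ℂ) ^ (0 : ℤ) • Dz z ∂μ := by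
        simp only [zpow_zero, one_smul]
    _ = (∫ z : Circle, (z : ℂ) ^ (0 : ℤ) ∂μ) • 1 := by rw [h]; module
    _ = 1 := by simp

lemma integral_sq_mul_inner_Dz_eq_zero [IsFiniteMeasure μ] [μ.IsMulLeftInvariant] (φ ψ : Qubit) :
    ∫ z : Circle, (z : ℂ) ^ 2 * ⟪φ, Dz z ψ⟫ ∂μ = 0 := by
  have hint : Integrable (fun z : Circle => (z : ℂ) ^ (2 : ℤ) • Dz z) μ :=
    integrable_of_continuous_circle ((continuous_coe_zpow 2).smul continuous_Dz)
  calc ∫ z : Circle, (z : ℂ) ^ 2 * ⟪φ, Dz z ψ⟫ ∂μ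
      = ∫ z : Circle, ⟪φ, ((z : ℂ) ^ (2 : ℤ) • Dz z) ψ⟫ ∂μ := by
        simp only [_root_.smul_apply, inner_smul_right, zpow_ofNat]
    _ = ⟪φ, (∫ z : Circle, (z : ℂ) ^ (2 : ℤ) • Dz z ∂μ) ψ⟫ := (inner_integral_apply hint φ ψ).symm
    _ = 0 := by
        rw [integral_zpow_smul_Dz_eq_zero (by norm_num), _root_.zero_apply, inner_zero_right]

lemma integral_re_sq_smul_Dz_eq_zero [IsFiniteMeasure μ] [μ.IsMulLeftInvariant] :
    ∫ z : Circle, ((z : ℂ) ^ 2).re • Dz z ∂μ = 0 := by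
  have hcont (n : ℤ) : Continuous fun z : Circle => (z : ℂ) ^ n • Dz z :=
    (continuous_coe_zpow n).smul continuous_Dz
  have hre (z : Circle) : ((z : ℂ) ^ 2).re • Dz z
      = (1 / 2 : ℂ) • ((z : ℂ) ^ (2 : ℤ) • Dz z + (z : ℂ) ^ (-2 : ℤ) • Dz z) := by
    have hconj : (starRingEnd ℂ) ((z : ℂ) ^ 2) = (z : ℂ) ^ (-2 : ℤ) := by
      rw [map_pow, ← Circle.coe_inv_eq_conj, Circle.coe_inv, zpow_neg, inv_pow, zpow_ofNat]
    calc ((z : ℂ) ^ 2).re • Dz z = (((z : ℂ) ^ 2).re : ℂ) • Dz z :=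
          (RCLike.real_smul_eq_coe_smul (K := ℂ) _ (Dz z) :)
      _ = (1 / 2 : ℂ) • ((z : ℂ) ^ (2 : ℤ) • Dz z + (z : ℂ) ^ (-2 : ℤ) • Dz z) := by
        rw [Complex.re_eq_add_conj, hconj, zpow_ofNat]
        module
  simp only [hre]
  rw [integral_smul, integral_add (integrable_of_continuous_circle (hcont 2))
    (integrable_of_continuous_circle (hcont (-2))), integral_zpow_smul_Dz_eq_zero (by norm_num),
    integral_zpow_smul_Dz_eq_zero (by norm_num), add_zero, smul_zero]

end Moments

section Covariance

variable {μ : Measure Circle}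

lemma Uop_comp_Mop_comp_adjoint_Uop [IsFiniteMeasure μ] [μ.IsMulLeftInvariant] (w : Circle)
    (B : Set Circle) :
    Uop w ∘L Mop μ B ∘L adjoint (Uop w) = Mop μ ((fun z => w * z) '' B) := by
  have hD : Integrable Dz (μ.restrict B) := integrable_of_continuous_circle continuous_Dz
  have hmap := (measurePreserving_mul_left μ w).setIntegral_image_emb
    (measurableEmbedding_mulLeft w) Dz B
  calc Uop w ∘L Mop μ B ∘L adjoint (Uop w)
      = Uop w * ((∫ z in B, Dz z ∂μ) * adjoint (Uop w)) := by rw [Mop_eq_setIntegral_Dz]; rfl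
    _ = ∫ z in B, Uop w * (Dz z * adjoint (Uop w)) ∂μ := by
      rw [← integral_mul_const_of_integrable hD,
        ← integral_const_mul_of_integrable (hD.mul_const _)]
    _ = ∫ z in B, Dz (w * z) ∂μ := integral_congr_ae (.of_forall (Uop_comp_Dz_comp_adjoint_Uop w))
    _ = Mop μ ((fun z => w * z) '' B) := by rw [Mop_eq_setIntegral_Dz, hmap]

lemma qubitCovariant_of_toFun_eq_Mop [IsFiniteMeasure μ] [μ.IsMulLeftInvariant]
    {M : POVM Circle Qubit} (hM : ∀ B, MeasurableSet B → M.toFun B = Mop μ B) :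
    QubitCovariant M := fun w B hB => by
  rw [hM B hB, hM _ ((measurableEmbedding_mulLeft w).measurableSet_image.2 hB),
    Uop_comp_Mop_comp_adjoint_Uop]

namespace QubitCovariant

variable {N : POVM Circle Qubit}

lemma scalarMeasure_eq [μ.IsHaarMeasure] [IsProbabilityMeasure μ] (hN : QubitCovariant N)
    {φ : Qubit} (hφ : ‖φ‖ = 1) (heigen : ∀ w : Circle, ∃ a : Circle, Uop w φ = (a : ℂ) • φ) :
    N.scalarMeasure φ = μ := by
  refine N.scalarMeasure_eq_of_invariant μ hφ fun w B hB => ?_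
  obtain ⟨a, ha⟩ := heigen w⁻¹
  calc ⟪φ, N.toFun ((w * ·) '' B) φ⟫ = ⟪adjoint (Uop w) φ, N.toFun B (adjoint (Uop w) φ)⟫ := by
        rw [← hN w B hB, adjoint_inner_left]; rfl
    _ = ⟪φ, N.toFun B φ⟫ := by
        rw [adjoint_Uop, ha, map_smul, inner_smul_left, inner_smul_right, ← mul_assoc,
          ← Circle.coe_inv_eq_conj, ← Circle.coe_mul, inv_mul_cancel, Circle.coe_one, one_mul]

lemma scalarMeasure_qzero [μ.IsHaarMeasure] [IsProbabilityMeasure μ] (hN : QubitCovariant N) :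
    N.scalarMeasure qzero = μ :=
  hN.scalarMeasure_eq norm_qzero fun w => ⟨1, by rw [Uop_qzero, Circle.coe_one, one_smul]⟩

lemma scalarMeasure_qone [μ.IsHaarMeasure] [IsProbabilityMeasure μ] (hN : QubitCovariant N) :
    N.scalarMeasure qone = μ :=
  hN.scalarMeasure_eq norm_qone fun w => ⟨w, Uop_qone w⟩

lemma toFun_eq_of_complexMeasure_eq {N' : POVM Circle Qubit} (μ : Measure Circle) [μ.IsHaarMeasure]
    [IsProbabilityMeasure μ] (hN : QubitCovariant N) (hN' : QubitCovariant N')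
    (h : N.complexMeasure qzero qone = N'.complexMeasure qzero qone) {B : Set Circle}
    (hB : MeasurableSet B) : N.toFun B = N'.toFun B := by
  refine eq_of_isPositive_of_inner_eq (N.isPositive B hB) (N'.isPositive B hB) ?_ ?_ ?_
  · simp only [← POVM.scalarMeasure_real_apply _ _ hB, hN.scalarMeasure_qzero (μ := μ),
      hN'.scalarMeasure_qzero (μ := μ)]
  · simp only [← POVM.scalarMeasure_real_apply _ _ hB, hN.scalarMeasure_qone (μ := μ),
      hN'.scalarMeasure_qone (μ := μ)]
  · rw [← N.complexMeasure_apply _ _ hB, h, N'.complexMeasure_apply _ _ hB]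

lemma variation_complexMeasure_le [μ.IsHaarMeasure] [IsProbabilityMeasure μ]
    (hN : QubitCovariant N) : (N.complexMeasure qzero qone).variation ≤ μ :=
  N.variation_complexMeasure_le hN.scalarMeasure_qzero.le hN.scalarMeasure_qone.le

end QubitCovariant

end Covariance

section Extremality

variable {μ : Measure Circle} {M : POVM Circle Qubit}

lemma complexMeasure_qzero_qone_mem_extremePoints [IsFiniteMeasure μ]
    (hM : ∀ B, MeasurableSet B → M.toFun B = Mop μ B) :
    M.complexMeasure qzero qone ∈
      extremePoints ℝ {c : ComplexMeasure Circle | c.variation ≤ μ} := by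
  have hu : Integrable (fun z => ⟪qzero, Dz z qone⟫) μ :=
    integrable_of_continuous_circle (by have := continuous_Dz; fun_prop)
  have hnorm (z : Circle) : ‖⟪qzero, Dz z qone⟫‖ = 1 := by
    rw [inner_Dz_apply, inner_qzero_phaseVec, mul_one, norm_inner_symm, inner_qone_phaseVec,
      Circle.norm_coe]
  have hdensity : μ.withDensityᵥ (fun z => ⟪qzero, Dz z qone⟫) = M.complexMeasure qzero qone := by
    ext B hB
    rw [withDensityᵥ_apply hu hB, M.complexMeasure_apply _ _ hB, hM B hB, inner_Mop]
  exact hdensity ▸ withDensityᵥ_mem_extremePoints hu (.of_forall hnorm)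

lemma isExtreme_qubitCovariant [μ.IsHaarMeasure] [IsProbabilityMeasure μ]
    (hM : ∀ B, MeasurableSet B → M.toFun B = Mop μ B) :
    POVM.IsExtreme {N | QubitCovariant N} M := by
  have hMcov := qubitCovariant_of_toFun_eq_Mop hM
  refine ⟨hMcov, fun M₁ M₂ hM₁ hM₂ t ht₀ ht₁ hmid B hB => ?_⟩
  have hcomb : t • M₁.complexMeasure qzero qone + (1 - t) • M₂.complexMeasure qzero qone
      = M.complexMeasure qzero qone := by
    ext C hC
    simp [POVM.complexMeasure_apply _ _ _ hC, hmid C hC]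
  have heq := (mem_extremePoints.1 (complexMeasure_qzero_qone_mem_extremePoints hM)).2 _
    hM₁.variation_complexMeasure_le _ hM₂.variation_complexMeasure_le
    ⟨t, 1 - t, ht₀, sub_pos.2 ht₁, add_sub_cancel t 1, hcomb⟩
  exact ⟨hM₁.toFun_eq_of_complexMeasure_eq μ hMcov heq.1 hB,
    hM₂.toFun_eq_of_complexMeasure_eq μ hMcov heq.2 hB⟩

lemma not_isExtreme_univ [μ.IsHaarMeasure] [IsProbabilityMeasure μ]
    (hM : ∀ B, MeasurableSet B → M.toFun B = Mop μ B) : ¬ POVM.IsExtreme univ M := by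
  have hcont : Continuous fun z : Circle => ((z : ℂ) ^ 2).re • Dz z := by
    have := continuous_Dz
    fun_prop
  refine POVM.not_isExtreme_univ_of_integral_smul_eq_zero (μ := μ) (D := Dz)
    (g := fun z => ((z : ℂ) ^ 2).re) (fun B hB => by rw [hM B hB, Mop_eq_setIntegral_Dz])
    (integrable_of_continuous_circle continuous_Dz) (.of_forall isPositive_Dz)
    (.of_forall fun z => ?_) (integrable_of_continuous_circle hcont)
    integral_re_sq_smul_Dz_eq_zero fun hae => ?_
  · exact (Complex.abs_re_le_norm _).trans_eq (by rw [norm_pow, Circle.norm_coe, one_pow])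
  · have hzero := congrFun ((hcont.ae_eq_iff_eq _ continuous_zero).1 hae) 1
    have hDz : Dz 1 = 0 := by simpa using hzero
    have hinner : ⟪qzero, Dz 1 qzero⟫ = 1 := by
      rw [inner_Dz_apply, ← inner_conj_symm (phaseVec 1), inner_qzero_phaseVec, map_one, one_mul]
    simp [hDz] at hinner

end Extremality

theorem stmt12 (μ : Measure Circle) (hHaar : μ.IsHaarMeasure)
    (hProb : IsProbabilityMeasure μ) :
    -- (a) `B ↦ M(B)` extends to a POVM
    (∃ M : POVM Circle Qubit, ∀ B : Set Circle, MeasurableSet B → M.toFun B = Mop μ B) ∧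
    -- (b) covariance: `U(w) M(B) U(w)* = M(w·B)`
    (∀ w : Circle, ∀ B : Set Circle, MeasurableSet B →
      Uop w ∘L Mop μ B ∘L adjoint (Uop w) = Mop μ ((fun z => w * z) '' B)) ∧
    -- (c) the matrix elements of `M` have density `Dz` w.r.t. `μ`, and the second moment
    -- operator `∫ z² dM(z)` vanishes
    ((∀ B : Set Circle, MeasurableSet B → ∀ φ ψ : Qubit,
        ⟪φ, Mop μ B ψ⟫ = ∫ z in B, ⟪φ, Dz z ψ⟫ ∂μ) ∧
      (∀ φ ψ : Qubit, ∫ z, (z : ℂ) ^ 2 * ⟪φ, Dz z ψ⟫ ∂μ = 0)) ∧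
    -- (d) `M` is extreme among covariant POVMs but not among all POVMs
    (∀ M : POVM Circle Qubit, (∀ B : Set Circle, MeasurableSet B → M.toFun B = Mop μ B) →
      (QubitCovariant M ∧
        (∀ M₁ M₂ : POVM Circle Qubit, QubitCovariant M₁ → QubitCovariant M₂ →
          ∀ t : ℝ, 0 < t → t < 1 →
          (∀ B : Set Circle, MeasurableSet B →
            M.toFun B = (t : ℂ) • M₁.toFun B + ((1 - t : ℝ) : ℂ) • M₂.toFun B) →
          ∀ B : Set Circle, MeasurableSet B →
            M₁.toFun B = M.toFun B ∧ M₂.toFun B = M.toFun B)) ∧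
      ¬ (∀ M₁ M₂ : POVM Circle Qubit,
          ∀ t : ℝ, 0 < t → t < 1 →
          (∀ B : Set Circle, MeasurableSet B →
            M.toFun B = (t : ℂ) • M₁.toFun B + ((1 - t : ℝ) : ℂ) • M₂.toFun B) →
          ∀ B : Set Circle, MeasurableSet B →
            M₁.toFun B = M.toFun B ∧ M₂.toFun B = M.toFun B)) := by
  refine ⟨⟨POVM.ofDensity μ Dz (integrable_of_continuous_circle continuous_Dz)
      (.of_forall isPositive_Dz) integral_Dz, fun B _ => (Mop_eq_setIntegral_Dz B).symm⟩,
    fun w B _ => Uop_comp_Mop_comp_adjoint_Uop w B,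
    ⟨fun B _ => inner_Mop B, integral_sq_mul_inner_Dz_eq_zero⟩, fun M hM => ⟨⟨?_, ?_⟩, ?_⟩⟩
  · exact qubitCovariant_of_toFun_eq_Mop hM
  · exact (isExtreme_qubitCovariant hM).2
  · exact fun h => not_isExtreme_univ hM ⟨trivial, fun M₁ M₂ _ _ => h M₁ M₂⟩

end
end

section
/- Let n ≥ 1 and let M be a POVM on (ℝⁿ, ℬ(ℝⁿ)) acting on L²(ℝ²ⁿ) that is covariant with respect to translations acting on position differences, i.e. U(u₁, u₂) M(B) U(u₁, u₂)* = M(B + u₂ − u₁) for all u₁, u₂ ∈ ℝⁿ and Borel B ⊆ ℝⁿ where (U(u₁, u₂)φ)(x, y) = φ(x − u₁, y − u₂), and invariant under all independent momentum boosts, i.e. V(p₁, p₂) M(B) V(p₁, p₂)* = M(B) for all p₁, p₂ ∈ ℝⁿ and Borel B where (V(p₁, p₂)φ)(x, y) = e^{i(p₁|x) + i(p₂|y)} φ(x, y). Then there exists a Borel probability measure ρ on ℝⁿ such that M = ρ ∗ E_κ, i.e. ⟨φ, M(B)ψ⟩ = ∫_{ℝⁿ} ⟨φ, E_κ(B − q)ψ⟩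 dρ(q) for all φ, ψ ∈ L²(ℝ²ⁿ) and all Borel B ⊆ ℝⁿ. Conversely, ρ ∗ E_κ is such a covariant, boost-invariant POVM for every Borel probability measure ρ on ℝⁿ. -/
open MeasureTheory Set
open scoped ComplexConjugate Classical

local notation "⟪" x ", " y "⟫" => @inner ℂ _ _ x y

/-- `L²(ℝ²ⁿ)`, realized as the `L²`-space of the product `ℝⁿ × ℝⁿ` (first factor:
coordinates of particle 1, second factor: coordinates of particle 2). -/
noncomputable abbrev L2R2n (n : ℕ) : Type :=
  Lp ℂ 2 (volume : Measure ((Fin n → ℝ) × (Fin n → ℝ)))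

/-- Covariance with respect to translations acting on position differences:
`U(u₁,u₂) M(B) U(u₁,u₂)* = M(B + u₂ − u₁)`. -/
def DiffCovariant (n : ℕ)
    (U : (Fin n → ℝ) → (Fin n → ℝ) → (L2R2n n ≃ₗᵢ[ℂ] L2R2n n))
    (M : POVM (Fin n → ℝ) (L2R2n n)) : Prop :=
  ∀ u₁ u₂ : Fin n → ℝ, ∀ B : Set (Fin n → ℝ), MeasurableSet B →
    ∀ φ ψ : L2R2n n,
      ⟪(U u₁ u₂ φ : L2R2n n), M.toFun ((fun x => x + u₂ - u₁) '' B) (U u₁ u₂ ψ)⟫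
        = ⟪φ, M.toFun B ψ⟫

/-- Invariance under all independent momentum boosts of the two particles. -/
def IndepBoostInvariant (n : ℕ)
    (V : (Fin n → ℝ) → (Fin n → ℝ) → (L2R2n n ≃ₗᵢ[ℂ] L2R2n n))
    (M : POVM (Fin n → ℝ) (L2R2n n)) : Prop :=
  ∀ p₁ p₂ : Fin n → ℝ, ∀ B : Set (Fin n → ℝ), MeasurableSet B →
    ∀ φ ψ : L2R2n n,
      ⟪(V p₁ p₂ φ : L2R2n n), M.toFun B (V p₁ p₂ ψ)⟫ = ⟪φ, M.toFun B ψ⟫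

/-!
Boosts act as multiplication by all characters, so by uniqueness of Fourier transforms a
boost-invariant effect `M(B)` is multiplication by a function `m_B` of the position, and the
outcome distribution `M_φ` in the state `φ` is determined by the position law: `M_φ(B)` is the mean
of `m_B` under `|φ|²`. By translation covariance, shifting `M_ψ` by `κ(z)` and averaging over `z`
with law `|φ|²` gives the mean of `m_B` under `|φ|² ∗ |ψ|²`, which is symmetric in `φ` and `ψ`, so
`κ(|φ|²) ∗ M_ψ = κ(|ψ|²) ∗ M_φ`. Let `ψ = e_k` concentrate at the origin: `κ(|e_k|²)` tends to the
Dirac measure at `0`, the relation for a fixed `φ` makes the `M_{e_k}` tight, and any weak limit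
point `ρ` satisfies `M_φ = κ(|φ|²) ∗ ρ` for all `φ`. As `κ(|φ|²)` is the outcome distribution of
`E_κ`, this is `M = ρ ∗ E_κ`.
-/

section Fourier

variable {X : Type*} [NormedAddCommGroup X] [NormedSpace ℝ X] [MeasurableSpace X]
  {μ : Measure X}

lemma charFunDual_withDensity_ofReal {g : X → ℝ} (hg : AEMeasurable g μ) (L : StrongDual ℝ X) :
    charFunDual (μ.withDensity fun z => ENNReal.ofReal (g z)) L =
      ∫ z, Complex.exp (L z * Complex.I) * (max (g z) 0 : ℝ) ∂μ := by
  rw [charFunDual_apply,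
    integral_withDensity_eq_integral_toReal_smul₀ hg.ennreal_ofReal (by simp)]
  simp only [ENNReal.toReal_ofReal', Complex.real_smul, mul_comm]

variable [BorelSpace X]

lemma integrable_cexp_mul {f : X → ℂ} (hf : Integrable f μ) (L : StrongDual ℝ X) :
    Integrable (fun z => Complex.exp (L z * Complex.I) * f z) μ :=
  hf.bdd_mul (c := 1) (by fun_prop) (.of_forall fun z => (Complex.norm_exp_ofReal_mul_I (L z)).le)

variable [CompleteSpace X] [SecondCountableTopology X]

lemma ae_eq_zero_of_forall_integral_cexp_mul_ofReal_eq_zero {g : X → ℝ} (hg : Integrable g μ)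
    (h : ∀ L : StrongDual ℝ X, ∫ z, Complex.exp (L z * Complex.I) * (g z : ℂ) ∂μ = 0) :
    g =ᵐ[μ] 0 := by
  have hfin {f : X → ℝ} (hf : Integrable f μ) : ∫⁻ z, ENNReal.ofReal (f z) ∂μ ≠ ⊤ :=
    hf.lintegral_lt_top.ne
  have hint {f : X → ℝ} (hf : Integrable f μ) (L : StrongDual ℝ X) :
      Integrable (fun z => Complex.exp (L z * Complex.I) * (max (f z) 0 : ℝ)) μ :=
    integrable_cexp_mul hf.pos_part.ofReal L
  have := isFiniteMeasure_withDensity (hfin hg)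
  have := isFiniteMeasure_withDensity (hfin hg.neg)
  have hparts : (μ.withDensity fun z => ENNReal.ofReal (g z)) =
      μ.withDensity fun z => ENNReal.ofReal ((-g) z) := by
    refine Measure.ext_of_charFunDual (funext fun L => ?_)
    rw [charFunDual_withDensity_ofReal hg.1.aemeasurable,
      charFunDual_withDensity_ofReal hg.neg.1.aemeasurable, ← sub_eq_zero,
      ← integral_sub (hint hg L) (hint hg.neg L), ← h L]
    simp only [Pi.neg_apply, ← mul_sub, ← Complex.ofReal_sub, max_zero_sub_eq_self]
  rw [withDensity_eq_iff hg.1.aemeasurable.ennreal_ofReal hg.neg.1.aemeasurable.ennreal_ofReal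
    (hfin hg)] at hparts
  filter_upwards [hparts] with z hz
  have hmax : max (g z) 0 = max (-g z) 0 := by
    simpa only [ENNReal.toReal_ofReal', Pi.neg_apply] using congrArg ENNReal.toReal hz
  rw [← max_zero_sub_eq_self (g z), hmax, sub_self, Pi.zero_apply]

lemma re_ae_eq_zero_of_forall_integral_cexp_mul_eq_zero {f : X → ℂ} (hf : Integrable f μ)
    (h : ∀ L : StrongDual ℝ X, ∫ z, Complex.exp (L z * Complex.I) * f z ∂μ = 0) :
    (fun z => (f z).re) =ᵐ[μ] 0 := by
  refine ae_eq_zero_of_forall_integral_cexp_mul_ofReal_eq_zero hf.re fun L => ?_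
  have hconj : ∫ z, Complex.exp (L z * Complex.I) * conj (f z) ∂μ = 0 := by
    have := congrArg conj (h (-L))
    rw [← integral_conj] at this
    simpa [← Complex.exp_conj] using this
  have hf' : Integrable (fun z => conj (f z)) μ :=
    (LinearIsometryEquiv.integrable_comp_iff Complex.conjLIE).2 hf
  calc ∫ z, Complex.exp (L z * Complex.I) * ((f z).re : ℂ) ∂μ
      = ∫ z, (1 / 2 : ℂ) * (Complex.exp (L z * Complex.I) * f z +
          Complex.exp (L z * Complex.I) * conj (f z)) ∂μ := by
        refine integral_congr_ae (.of_forall fun z => ?_)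
        simp only [Complex.re_eq_add_conj]
        ring
    _ = 0 := by
        rw [integral_const_mul,
          integral_add (integrable_cexp_mul hf L) (integrable_cexp_mul hf' L), h, hconj,
          add_zero, mul_zero]

lemma ae_eq_zero_of_forall_integral_cexp_mul_eq_zero {f : X → ℂ} (hf : Integrable f μ)
    (h : ∀ L : StrongDual ℝ X, ∫ z, Complex.exp (L z * Complex.I) * f z ∂μ = 0) :
    f =ᵐ[μ] 0 := by
  have him := re_ae_eq_zero_of_forall_integral_cexp_mul_eq_zero (hf.const_mul (-Complex.I))
    fun L => by simp only [mul_left_comm _ (-Complex.I), integral_const_mul, h, mul_zero]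
  filter_upwards [re_ae_eq_zero_of_forall_integral_cexp_mul_eq_zero hf h, him] with z hre him
  exact Complex.ext hre (by simpa using him)

end Fourier

section MultiplicationOperator

variable {X : Type*} [MeasurableSpace X] {μ : Measure X}

lemma inner_ae_eq_inner_adjoint_of_boost_invariant [NormedAddCommGroup X] [NormedSpace ℝ X]
    [CompleteSpace X] [SecondCountableTopology X] [BorelSpace X] {ι : Type*}
    {V : ι → (Lp ℂ 2 μ ≃ₗᵢ[ℂ] Lp ℂ 2 μ)} {ℓ : ι → StrongDual ℝ X} (hℓ : Function.Surjective ℓ)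
    (hV : ∀ p (φ : Lp ℂ 2 μ), V p φ =ᵐ[μ] fun z => Complex.exp (ℓ p z * Complex.I) * φ z)
    {A : Lp ℂ 2 μ →L[ℂ] Lp ℂ 2 μ} (hA : ∀ p φ ψ, ⟪V p φ, A (V p ψ)⟫ = ⟪φ, A ψ⟫)
    (φ ψ : Lp ℂ 2 μ) :
    (fun z => ⟪φ z, A ψ z⟫) =ᵐ[μ] fun z => ⟪A.adjoint φ z, ψ z⟫ := by
  have boost_integral (p : ι) (f g : Lp ℂ 2 μ) :
      ∫ z, Complex.exp (ℓ p z * Complex.I) * ⟪f z, g z⟫ ∂μ = ⟪f, V p g⟫ := by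
    rw [L2.inner_def]
    refine integral_congr_ae ?_
    filter_upwards [hV p g] with z hz
    simp only [hz, RCLike.inner_apply, mul_assoc]
  have commute (p : ι) : A (V p ψ) = V p (A ψ) := by
    refine ext_inner_left ℂ ((V p).surjective.forall.2 fun f => ?_)
    rw [hA, LinearIsometryEquiv.inner_map_map]
  have hint (f g : Lp ℂ 2 μ) : Integrable (fun z => ⟪f z, g z⟫) μ := L2.integrable_inner f g
  have hzero := ae_eq_zero_of_forall_integral_cexp_mul_eq_zero
    ((hint φ (A ψ)).sub (hint (A.adjoint φ) ψ)) (hℓ.forall.2 fun p => by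
      simp only [Pi.sub_apply, mul_sub]
      rw [integral_sub (integrable_cexp_mul (hint _ _) _) (integrable_cexp_mul (hint _ _) _),
        boost_integral, boost_integral, ← commute, ContinuousLinearMap.adjoint_inner_left,
        sub_self])
  filter_upwards [hzero] with z hz
  exact sub_eq_zero.1 hz

lemma exists_Lp_two_ae_ne_zero [SigmaFinite μ] : ∃ f : Lp ℂ 2 μ, ∀ᵐ z ∂μ, f z ≠ 0 := by
  obtain ⟨g, gpos, gmeas, gint⟩ :=
    exists_pos_lintegral_lt_of_sigmaFinite μ (ε := 1) one_ne_zero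
  let f : X → ℂ := fun z => (√(g z) : ℝ)
  have hf : MemLp f 2 μ := by
    refine ⟨by fun_prop, ?_⟩
    rw [eLpNorm_lt_top_iff_lintegral_rpow_enorm_lt_top (by simp) (by simp)]
    refine lt_of_le_of_lt (lintegral_mono fun z => ?_) (gint.trans ENNReal.one_lt_top)
    rw [ENNReal.toReal_ofNat, ENNReal.rpow_ofNat, ← ofReal_norm,
      ← ENNReal.ofReal_pow (norm_nonneg _)]
    simp [f]
  refine ⟨hf.toLp, ?_⟩
  filter_upwards [hf.coeFn_toLp] with z hz
  simpa [hz, f] using (gpos z).ne'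

lemma exists_ae_eq_mul_of_inner_ae_eq [SigmaFinite μ] {S T : Lp ℂ 2 μ → Lp ℂ 2 μ}
    (h : ∀ φ ψ, (fun z => ⟪φ z, T ψ z⟫) =ᵐ[μ] fun z => ⟪S φ z, ψ z⟫) :
    ∃ a : X → ℂ, Measurable a ∧ ∀ ψ, T ψ =ᵐ[μ] fun z => a z * ψ z := by
  obtain ⟨f, hf⟩ := exists_Lp_two_ae_ne_zero (μ := μ)
  have hmeas (g : Lp ℂ 2 μ) : Measurable g := (Lp.stronglyMeasurable g).measurable
  refine ⟨fun z => conj (S f z / f z),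
    Complex.continuous_conj.measurable.comp ((hmeas (S f)).div (hmeas f)), fun ψ => ?_⟩
  filter_upwards [hf, h f ψ] with z hfz hz
  have hconj : conj (f z) ≠ 0 := (map_ne_zero _).2 hfz
  rw [map_div₀, div_mul_eq_mul_div, eq_div_iff hconj]
  simpa [mul_comm] using hz

lemma re_nonneg_of_isPositive_of_ae_eq_mul [SigmaFinite μ] {A : Lp ℂ 2 μ →L[ℂ] Lp ℂ 2 μ}
    (hA : A.IsPositive) {a : X → ℂ} (ha : ∀ ψ, A ψ =ᵐ[μ] fun z => a z * ψ z) :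
    ∀ᵐ z ∂μ, 0 ≤ (a z).re := by
  have eq_on {s : Set X} (hs : MeasurableSet s) (hμs : μ s ≠ ⊤) :
      A (indicatorConstLp 2 hs hμs 1) =ᵐ[μ.restrict s] a := by
    filter_upwards [ae_restrict_of_ae (ha (indicatorConstLp 2 hs hμs 1)),
      ae_restrict_of_ae (indicatorConstLp_coeFn (p := 2) (hs := hs) (hμs := hμs) (c := (1 : ℂ))),
      ae_restrict_mem hs] with z hz hone hzs
    rw [hz, hone, indicator_of_mem hzs, mul_one]
  have integrable_on {s : Set X} (hs : MeasurableSet s) (hμs : μ s ≠ ⊤) : IntegrableOn a s μ :=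
    (integrableOn_Lp_of_measure_ne_top _ fact_one_le_two_ennreal.elim hμs).congr (eq_on hs hμs)
  refine ae_nonneg_of_forall_setIntegral_nonneg_of_sigmaFinite
    (fun s hs hμs => (integrable_on hs hμs.ne).re) fun s hs hμs => ?_
  calc 0 ≤ (⟪indicatorConstLp 2 hs hμs.ne 1, A (indicatorConstLp 2 hs hμs.ne 1)⟫).re :=
        hA.re_inner_nonneg_right _
    _ = (∫ z in s, a z ∂μ).re := by
        rw [L2.inner_indicatorConstLp_one, integral_congr_ae (eq_on hs hμs.ne)]
    _ = ∫ z in s, (a z).re ∂μ := (integral_re (integrable_on hs hμs.ne)).symm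

/-- The law of the position of a particle in the (not necessarily normalized) state `φ`. -/
noncomputable def bornMeasure (φ : Lp ℂ 2 μ) : Measure X :=
  μ.withDensity fun z => ‖φ z‖ₑ ^ 2

lemma measurable_enorm_sq (φ : Lp ℂ 2 μ) : Measurable fun z => ‖φ z‖ₑ ^ 2 :=
  (Lp.stronglyMeasurable φ).measurable.enorm.pow_const 2

lemma ofReal_re_inner_eq_lintegral_bornMeasure {φ ψ : Lp ℂ 2 μ} {a : X → ℂ} (ham : Measurable a)
    (ha : ∀ᵐ z ∂μ, 0 ≤ (a z).re) (h : ψ =ᵐ[μ] fun z => a z * φ z) :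
    ENNReal.ofReal (⟪φ, ψ⟫).re = ∫⁻ z, ENNReal.ofReal (a z).re ∂bornMeasure φ := by
  have hre : ∀ᵐ z ∂μ, (⟪φ z, ψ z⟫).re = ‖φ z‖ ^ 2 * (a z).re := by
    filter_upwards [h] with z hz
    rw [hz, ← smul_eq_mul, inner_smul_right, inner_self_eq_norm_sq_to_K]
    simp [← Complex.ofReal_pow, mul_comm]
  have hint : Integrable (fun z => ⟪φ z, ψ z⟫) μ := L2.integrable_inner φ ψ
  calc ENNReal.ofReal (⟪φ, ψ⟫).re
      = ENNReal.ofReal (∫ z, (⟪φ z, ψ z⟫).re ∂μ) := by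
        rw [L2.inner_def]; exact congrArg _ (integral_re hint).symm
    _ = ∫⁻ z, ENNReal.ofReal (⟪φ z, ψ z⟫).re ∂μ := by
        refine ofReal_integral_eq_lintegral_ofReal hint.re ?_
        filter_upwards [hre, ha] with z hz haz
        exact hz.symm ▸ mul_nonneg (sq_nonneg _) haz
    _ = ∫⁻ z, ‖φ z‖ₑ ^ 2 * ENNReal.ofReal (a z).re ∂μ := by
        refine lintegral_congr_ae ?_
        filter_upwards [hre] with z hz
        rw [hz, ENNReal.ofReal_mul (sq_nonneg _), ENNReal.ofReal_pow (norm_nonneg _), ofReal_norm]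
    _ = ∫⁻ z, ENNReal.ofReal (a z).re ∂bornMeasure φ :=
        (lintegral_withDensity_eq_lintegral_mul _ (measurable_enorm_sq φ) (by fun_prop)).symm

lemma bornMeasure_univ (φ : Lp ℂ 2 μ) : bornMeasure φ univ = ‖φ‖ₑ ^ 2 := by
  have h := ofReal_re_inner_eq_lintegral_bornMeasure (φ := φ) (ψ := φ) (a := 1)
    measurable_const (by simp) (by simp)
  rw [Pi.one_def, lintegral_const] at h
  simpa [inner_self_eq_norm_sq_to_K, ← Complex.ofReal_pow, ENNReal.ofReal_pow] using h.symm

instance (φ : Lp ℂ 2 μ) : IsFiniteMeasure (bornMeasure φ) :=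
  ⟨by rw [bornMeasure_univ]; exact ENNReal.pow_lt_top enorm_lt_top⟩

end MultiplicationOperator

section WeakIntegral

variable {H Q : Type*} [NormedAddCommGroup H] [InnerProductSpace ℂ H] [CompleteSpace H]

lemma inner_right_map_polarization (T : H →L[ℂ] H) (x y : H) :
    ⟪y, T x⟫ =
      (⟪x + y, T (x + y)⟫ - ⟪x - y, T (x - y)⟫ +
        Complex.I * ⟪x + Complex.I • y, T (x + Complex.I • y)⟫ -
        Complex.I * ⟪x - Complex.I • y, T (x - Complex.I • y)⟫) / 4 := by
  simpa only [ContinuousLinearMap.coe_coe, ContinuousLinearMap.adjoint_inner_left] using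
    inner_map_polarization (T.adjoint : H →ₗ[ℂ] H) x y

lemma hasSum_inner_map_of_hasSum_inner_map_self {ι : Type*} {A : ι → H →L[ℂ] H} {T : H →L[ℂ] H}
    (h : ∀ φ, HasSum (fun i => ⟪φ, A i φ⟫) ⟪φ, T φ⟫) (φ ψ : H) :
    HasSum (fun i => ⟪φ, A i ψ⟫) ⟪φ, T ψ⟫ := by
  simp only [inner_right_map_polarization _ ψ φ]
  exact ((((h _).sub (h _)).add ((h _).mul_left _)).sub ((h _).mul_left _)).div_const 4

variable [MeasurableSpace Q]

lemma measurable_inner_map_of_measurable_inner_map_self {A : Q → H →L[ℂ] H}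
    (hA : ∀ φ, Measurable fun q => ⟪φ, A q φ⟫) (φ ψ : H) : Measurable fun q => ⟪φ, A q ψ⟫ := by
  simp only [inner_right_map_polarization _ ψ φ]
  fun_prop

lemma exists_forall_inner_eq_integral {ρ : Measure Q} [IsFiniteMeasure ρ] {A : Q → H →L[ℂ] H}
    (hmeas : ∀ φ ψ, Measurable fun q => ⟪φ, A q ψ⟫) {C : ℝ} (hC : ∀ q, ‖A q‖ ≤ C) :
    ∃ T : H →L[ℂ] H, ∀ φ ψ, ⟪φ, T ψ⟫ = ∫ q, ⟪φ, A q ψ⟫ ∂ρ := by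
  have bound (φ ψ : H) (q : Q) : ‖⟪φ, A q ψ⟫‖ ≤ C * ‖φ‖ * ‖ψ‖ := calc
    ‖⟪φ, A q ψ⟫‖ ≤ ‖φ‖ * (‖A q‖ * ‖ψ‖) :=
      (norm_inner_le_norm _ _).trans (by gcongr; exact (A q).le_opNorm ψ)
    _ ≤ ‖φ‖ * (C * ‖ψ‖) := by gcongr; exact hC q
    _ = C * ‖φ‖ * ‖ψ‖ := by ring
  have hint (φ ψ : H) : Integrable (fun q => ⟪φ, A q ψ⟫) ρ :=
    .of_bound (hmeas φ ψ).aestronglyMeasurable _ (.of_forall (bound φ ψ))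
  let b : H →ₗ⋆[ℂ] H →ₗ[ℂ] ℂ := LinearMap.mk₂'ₛₗ (starRingEnd ℂ) (RingHom.id ℂ)
    (fun φ ψ => ∫ q, ⟪φ, A q ψ⟫ ∂ρ)
    (fun φ₁ φ₂ ψ => by simp only [inner_add_left]; exact integral_add (hint _ _) (hint _ _))
    (fun c φ ψ => by simp only [inner_smul_left]; exact integral_const_mul _ _)
    (fun φ ψ₁ ψ₂ => by
      simp only [map_add, inner_add_right]; exact integral_add (hint _ _) (hint _ _))
    (fun c φ ψ => by simp only [map_smul, inner_smul_right]; exact integral_const_mul _ _)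
  let b' := b.mkContinuous₂ (C * ρ.real univ) fun φ ψ => by
    calc ‖∫ q, ⟪φ, A q ψ⟫ ∂ρ‖ ≤ C * ‖φ‖ * ‖ψ‖ * ρ.real univ :=
          norm_integral_le_of_norm_le_const (.of_forall (bound φ ψ))
      _ = C * ρ.real univ * ‖φ‖ * ‖ψ‖ := by ring
  refine ⟨(InnerProductSpace.continuousLinearMapOfBilin b').adjoint, fun φ ψ => ?_⟩
  rw [ContinuousLinearMap.adjoint_inner_right,
    InnerProductSpace.continuousLinearMapOfBilin_apply]
  rfl

end WeakIntegral

namespace POVM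

variable {Ω H ι : Type*} [MeasurableSpace Ω] [NormedAddCommGroup H] [InnerProductSpace ℂ H]
  [CompleteSpace H]

lemma re_inner_nonneg (M : POVM Ω H) {B : Set Ω} (hB : MeasurableSet B) (φ : H) :
    0 ≤ (⟪φ, M.toFun B φ⟫).re :=
  (M.isPositive B hB).re_inner_nonneg_right φ

/-- The (unnormalized) distribution of the outcomes of `M` in the state `φ`. -/
noncomputable def outcomeMeasure (M : POVM Ω H) (φ : H) : Measure Ω :=
  Measure.ofMeasurable (fun B _ => ENNReal.ofReal (⟪φ, M.toFun B φ⟫).re)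
    (by
      have h := (M.m_iUnion (fun _ => ∅) (fun _ => .empty) (fun i j _ => disjoint_bot_left)
        φ φ).summable
      rw [(summable_const_iff _).1 h, Complex.zero_re, ENNReal.ofReal_zero])
    fun B hB hdisj => by
      have h := Complex.hasSum_re (M.m_iUnion B hB hdisj φ φ)
      rw [← h.tsum_eq, ENNReal.ofReal_tsum_of_nonneg (fun k => M.re_inner_nonneg (hB k) φ)
        h.summable]

lemma outcomeMeasure_apply (M : POVM Ω H) (φ : H) {B : Set Ω} (hB : MeasurableSet B) :
    M.outcomeMeasure φ B = ENNReal.ofReal (⟪φ, M.toFun B φ⟫).re :=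
  Measure.ofMeasurable_apply B hB

lemma outcomeMeasure_univ (M : POVM Ω H) (φ : H) : M.outcomeMeasure φ univ = ‖φ‖ₑ ^ 2 := by
  rw [outcomeMeasure_apply M φ .univ, M.normalized, one_apply_eq_self,
    inner_self_eq_norm_sq_to_K]
  simp [← Complex.ofReal_pow, ENNReal.ofReal_pow]

instance (M : POVM Ω H) (φ : H) : IsFiniteMeasure (M.outcomeMeasure φ) :=
  ⟨by rw [outcomeMeasure_univ]; exact ENNReal.pow_lt_top enorm_lt_top⟩

lemma inner_toFun_self (M : POVM Ω H) {B : Set Ω} (hB : MeasurableSet B) (φ : H) :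
    ⟪φ, M.toFun B φ⟫ = ((M.outcomeMeasure φ).real B : ℂ) := by
  rw [Measure.real, M.outcomeMeasure_apply φ hB, ENNReal.toReal_ofReal (M.re_inner_nonneg hB φ)]
  exact ((M.isPositive B hB).isSymmetric.coe_re_inner_self_apply φ).symm

lemma toFun_eq_of_outcomeMeasure_eq {M N : POVM Ω H}
    (h : ∀ φ, M.outcomeMeasure φ = N.outcomeMeasure φ) {B : Set Ω} (hB : MeasurableSet B) :
    M.toFun B = N.toFun B := by
  refine ContinuousLinearMap.ext fun ψ => ext_inner_left ℂ fun φ => ?_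
  simp only [inner_right_map_polarization _ ψ φ, inner_toFun_self _ hB, h]

lemma norm_toFun_le_one (M : POVM Ω H) {B : Set Ω} (hB : MeasurableSet B) :
    ‖M.toFun B‖ ≤ 1 := by
  have hpos : 0 ≤ M.toFun B := (ContinuousLinearMap.nonneg_iff_isPositive _).2 (M.isPositive B hB)
  refine (CStarAlgebra.norm_le_one_iff_of_nonneg _ hpos).2 ?_
  refine (ContinuousLinearMap.isPositive_iff_complex _).2 fun φ => ?_
  have hinner : ⟪(1 - M.toFun B) φ, φ⟫ =
      ((M.outcomeMeasure φ).real univ - (M.outcomeMeasure φ).real B : ℝ) := by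
    rw [← inner_conj_symm, ← M.normalized, sub_apply, inner_sub_right,
      M.inner_toFun_self .univ, M.inner_toFun_self hB, ← Complex.ofReal_sub, Complex.conj_ofReal]
  rw [hinner]
  exact ⟨rfl, sub_nonneg.2 (measureReal_mono (subset_univ B))⟩

/-- The POVM whose effects are `T` and whose outcome in the state `φ` is distributed as `m φ`. -/
noncomputable def ofMeasure (T : Set Ω → H →L[ℂ] H) (m : H → Measure Ω)
    [∀ φ, IsFiniteMeasure (m φ)] (huniv : T univ = 1)
    (hT : ∀ B, MeasurableSet B → ∀ φ, ⟪φ, T B φ⟫ = (m φ).real B) : POVM Ω H where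
  toFun := T
  isPositive B hB := (ContinuousLinearMap.isPositive_iff_complex _).2 fun φ => by
    rw [← inner_conj_symm, hT B hB, Complex.conj_ofReal]
    exact ⟨rfl, measureReal_nonneg⟩
  normalized := huniv
  m_iUnion B hB hdisj := by
    refine hasSum_inner_map_of_hasSum_inner_map_self fun φ => ?_
    simp only [hT _ (hB _), hT _ (.iUnion hB), Complex.hasSum_ofReal, Measure.real]
    have hsum := measure_iUnion (μ := m φ) hdisj hB
    rw [hsum, ENNReal.tsum_toReal_eq fun k => measure_ne_top _ _]
    exact ENNReal.hasSum_toReal (hsum ▸ measure_ne_top _ _)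

variable {F : Type*} [MeasurableSpace F] [AddCommGroup F]

/-- `W i` shifts the outcomes of `M` by `τ i`. The shift by `τ i` is expressed through the preimage
under it, so this reads `(W i)* M(B) (W i) = M(B - τ i)`. -/
def IsCovariant (M : POVM F H) (W : ι → (H ≃ₗᵢ[ℂ] H)) (τ : ι → F) : Prop :=
  ∀ i (B : Set F), MeasurableSet B → ∀ φ ψ : H,
    ⟪W i φ, M.toFun B (W i ψ)⟫ = ⟪φ, M.toFun ((· + τ i) ⁻¹' B) ψ⟫

/-- `M = ρ ∗ E`: the outcome of `M` is that of `E` plus independent noise of law `ρ`. -/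
def IsConvolution (ρ : Measure F) (E M : POVM F H) : Prop :=
  ∀ B : Set F, MeasurableSet B → ∀ φ ψ : H,
    ⟪φ, M.toFun B ψ⟫ = ∫ q, ⟪φ, E.toFun {x | x + q ∈ B} ψ⟫ ∂ρ

variable [MeasurableAdd F] {M E : POVM F H} {W : ι → (H ≃ₗᵢ[ℂ] H)} {τ : ι → F}

lemma IsConvolution.isCovariant {ρ : Measure F} (hM : IsConvolution ρ E M)
    (hE : E.IsCovariant W τ) : M.IsCovariant W τ := by
  intro i B hB φ ψ
  rw [hM B hB, hM _ (measurable_add_const (τ i) hB)]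
  refine integral_congr_ae (.of_forall fun q => ?_)
  simpa only [preimage_ofPred_eq, mem_preimage, add_right_comm _ (τ i) q] using
    hE i {x | x + q ∈ B} (measurable_add_const q hB) φ ψ

lemma IsCovariant.outcomeMeasure_apply_map (hM : M.IsCovariant W τ) (i : ι) (φ : H) :
    M.outcomeMeasure (W i φ) = (M.outcomeMeasure φ).map (· + τ i) := by
  ext B hB
  have hadd : Measurable (· + τ i) := measurable_add_const (τ i)
  rw [Measure.map_apply hadd hB, outcomeMeasure_apply _ _ hB, outcomeMeasure_apply _ _ (hadd hB),
    hM i B hB]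

end POVM

section Convolution

open Filter Topology Measure
open scoped Pointwise

section Formula

variable {G : Type*} [MeasurableSpace G] [AddMonoid G] [MeasurableAdd₂ G]

lemma measurable_measure_preimage_add_const (ν : Measure G) [SFinite ν] {B : Set G}
    (hB : MeasurableSet B) : Measurable fun y => ν ((· + y) ⁻¹' B) :=
  measurable_measure_prodMk_right (measurable_add hB)

lemma measure_conv_apply (ν μ : Measure G) [SFinite ν] [SFinite μ] {B : Set G}
    (hB : MeasurableSet B) : (ν ∗ μ) B = ∫⁻ y, ν ((· + y) ⁻¹' B) ∂μ := by
  rw [conv, map_apply measurable_add hB, prod_apply_symm (measurable_add hB)]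
  rfl

end Formula

section Tightness

variable {G ι : Type*} [TopologicalSpace G] [T2Space G] [SecondCountableTopology G]
  [MeasurableSpace G] [BorelSpace G] {ν μ : ι → Measure G} [∀ i, IsProbabilityMeasure (ν i)]
  [∀ i, IsProbabilityMeasure (μ i)]

lemma isTightMeasureSet_range_conv [AddMonoid G] [ContinuousAdd G]
    (hν : IsTightMeasureSet (range ν)) (hμ : IsTightMeasureSet (range μ)) :
    IsTightMeasureSet (range fun i => ν i ∗ μ i) := by
  have hprod : IsTightMeasureSet (range fun i => (ν i).prod (μ i)) :=
    .prodMk (by simpa only [← range_comp, Function.comp_def, fst_prod] using hν)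
      (by simpa only [← range_comp, Function.comp_def, snd_prod] using hμ)
  have hmap := hprod.map continuous_add
  rw [← range_comp] at hmap
  exact hmap

lemma isTightMeasureSet_range_of_range_conv [AddCommGroup G] [IsTopologicalAddGroup G]
    (hν : IsTightMeasureSet (range ν)) (h : IsTightMeasureSet (range fun i => ν i ∗ μ i)) :
    IsTightMeasureSet (range μ) := by
  rw [isTightMeasureSet_iff_exists_isCompact_measure_compl_le] at hν h ⊢
  intro ε hε
  obtain ⟨C, hC, hCν⟩ := hν 2⁻¹ (by simp)
  obtain ⟨K, hK, hKconv⟩ := h (ε / 2) (ENNReal.half_pos hε.ne')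
  refine ⟨K - C, sub_eq_add_neg K C ▸ hK.add hC.neg, forall_mem_range.2 fun i => ?_⟩
  have half_le : 2⁻¹ ≤ ν i C := by
    rw [← ENNReal.one_sub_inv_two, tsub_le_iff_right,
      ← prob_add_prob_compl (μ := ν i) hC.measurableSet]
    gcongr
    exact hCν _ (mem_range_self i)
  have hsub : C ×ˢ (K - C)ᶜ ⊆ (fun p : G × G => p.1 + p.2) ⁻¹' Kᶜ := by
    rintro ⟨x, y⟩ ⟨hx, hy⟩ hxy
    exact hy ⟨x + y, hxy, x, hx, add_sub_cancel_left x y⟩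
  have hle : ν i C * μ i (K - C)ᶜ ≤ ε / 2 := calc
    ν i C * μ i (K - C)ᶜ = (ν i).prod (μ i) (C ×ˢ (K - C)ᶜ) := (prod_prod _ _).symm
    _ ≤ (ν i ∗ μ i) Kᶜ := by
      rw [conv, map_apply measurable_add hK.measurableSet.compl]
      exact measure_mono hsub
    _ ≤ ε / 2 := hKconv _ (mem_range_self i)
  calc μ i (K - C)ᶜ = 2 * (2⁻¹ * μ i (K - C)ᶜ) := by
        rw [← mul_assoc, ENNReal.mul_inv_cancel two_ne_zero ENNReal.ofNat_ne_top, one_mul]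
    _ ≤ 2 * (ε / 2) := by grw [half_le, hle]
    _ = ε := ENNReal.mul_div_cancel two_ne_zero ENNReal.ofNat_ne_top

end Tightness

section Prokhorov

variable {X : Type*} [MetricSpace X] [MeasurableSpace X] [BorelSpace X]

lemma isTightMeasureSet_range_of_tendsto [CompleteSpace X] [SecondCountableTopology X]
    {μ : ℕ → ProbabilityMeasure X} {ρ : ProbabilityMeasure X}
    (h : Tendsto μ atTop (𝓝 ρ)) :
    IsTightMeasureSet (range fun k => (μ k : Measure X)) := by
  have hcompact : IsCompact (closure (range μ)) :=
    h.isCompact_insert_range.closure_of_subset (subset_insert _ _)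
  have himage := isTightMeasureSet_of_isCompact_closure hcompact
  rwa [show {((σ : ProbabilityMeasure X) : Measure X) | σ ∈ range μ} = _ from
    (range_comp _ μ).symm] at himage

lemma exists_strictMono_tendsto_of_isTightMeasureSet [SecondCountableTopology X]
    {μ : ℕ → ProbabilityMeasure X}
    (h : IsTightMeasureSet (range fun k => (μ k : Measure X))) :
    ∃ (ρ : ProbabilityMeasure X) (u : ℕ → ℕ), StrictMono u ∧ Tendsto (μ ∘ u) atTop (𝓝 ρ) := by
  have hcompact := isCompact_closure_of_isTightMeasureSet (S := range μ) <| by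
    simpa only [mem_range, exists_exists_eq_and] using! h
  obtain ⟨ρ, -, u, hu, hρ⟩ := hcompact.tendsto_subseq fun k => subset_closure (mem_range_self k)
  exact ⟨ρ, u, hu, hρ⟩

end Prokhorov

lemma tendsto_diracProba_of_forall_eventually_ae_mem {X ι : Type*} [TopologicalSpace X]
    [MeasurableSpace X] [OpensMeasurableSpace X] {l : Filter ι} [l.IsCountablyGenerated]
    {β : ι → ProbabilityMeasure X} {x : X}
    (h : ∀ s ∈ 𝓝 x, ∀ᶠ i in l, ∀ᵐ z ∂(β i : Measure X), z ∈ s) :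
    Tendsto β l (𝓝 (diracProba x)) := by
  refine tendsto_of_forall_isOpen_le_liminf' fun G hG => ?_
  by_cases hx : x ∈ G
  · refine le_liminf_of_le (h := ?_)
    filter_upwards [h G (hG.mem_nhds hx)] with i hi
    rw [diracProba_toMeasure_apply_of_mem hx, (prob_compl_eq_zero_iff hG.measurableSet).1 hi]
  · simp [diracProba_toMeasure_apply' x hG.measurableSet, hx]

variable {F : Type*} [NormedAddCommGroup F] [NormedSpace ℝ F] [MeasurableSpace F] [BorelSpace F]

lemma tendsto_charFunDual {ι : Type*} {l : Filter ι} {μ : ι → ProbabilityMeasure F}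
    {ρ : ProbabilityMeasure F} (h : Tendsto μ l (𝓝 ρ)) (L : StrongDual ℝ F) :
    Tendsto (fun i => charFunDual (μ i : Measure F) L) l (𝓝 (charFunDual (ρ : Measure F) L)) :=
  (ProbabilityMeasure.tendsto_iff_forall_integral_rclike_tendsto ℂ).1 h
    (BoundedContinuousFunction.probCharDual L)

variable [CompleteSpace F] [SecondCountableTopology F]

lemma eq_conv_of_tendsto_diracProba {ι : Type*} {l : Filter ι} [l.NeBot]
    {ν μ : ι → ProbabilityMeasure F} {ρ : ProbabilityMeasure F}
    (hν : Tendsto ν l (𝓝 (diracProba 0))) (hμ : Tendsto μ l (𝓝 ρ)) {ν' μ' : Measure F}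
    [IsFiniteMeasure ν'] [IsFiniteMeasure μ']
    (h : ∀ i, ν' ∗ (μ i : Measure F) = (ν i : Measure F) ∗ μ') : μ' = ν' ∗ (ρ : Measure F) := by
  refine ext_of_charFunDual (funext fun L => ?_)
  have hleft := (tendsto_charFunDual hμ L).const_mul (charFunDual ν' L)
  have hright := (tendsto_charFunDual hν L).mul_const (charFunDual μ' L)
  have hdirac : charFunDual (diracProba (0 : F) : Measure F) L = 1 := by
    simp [diracProba, charFunDual_dirac]
  rw [hdirac, one_mul] at hright
  rw [charFunDual_conv]
  refine tendsto_nhds_unique (hright.congr fun i => ?_) hleft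
  rw [← charFunDual_conv, ← charFunDual_conv, h]

lemma exists_forall_eq_conv {ν μ : ℕ → ProbabilityMeasure F}
    (hν : Tendsto ν atTop (𝓝 (diracProba 0)))
    (h : ∀ k, (ν 0 : Measure F) ∗ (μ k : Measure F) = (ν k : Measure F) ∗ (μ 0 : Measure F)) :
    ∃ ρ : ProbabilityMeasure F, ∀ (ν' μ' : Measure F) [IsFiniteMeasure ν'] [IsFiniteMeasure μ'],
      (∀ k, ν' ∗ (μ k : Measure F) = (ν k : Measure F) ∗ μ') → μ' = ν' ∗ (ρ : Measure F) := by
  have tight_const (σ : ProbabilityMeasure F) :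
      IsTightMeasureSet (range fun _ : ℕ => (σ : Measure F)) := by
    simpa only [range_const] using isTightMeasureSet_singleton
  have tight : IsTightMeasureSet (range fun k => (μ k : Measure F)) := by
    refine isTightMeasureSet_range_of_range_conv (tight_const (ν 0)) ?_
    simp only [h]
    exact isTightMeasureSet_range_conv (isTightMeasureSet_range_of_tendsto hν) (tight_const (μ 0))
  obtain ⟨ρ, u, hu, hρ⟩ := exists_strictMono_tendsto_of_isTightMeasureSet tight
  exact ⟨ρ, fun ν' μ' _ _ h' =>
    eq_conv_of_tendsto_diracProba (hν.comp hu.tendsto_atTop) hρ fun k => h' (u k)⟩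

end Convolution

section States

open Filter Topology

variable {X : Type*} [MeasurableSpace X] {μ : Measure X}

lemma bornMeasure_eq_map_add_right [AddGroup X] [MeasurableAdd X] [μ.IsAddRightInvariant]
    {φ ψ : Lp ℂ 2 μ} {x : X} (h : ψ =ᵐ[μ] fun z => φ (z - x)) :
    bornMeasure ψ = (bornMeasure φ).map (· + x) := by
  ext B hB
  have hadd : Measurable (· + x) := measurable_add_const x
  have hsub : Measurable fun z => ‖φ (z - x)‖ₑ ^ 2 := by
    simpa only [sub_eq_add_neg, Function.comp_def] using
      (measurable_enorm_sq φ).comp (measurable_add_const (-x))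
  calc bornMeasure ψ B = ∫⁻ z in B, ‖φ (z - x)‖ₑ ^ 2 ∂μ := by
        rw [bornMeasure, withDensity_apply _ hB]
        refine lintegral_congr_ae ?_
        filter_upwards [ae_restrict_of_ae h] with z hz
        rw [hz]
    _ = ∫⁻ z in (· + x) ⁻¹' B, ‖φ z‖ₑ ^ 2 ∂μ := by
        rw [← (measurePreserving_add_right μ x).setLIntegral_comp_preimage hB hsub]
        simp only [add_sub_cancel_right]
    _ = (bornMeasure φ).map (· + x) B := by
        rw [Measure.map_apply hadd hB, bornMeasure, withDensity_apply _ (hadd hB)]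

variable [TopologicalSpace X] [OpensMeasurableSpace X] [μ.IsOpenPosMeasure]
  [IsLocallyFiniteMeasure μ]

lemma exists_norm_eq_one_ae_bornMeasure_mem {x : X} {s : Set X} (hs : s ∈ 𝓝 x) :
    ∃ φ : Lp ℂ 2 μ, ‖φ‖ = 1 ∧ ∀ᵐ z ∂bornMeasure φ, z ∈ s := by
  obtain ⟨t, hxt, ht, htop⟩ := μ.exists_isOpen_measure_lt_top x
  obtain ⟨u, hu, hopen, hxu⟩ := mem_nhds_iff.1 (inter_mem hs (ht.mem_nhds hxt))
  have hfin : μ u ≠ ⊤ := ((measure_mono (hu.trans inter_subset_right)).trans_lt htop).ne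
  have hpos : 0 < μ.real u ^ (1 / (2 : ENNReal).toReal) :=
    Real.rpow_pos_of_pos (ENNReal.toReal_pos (hopen.measure_ne_zero μ ⟨x, hxu⟩) hfin) _
  let c : ℂ := ((μ.real u ^ (1 / (2 : ENNReal).toReal))⁻¹ : ℝ)
  refine ⟨indicatorConstLp 2 hopen.measurableSet hfin c, ?_, ?_⟩
  · rw [norm_indicatorConstLp two_ne_zero ENNReal.ofNat_ne_top, Complex.norm_real,
      Real.norm_of_nonneg (inv_pos.2 hpos).le, inv_mul_cancel₀ hpos.ne']
  · rw [bornMeasure, ae_withDensity_iff (measurable_enorm_sq _)]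
    filter_upwards [indicatorConstLp_coeFn (p := 2) (hs := hopen.measurableSet) (hμs := hfin)
      (c := c)] with z hz hne
    by_contra hzs
    rw [hz, indicator_of_notMem fun hzu => hzs (hu hzu).1] at hne
    simp at hne

lemma exists_seq_norm_eq_one_eventually_ae_bornMeasure_mem [FirstCountableTopology X] (x : X) :
    ∃ e : ℕ → Lp ℂ 2 μ, (∀ k, ‖e k‖ = 1) ∧
      ∀ s ∈ 𝓝 x, ∀ᶠ k in atTop, ∀ᵐ z ∂bornMeasure (e k), z ∈ s := by
  obtain ⟨b, hb⟩ := (𝓝 x).exists_antitone_basis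
  choose e hnorm hmem using fun k =>
    exists_norm_eq_one_ae_bornMeasure_mem (μ := μ) (hb.1.mem_of_mem (i := k) trivial)
  refine ⟨e, hnorm, fun s hs => ?_⟩
  obtain ⟨k, -, hk⟩ := hb.1.mem_iff.1 hs
  filter_upwards [eventually_ge_atTop k] with m hm
  filter_upwards [hmem m] with z hz
  exact hk (hb.2 hm hz)

end States

namespace POVM

variable {X F : Type*} [MeasurableSpace X] {μ : Measure X} [MeasurableSpace F] [AddCommGroup F]

lemma IsCovariant.exists_measurable_outcomeMeasure_eq_lintegral [NormedAddCommGroup X]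
    [NormedSpace ℝ X] [CompleteSpace X] [SecondCountableTopology X] [BorelSpace X] [SigmaFinite μ]
    {ι : Type*} {V : ι → (Lp ℂ 2 μ ≃ₗᵢ[ℂ] Lp ℂ 2 μ)} {ℓ : ι → StrongDual ℝ X}
    (hℓ : Function.Surjective ℓ)
    (hV : ∀ p (φ : Lp ℂ 2 μ), V p φ =ᵐ[μ] fun z => Complex.exp (ℓ p z * Complex.I) * φ z)
    {M : POVM F (Lp ℂ 2 μ)} (hM : M.IsCovariant V 0) {B : Set F} (hB : MeasurableSet B) :
    ∃ m : X → ENNReal, Measurable m ∧ ∀ φ, M.outcomeMeasure φ B = ∫⁻ z, m z ∂bornMeasure φ := by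
  obtain ⟨a, ham, ha⟩ := exists_ae_eq_mul_of_inner_ae_eq <|
    inner_ae_eq_inner_adjoint_of_boost_invariant (A := M.toFun B) hℓ hV fun p φ ψ => by
      simpa only [Pi.zero_apply, add_zero, preimage_id'] using hM p B hB φ ψ
  have hnonneg := re_nonneg_of_isPositive_of_ae_eq_mul (M.isPositive B hB) ha
  refine ⟨fun z => ENNReal.ofReal (a z).re, by fun_prop, fun φ => ?_⟩
  rw [M.outcomeMeasure_apply φ hB, ofReal_re_inner_eq_lintegral_bornMeasure ham hnonneg (ha φ)]

lemma IsCovariant.map_bornMeasure_conv_outcomeMeasure_comm [AddCommGroup X] [MeasurableAdd₂ X]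
    [μ.IsAddRightInvariant] [MeasurableAdd₂ F] {U : X → (Lp ℂ 2 μ ≃ₗᵢ[ℂ] Lp ℂ 2 μ)}
    (hU : ∀ x (φ : Lp ℂ 2 μ), U x φ =ᵐ[μ] fun z => φ (z - x)) {κ : X → F} (hκ : Measurable κ)
    {M : POVM F (Lp ℂ 2 μ)} (hM : M.IsCovariant U κ)
    (hdensity : ∀ B, MeasurableSet B → ∃ m : X → ENNReal, Measurable m ∧
      ∀ φ, M.outcomeMeasure φ B = ∫⁻ z, m z ∂bornMeasure φ) (φ ψ : Lp ℂ 2 μ) :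
    (bornMeasure φ).map κ ∗ M.outcomeMeasure ψ = (bornMeasure ψ).map κ ∗ M.outcomeMeasure φ := by
  ext B hB
  obtain ⟨m, hm, hMm⟩ := hdensity B hB
  have conv_eq_lintegral (φ ψ : Lp ℂ 2 μ) : ((bornMeasure φ).map κ ∗ M.outcomeMeasure ψ) B =
      ∫⁻ z, m z ∂(bornMeasure φ ∗ bornMeasure ψ) := calc
    _ = ∫⁻ z, M.outcomeMeasure ψ ((· + κ z) ⁻¹' B) ∂bornMeasure φ := by
      rw [Measure.conv_comm, measure_conv_apply _ _ hB,
        lintegral_map (measurable_measure_preimage_add_const _ hB) hκ]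
    _ = ∫⁻ z, ∫⁻ w, m (z + w) ∂bornMeasure ψ ∂bornMeasure φ := by
      refine lintegral_congr fun z => ?_
      rw [← Measure.map_apply (measurable_add_const _) hB, ← hM.outcomeMeasure_apply_map, hMm,
        bornMeasure_eq_map_add_right (hU z ψ), lintegral_map hm (measurable_add_const z)]
      simp only [add_comm z]
    _ = ∫⁻ z, m z ∂(bornMeasure φ ∗ bornMeasure ψ) := (Measure.lintegral_conv hm).symm
  rw [conv_eq_lintegral, conv_eq_lintegral, Measure.conv_comm]

end POVM

namespace POVM

variable {H : Type*} [NormedAddCommGroup H] [InnerProductSpace ℂ H] [CompleteSpace H]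

variable {F : Type*} [MeasurableSpace F] [AddCommGroup F] [MeasurableAdd₂ F]

lemma measurable_inner_toFun_preimage_add_const (E : POVM F H) {B : Set F} (hB : MeasurableSet B)
    (φ ψ : H) : Measurable fun q => ⟪φ, E.toFun {x | x + q ∈ B} ψ⟫ := by
  have hshift (q : F) : MeasurableSet {x | x + q ∈ B} := measurable_add_const q hB
  refine measurable_inner_map_of_measurable_inner_map_self (fun φ => ?_) φ ψ
  simp only [E.inner_toFun_self (hshift _)]
  exact Complex.measurable_ofReal.comp (measurable_measure_preimage_add_const _ hB).ennreal_toReal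

lemma integral_inner_toFun_self_eq_conv (E : POVM F H) (ρ : Measure F) [SFinite ρ] {B : Set F}
    (hB : MeasurableSet B) (φ : H) :
    ∫ q, ⟪φ, E.toFun {x | x + q ∈ B} φ⟫ ∂ρ = ((E.outcomeMeasure φ ∗ ρ).real B : ℂ) := by
  have hshift (q : F) : MeasurableSet {x | x + q ∈ B} := measurable_add_const q hB
  have hmeas := measurable_measure_preimage_add_const (E.outcomeMeasure φ) hB
  simp only [E.inner_toFun_self (hshift _)]
  rw [integral_complex_ofReal, Measure.real, measure_conv_apply _ _ hB,
    ← integral_toReal hmeas.aemeasurable (.of_forall fun q => measure_lt_top _ _)]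
  rfl

lemma IsConvolution.outcomeMeasure_eq {ρ : Measure F} [IsFiniteMeasure ρ] {E M : POVM F H}
    (h : IsConvolution ρ E M) (φ : H) : M.outcomeMeasure φ = E.outcomeMeasure φ ∗ ρ := by
  ext B hB
  have hreal := h B hB φ φ
  rw [M.inner_toFun_self hB, integral_inner_toFun_self_eq_conv E ρ hB] at hreal
  exact (measureReal_eq_measureReal_iff).1 (Complex.ofReal_injective hreal)

lemma exists_isConvolution (E : POVM F H) (ρ : Measure F) [IsProbabilityMeasure ρ] :
    ∃ N, IsConvolution ρ E N := by
  have exists_effect (B : Set F) (hB : MeasurableSet B) :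
      ∃ T : H →L[ℂ] H, ∀ φ ψ, ⟪φ, T ψ⟫ = ∫ q, ⟪φ, E.toFun {x | x + q ∈ B} ψ⟫ ∂ρ :=
    exists_forall_inner_eq_integral (E.measurable_inner_toFun_preimage_add_const hB)
      fun q => E.norm_toFun_le_one (measurable_add_const q hB)
  choose! T hT using exists_effect
  have huniv : T univ = 1 := by
    refine ContinuousLinearMap.ext fun ψ => ext_inner_left ℂ fun φ => ?_
    simp [hT univ .univ, E.normalized]
  exact ⟨ofMeasure T (fun φ => E.outcomeMeasure φ ∗ ρ) huniv fun B hB φ => by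
    rw [hT B hB, integral_inner_toFun_self_eq_conv E ρ hB], hT⟩

end POVM

namespace POVM

variable {X F : Type*} [MeasurableSpace X] {μ : Measure X} [MeasurableSpace F]

/-- `E` is the projection valued measure of the observable `κ(position)`: it multiplies by the
indicator function of `κ ⁻¹' B`. -/
def IsPositionFunction (E : POVM F (Lp ℂ 2 μ)) (κ : X → F) : Prop :=
  ∀ B : Set F, MeasurableSet B → ∀ φ : Lp ℂ 2 μ,
    E.toFun B φ =ᵐ[μ] fun z => if κ z ∈ B then φ z else 0

namespace IsPositionFunction

variable {E : POVM F (Lp ℂ 2 μ)} {κ : X → F}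

lemma outcomeMeasure_eq_map_bornMeasure (hE : E.IsPositionFunction κ) (hκ : Measurable κ)
    (φ : Lp ℂ 2 μ) : E.outcomeMeasure φ = (bornMeasure φ).map κ := by
  ext B hB
  have hmul : E.toFun B φ =ᵐ[μ] fun z => (κ ⁻¹' B).indicator 1 z * φ z := by
    filter_upwards [hE B hB φ] with z hz
    simp [hz, indicator_apply]
  rw [E.outcomeMeasure_apply φ hB, Measure.map_apply hκ hB,
    ofReal_re_inner_eq_lintegral_bornMeasure (measurable_one.indicator (hκ hB)) _ hmul,
    ← lintegral_indicator_one (hκ hB)]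
  · refine lintegral_congr fun z => ?_
    by_cases hz : z ∈ κ ⁻¹' B <;> simp [hz]
  · refine .of_forall fun z => ?_
    by_cases hz : z ∈ κ ⁻¹' B <;> simp [hz]

lemma inner_toFun (hE : E.IsPositionFunction κ) (hκ : Measurable κ) {B : Set F}
    (hB : MeasurableSet B) (φ ψ : Lp ℂ 2 μ) :
    ⟪φ, E.toFun B ψ⟫ = ∫ z in κ ⁻¹' B, ⟪φ z, ψ z⟫ ∂μ := by
  rw [L2.inner_def, ← integral_indicator (hκ hB)]
  refine integral_congr_ae ?_
  filter_upwards [hE B hB ψ] with z hz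
  by_cases hzB : κ z ∈ B <;> simp [hz, hzB]

variable [AddCommGroup F] [MeasurableAdd F]

lemma isCovariant_translation [AddGroup X] [MeasurableAdd X] [μ.IsAddRightInvariant]
    {U : X → (Lp ℂ 2 μ ≃ₗᵢ[ℂ] Lp ℂ 2 μ)}
    (hU : ∀ x (φ : Lp ℂ 2 μ), U x φ =ᵐ[μ] fun z => φ (z - x)) (hE : E.IsPositionFunction κ)
    (hκ : Measurable κ) (hadd : ∀ x y, κ (x + y) = κ x + κ y) : E.IsCovariant U κ := by
  intro x B hB φ ψ
  rw [hE.inner_toFun hκ hB, hE.inner_toFun hκ (measurable_add_const _ hB)]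
  calc ∫ z in κ ⁻¹' B, ⟪U x φ z, U x ψ z⟫ ∂μ
      = ∫ z in κ ⁻¹' B, ⟪φ (z - x), ψ (z - x)⟫ ∂μ := by
        refine integral_congr_ae (ae_restrict_of_ae ?_)
        filter_upwards [hU x φ, hU x ψ] with z hφ hψ
        rw [hφ, hψ]
    _ = ∫ z in (· + x) ⁻¹' (κ ⁻¹' B), ⟪φ z, ψ z⟫ ∂μ := by
        rw [← (measurePreserving_add_right μ x).setIntegral_preimage_emb
          (measurableEmbedding_addRight x)]
        simp only [add_sub_cancel_right]
    _ = ∫ z in κ ⁻¹' ((· + κ x) ⁻¹' B), ⟪φ z, ψ z⟫ ∂μ := by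
        simp only [preimage_preimage, hadd]

lemma isCovariant_phase {ι : Type*} {V : ι → (Lp ℂ 2 μ ≃ₗᵢ[ℂ] Lp ℂ 2 μ)} {θ : ι → X → ℝ}
    (hV : ∀ p (φ : Lp ℂ 2 μ), V p φ =ᵐ[μ] fun z => Complex.exp (θ p z * Complex.I) * φ z)
    (hE : E.IsPositionFunction κ) (hκ : Measurable κ) : E.IsCovariant V 0 := by
  intro p B hB φ ψ
  rw [hE.inner_toFun hκ hB, hE.inner_toFun hκ (measurable_add_const _ hB)]
  simp only [Pi.zero_apply, add_zero, preimage_id']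
  refine integral_congr_ae (ae_restrict_of_ae ?_)
  filter_upwards [hV p φ, hV p ψ] with z hφ hψ
  rw [hφ, hψ, RCLike.inner_apply, RCLike.inner_apply, map_mul, mul_mul_mul_comm, RCLike.mul_conj,
    Complex.norm_exp_ofReal_mul_I]
  simp

end IsPositionFunction

end POVM

namespace POVM

open Filter Topology

lemma exists_forall_outcomeMeasure_eq_conv {X F : Type*} [TopologicalSpace X]
    [FirstCountableTopology X] [MeasurableSpace X] [BorelSpace X] {μ : Measure X}
    [μ.IsOpenPosMeasure] [IsLocallyFiniteMeasure μ] [NormedAddCommGroup F] [NormedSpace ℝ F]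
    [CompleteSpace F] [SecondCountableTopology F] [MeasurableSpace F] [BorelSpace F]
    {κ : X → F} (hκ : Continuous κ) {x : X} (hx : κ x = 0) {M : POVM F (Lp ℂ 2 μ)}
    (h : ∀ φ ψ, (bornMeasure φ).map κ ∗ M.outcomeMeasure ψ =
      (bornMeasure ψ).map κ ∗ M.outcomeMeasure φ) :
    ∃ ρ : ProbabilityMeasure F,
      ∀ φ, M.outcomeMeasure φ = (bornMeasure φ).map κ ∗ (ρ : Measure F) := by
  obtain ⟨e, hnorm, hmem⟩ := exists_seq_norm_eq_one_eventually_ae_bornMeasure_mem (μ := μ) x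
  have henorm (k : ℕ) : ‖e k‖ₑ ^ 2 = 1 := by
    rw [← ofReal_norm, hnorm, ENNReal.ofReal_one, one_pow]
  let β (k : ℕ) : ProbabilityMeasure X := ⟨bornMeasure (e k), ⟨by rw [bornMeasure_univ, henorm]⟩⟩
  let μM (k : ℕ) : ProbabilityMeasure F :=
    ⟨M.outcomeMeasure (e k), ⟨by rw [M.outcomeMeasure_univ, henorm]⟩⟩
  have hβ : Tendsto β atTop (𝓝 (diracProba x)) :=
    tendsto_diracProba_of_forall_eventually_ae_mem hmem
  have hdirac : (diracProba x).map hκ.aemeasurable = diracProba 0 :=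
    Subtype.ext <| (Measure.map_dirac' hκ.measurable x).trans (congrArg _ hx)
  have hν := ProbabilityMeasure.tendsto_map_of_tendsto_of_continuous _ _ hβ hκ
  rw [hdirac] at hν
  obtain ⟨ρ, hρ⟩ := exists_forall_eq_conv (μ := μM) hν fun k => h (e 0) (e k)
  exact ⟨ρ, fun φ => hρ _ _ fun k => h φ (e k)⟩

end POVM

theorem stmt17_general {X F ι : Type*} [NormedAddCommGroup X] [NormedSpace ℝ X]
    [FiniteDimensional ℝ X] [MeasurableSpace X] [BorelSpace X] {μ : Measure X}
    [μ.IsAddHaarMeasure] [NormedAddCommGroup F] [NormedSpace ℝ F] [CompleteSpace F]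
    [SecondCountableTopology F] [MeasurableSpace F] [BorelSpace F] (κ : X →L[ℝ] F)
    {U : X → (Lp ℂ 2 μ ≃ₗᵢ[ℂ] Lp ℂ 2 μ)}
    (hU : ∀ x (φ : Lp ℂ 2 μ), U x φ =ᵐ[μ] fun z => φ (z - x))
    {V : ι → (Lp ℂ 2 μ ≃ₗᵢ[ℂ] Lp ℂ 2 μ)} {ℓ : ι → StrongDual ℝ X} (hℓ : Function.Surjective ℓ)
    (hV : ∀ p (φ : Lp ℂ 2 μ), V p φ =ᵐ[μ] fun z => Complex.exp (ℓ p z * Complex.I) * φ z)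
    {E : POVM F (Lp ℂ 2 μ)} (hE : E.IsPositionFunction κ) :
    (∀ M : POVM F (Lp ℂ 2 μ), M.IsCovariant U κ → M.IsCovariant V 0 →
      ∃ ρ : Measure F, IsProbabilityMeasure ρ ∧ POVM.IsConvolution ρ E M) ∧
    (∀ ρ : Measure F, IsProbabilityMeasure ρ → ∃ N, POVM.IsConvolution ρ E N) ∧
    (∀ ρ : Measure F, IsProbabilityMeasure ρ → ∀ N, POVM.IsConvolution ρ E N →
      N.IsCovariant U κ ∧ N.IsCovariant V 0) := by
  have := FiniteDimensional.proper_real X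
  have hκ : Measurable κ := κ.continuous.measurable
  refine ⟨fun M hMU hMV => ?_, fun ρ _ => E.exists_isConvolution ρ, fun ρ _ N hN =>
    ⟨hN.isCovariant (hE.isCovariant_translation hU hκ (map_add κ)),
      hN.isCovariant (hE.isCovariant_phase hV hκ)⟩⟩
  have hcomm := hMU.map_bornMeasure_conv_outcomeMeasure_comm hU hκ fun B hB =>
    hMV.exists_measurable_outcomeMeasure_eq_lintegral hℓ hV hB
  obtain ⟨ρ, hρ⟩ := POVM.exists_forall_outcomeMeasure_eq_conv κ.continuous (map_zero κ) hcomm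
  obtain ⟨N, hN⟩ := E.exists_isConvolution (ρ : Measure F)
  have hMN (φ : Lp ℂ 2 μ) : M.outcomeMeasure φ = N.outcomeMeasure φ := by
    rw [hN.outcomeMeasure_eq, hE.outcomeMeasure_eq_map_bornMeasure hκ, hρ]
  exact ⟨ρ, inferInstance, fun B hB => POVM.toFun_eq_of_outcomeMeasure_eq hMN hB ▸ hN B hB⟩

section Difference

variable {n : ℕ}

instance : (volume : Measure ((Fin n → ℝ) × (Fin n → ℝ))).IsAddHaarMeasure :=
  Measure.prod.instIsAddHaarMeasure _ _

/-- The classical observable `(x, y) ↦ y - x`. -/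
noncomputable def positionDifference : ((Fin n → ℝ) × (Fin n → ℝ)) →L[ℝ] (Fin n → ℝ) :=
  .snd ℝ _ _ - .fst ℝ _ _

/-- The phase `(x, y) ↦ (p₁|x) + (p₂|y)` of the boost by the momenta `p = (p₁, p₂)`. -/
noncomputable def boostPhase :
    ((Fin n → ℝ) × (Fin n → ℝ)) ≃ₗ[ℝ] StrongDual ℝ ((Fin n → ℝ) × (Fin n → ℝ)) :=
  let pairing := (dotProductEquiv ℝ (Fin n)).trans LinearMap.toContinuousLinearMap
  (pairing.prodCongr pairing).trans (ContinuousLinearMap.coprodEquiv (S := ℝ))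

lemma boostPhase_apply (p z : (Fin n → ℝ) × (Fin n → ℝ)) :
    boostPhase p z = ∑ k, p.1 k * z.1 k + ∑ k, p.2 k * z.2 k :=
  rfl

lemma diffCovariant_iff {U : (Fin n → ℝ) → (Fin n → ℝ) → (L2R2n n ≃ₗᵢ[ℂ] L2R2n n)}
    {M : POVM (Fin n → ℝ) (L2R2n n)} :
    DiffCovariant n U M ↔ M.IsCovariant (fun x => U x.1 x.2) positionDifference := by
  let shift (x : (Fin n → ℝ) × (Fin n → ℝ)) := MeasurableEquiv.addRight (positionDifference x)
  have hshift (u₁ u₂ : Fin n → ℝ) : (fun y => y + u₂ - u₁) = shift (u₁, u₂) :=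
    funext fun y => add_sub_assoc y u₂ u₁
  simp only [DiffCovariant, hshift]
  constructor
  · intro h x B hB φ ψ
    simpa only [(shift x).image_preimage] using!
      h x.1 x.2 (shift x ⁻¹' B) ((shift x).measurable hB) φ ψ
  · intro h u₁ u₂ B hB φ ψ
    have := h (u₁, u₂) _ ((shift (u₁, u₂)).measurableSet_image.2 hB) φ ψ
    rwa [show (· + positionDifference (u₁, u₂)) = shift (u₁, u₂) from rfl,
      preimage_image_eq _ (shift (u₁, u₂)).injective] at this

lemma indepBoostInvariant_iff {V : (Fin n → ℝ) → (Fin n → ℝ) → (L2R2n n ≃ₗᵢ[ℂ] L2R2n n)}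
    {M : POVM (Fin n → ℝ) (L2R2n n)} :
    IndepBoostInvariant n V M ↔ M.IsCovariant (fun p : _ × _ => V p.1 p.2) 0 := by
  simp only [POVM.IsCovariant, Prod.forall, Pi.zero_apply, add_zero, preimage_id']
  rfl

end Difference

theorem stmt17 (n : ℕ) (hn : 1 ≤ n)
    (U : (Fin n → ℝ) → (Fin n → ℝ) → (L2R2n n ≃ₗᵢ[ℂ] L2R2n n))
    (hU : ∀ u₁ u₂ : Fin n → ℝ, ∀ φ : L2R2n n,
      (U u₁ u₂ φ : ((Fin n → ℝ) × (Fin n → ℝ)) → ℂ) =ᵐ[volume]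
        fun z => φ (z.1 - u₁, z.2 - u₂))
    (V : (Fin n → ℝ) → (Fin n → ℝ) → (L2R2n n ≃ₗᵢ[ℂ] L2R2n n))
    (hV : ∀ p₁ p₂ : Fin n → ℝ, ∀ φ : L2R2n n,
      (V p₁ p₂ φ : ((Fin n → ℝ) × (Fin n → ℝ)) → ℂ) =ᵐ[volume]
        fun z => Complex.exp (Complex.I * ((∑ k, p₁ k * z.1 k) + ∑ k, p₂ k * z.2 k)) * φ z)
    -- the canonical position difference observable `E_κ`
    (E : POVM (Fin n → ℝ) (L2R2n n))
    (hE : ∀ B : Set (Fin n → ℝ), MeasurableSet B → ∀ φ : L2R2n n,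
      (E.toFun B φ : ((Fin n → ℝ) × (Fin n → ℝ)) → ℂ) =ᵐ[volume]
        fun z => if z.2 - z.1 ∈ B then φ z else 0) :
    -- every covariant, boost-invariant POVM is a convolution `ρ ∗ E_κ` ...
    (∀ M : POVM (Fin n → ℝ) (L2R2n n), DiffCovariant n U M → IndepBoostInvariant n V M →
      ∃ ρ : Measure (Fin n → ℝ), IsProbabilityMeasure ρ ∧
        ∀ B : Set (Fin n → ℝ), MeasurableSet B → ∀ φ ψ : L2R2n n,
          ⟪φ, M.toFun B ψ⟫ = ∫ q, ⟪φ, E.toFun {x | x + q ∈ B} ψ⟫ ∂ρ) ∧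
    -- ... and conversely, for every probability measure `ρ` the convolution `ρ ∗ E_κ`
    -- exists as a POVM and is covariant and boost invariant
    (∀ ρ : Measure (Fin n → ℝ), IsProbabilityMeasure ρ →
      ∃ N : POVM (Fin n → ℝ) (L2R2n n),
        ∀ B : Set (Fin n → ℝ), MeasurableSet B → ∀ φ ψ : L2R2n n,
          ⟪φ, N.toFun B ψ⟫ = ∫ q, ⟪φ, E.toFun {x | x + q ∈ B} ψ⟫ ∂ρ) ∧
    (∀ ρ : Measure (Fin n → ℝ), IsProbabilityMeasure ρ →
      ∀ N : POVM (Fin n → ℝ) (L2R2n n),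
        (∀ B : Set (Fin n → ℝ), MeasurableSet B → ∀ φ ψ : L2R2n n,
          ⟪φ, N.toFun B ψ⟫ = ∫ q, ⟪φ, E.toFun {x | x + q ∈ B} ψ⟫ ∂ρ) →
        DiffCovariant n U N ∧ IndepBoostInvariant n V N) := by
  simp only [diffCovariant_iff, indepBoostInvariant_iff]
  exact stmt17_general positionDifference (fun u => hU u.1 u.2) boostPhase.surjective
    (fun p φ => by simpa [boostPhase_apply, mul_comm] using hV p.1 p.2 φ) hE
end

section
/- The linear span of the set of functions {t ↦ ∫_ℝ e^{itx} xⁿ e^{−|x|} dx : n ∈ ℕ}, i.e. the span of the Fourier transforms of the functions x ↦ xⁿ e^{−|x|} (n ∈ ℕ), is dense in L¹(ℝ; ℂ). -/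
/-!
For `|Re ζ| < 1` let `F ζ ∈ L¹(ℝ; ℂ)` be the Fourier transform of `x ↦ e^{ζx - |x|}`, i.e. the
restriction to the vertical line through `ζ` of the two-sided Laplace transform
`s ↦ (1 - s)⁻¹ + (1 + s)⁻¹` of `e^{-|x|}`. The map `F` is holomorphic on the strip, and the given
functions are its derivatives at `0`. By Taylor expansion and the identity theorem in the quotient,
their closed span `S` contains every `F ζ`. As `F (ζ + is)` is a translate of `F ζ`, the closed span
`T ⊆ S` of all `F ζ` is invariant under translation, hence under convolution with `L¹`.

With `P_γ` the Cauchy density of scale `γ`, we have `F σ + F (-σ) = 2π (P_{1-σ} + P_{1+σ})` for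
`0 ≤ σ < 1`. Taking `σ = 0` gives `P_1 ∈ T`, hence `P_{1+σ} = P_σ ⋆ P_1 ∈ T`, and therefore
`P_{1-σ} ∈ T`. As `σ → 1` these densities form an approximate identity, so `T = L¹`.
-/

open MeasureTheory

/-- The Fourier transform of `x ↦ xⁿ e^{−|x|}`, i.e. `t ↦ ∫ e^{itx} xⁿ e^{−|x|} dx`. -/
noncomputable def laguerreFourier (n : ℕ) (t : ℝ) : ℂ :=
  ∫ x : ℝ, Complex.exp (Complex.I * t * x) * (x : ℂ) ^ n * Complex.exp (-(|x| : ℝ))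

section ClosedSubmodule

theorem mem_topologicalClosure_span_iteratedDeriv {E : Type*} [NormedAddCommGroup E]
    [NormedSpace ℂ E] [CompleteSpace E] {f : ℂ → E} {U : Set ℂ}
    (hf : DifferentiableOn ℂ f U) (hU : IsOpen U) (hUc : IsPreconnected U) {z₀ z : ℂ}
    (hz₀ : z₀ ∈ U) (hz : z ∈ U) :
    f z ∈ (Submodule.span ℂ (Set.range fun n ↦ iteratedDeriv n f z₀)).topologicalClosure := by
  set S := (Submodule.span ℂ (Set.range fun n ↦ iteratedDeriv n f z₀)).topologicalClosure
  have hSc : IsClosed (S : Set E) := Submodule.isClosed_topologicalClosure _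
  obtain ⟨r, hr, hrU⟩ := Metric.isOpen_iff.1 hU z₀ hz₀
  have hball : ∀ w ∈ Metric.ball z₀ r, f w ∈ S := by
    intro w hw
    have htaylor := Complex.hasSum_taylorSeries_on_ball (hf.mono hrU) hw
    refine hSc.mem_of_tendsto htaylor (.of_forall fun s ↦ S.sum_mem fun n _ ↦ ?_)
    exact S.smul_mem _ (S.smul_mem _
      (Submodule.le_topologicalClosure _ (Submodule.subset_span ⟨n, rfl⟩)))
  have hquot : U.EqOn (S.mkQL ∘ f) 0 := by
    refine AnalyticOnNhd.eqOn_zero_of_preconnected_of_eventuallyEq_zero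
      (S.mkQL.comp_analyticOnNhd (hf.analyticOnNhd hU)) hUc hz₀ ?_
    filter_upwards [Metric.ball_mem_nhds z₀ hr] with w hw
    exact (Submodule.Quotient.mk_eq_zero S).2 (hball w hw)
  exact (Submodule.Quotient.mk_eq_zero S).1 (hquot hz)

theorem integral_mem_of_isClosed {𝕜 X E : Type*} [RCLike 𝕜] [MeasurableSpace X] {μ : Measure X}
    [NormedAddCommGroup E] [NormedSpace ℝ E] [NormedSpace 𝕜 E] [IsScalarTower ℝ 𝕜 E]
    [CompleteSpace E] {S : Submodule 𝕜 E} (hS : IsClosed (S : Set E)) {f : X → E}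
    (hf : ∀ x, f x ∈ S) : ∫ x, f x ∂μ ∈ S := by
  by_cases hfi : Integrable f μ
  · have : IsClosed (S : Set E) := hS
    have hquot : ∀ x, S.mkQL (f x) = 0 := fun x ↦ (Submodule.Quotient.mk_eq_zero S).2 (hf x)
    refine (Submodule.Quotient.mk_eq_zero S).1 ?_
    calc S.mkQL (∫ x, f x ∂μ) = ∫ x, S.mkQL (f x) ∂μ := (S.mkQL.integral_comp_comm hfi).symm
      _ = 0 := by simp only [hquot, integral_zero]
  · rw [integral_undef hfi]
    exact S.zero_mem

theorem exists_integral_norm_sub_sum_lt {𝕜 α ι E : Type*} [NormedField 𝕜]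
    [NormedAddCommGroup E] [NormedSpace 𝕜 E] [MeasurableSpace α] {μ : Measure α} {f : ι → α → E}
    (hf : ∀ i, Integrable (f i) μ) {g : α → E} (hg : Integrable g μ)
    (h : hg.toL1 g ∈ (Submodule.span 𝕜 (Set.range fun i ↦ (hf i).toL1 (f i))).topologicalClosure)
    {ε : ℝ} (hε : 0 < ε) :
    ∃ (s : Finset ι) (c : ι → 𝕜), ∫ a, ‖g a - ∑ i ∈ s, c i • f i a‖ ∂μ < ε := by
  obtain ⟨y, hy, hdist⟩ := Metric.mem_closure_iff.1 h ε hε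
  obtain ⟨c, rfl⟩ := Finsupp.mem_span_range_iff_exists_finsupp.1 hy
  refine ⟨c.support, c, ?_⟩
  rw [dist_eq_norm, L1.norm_eq_integral_norm] at hdist
  have hterm : ∀ᵐ a ∂μ, ∀ i ∈ c.support, (c i • (hf i).toL1 (f i)) a = c i • f i a := by
    refine (Finset.eventually_all c.support).2 fun i _ ↦ ?_
    filter_upwards [Lp.coeFn_smul (c i) ((hf i).toL1 (f i)), (hf i).coeFn_toL1] with a h₁ h₂
    rw [h₁, Pi.smul_apply, h₂]
  refine hdist.trans_eq' (integral_congr_ae ?_)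
  filter_upwards [Lp.coeFn_sub (hg.toL1 g) (c.sum fun i x ↦ x • (hf i).toL1 (f i)),
    Lp.coeFn_finsetSum c.support (fun i ↦ c i • (hf i).toL1 (f i)), hg.coeFn_toL1, hterm]
    with a h₁ h₂ h₃ h₄
  rw [h₁, Pi.sub_apply, h₃, Finsupp.sum, h₂, Finset.sum_apply, Finset.sum_congr rfl h₄]

end ClosedSubmodule

section L1Calculus

open Filter Topology

variable {𝕜 α E : Type*} [RCLike 𝕜] [NormedAddCommGroup E] [NormedSpace 𝕜 E]

theorem norm_slope_le_of_norm_hasDerivAt_le {f f' : 𝕜 → E} {s : Set 𝕜} {C : ℝ} (hs : Convex ℝ s)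
    (hf : ∀ z ∈ s, HasDerivAt f (f' z) z) (hC : ∀ z ∈ s, ‖f' z‖ ≤ C) {z w : 𝕜} (hz : z ∈ s)
    (hw : w ∈ s) : ‖slope f z w‖ ≤ C := by
  have hmvt := hs.norm_image_sub_le_of_norm_hasDerivWithin_le
    (fun w hw ↦ (hf w hw).hasDerivWithinAt) hC hz hw
  rw [slope_def_module, norm_smul, norm_inv]
  exact inv_mul_le_of_le_mul₀ (norm_nonneg _) ((norm_nonneg _).trans (hC z hz))
    (by rwa [mul_comm] at hmvt)

variable [MeasurableSpace α] {μ : Measure α}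

theorem coeFn_slope {p : ENNReal} (F : 𝕜 → Lp E p μ) (z w : 𝕜) :
    slope F z w =ᵐ[μ] fun a ↦ slope (F · a) z w := by
  filter_upwards [Lp.coeFn_smul (w - z)⁻¹ (F w - F z), Lp.coeFn_sub (F w) (F z)] with a h₁ h₂
  rw [slope_def_module, slope_def_module, h₁, Pi.smul_apply, h₂, Pi.sub_apply]

theorem hasDerivAt_L1_of_dominated_loc_of_deriv_le {F : 𝕜 → α →₁[μ] E} {F' : α →₁[μ] E}
    {f f' : 𝕜 → α → E} {z₀ : 𝕜} {r : ℝ} {bound : α → ℝ} (hr : 0 < r)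
    (hF : ∀ z ∈ Metric.ball z₀ r, F z =ᵐ[μ] f z) (hF' : F' =ᵐ[μ] f' z₀)
    (hbound : ∀ z ∈ Metric.ball z₀ r, ∀ a, ‖f' z a‖ ≤ bound a)
    (hbound_int : Integrable bound μ)
    (hderiv : ∀ z ∈ Metric.ball z₀ r, ∀ a, HasDerivAt (f · a) (f' z a) z) :
    HasDerivAt F F' z₀ := by
  have hz₀ : z₀ ∈ Metric.ball z₀ r := Metric.mem_ball_self hr
  rw [hasDerivAt_iff_tendsto_slope, tendsto_iff_norm_sub_tendsto_zero]
  have hball : ∀ᶠ z in 𝓝[≠] z₀, z ∈ Metric.ball z₀ r :=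
    mem_nhdsWithin_of_mem_nhds (Metric.ball_mem_nhds z₀ hr)
  have hslope : ∀ᶠ z in 𝓝[≠] z₀,
      ↑(slope F z₀ z - F') =ᵐ[μ] fun a ↦ slope (f · a) z₀ z - f' z₀ a := by
    filter_upwards [hball] with z hz
    filter_upwards [Lp.coeFn_sub (slope F z₀ z) F', coeFn_slope F z₀ z, hF z hz, hF z₀ hz₀, hF']
      with a h₁ h₂ h₃ h₄ h₅
    rw [h₁, Pi.sub_apply, h₂, h₅, slope_def_module, slope_def_module, h₃, h₄]
  have hdom : Tendsto (fun z ↦ ∫ a, ‖slope (f · a) z₀ z - f' z₀ a‖ ∂μ) (𝓝[≠] z₀)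
      (𝓝 (∫ _, (0 : ℝ) ∂μ)) := by
    refine tendsto_integral_filter_of_dominated_convergence (fun a ↦ bound a + bound a)
      ?_ ?_ (hbound_int.add hbound_int) (.of_forall fun a ↦ ?_)
    · filter_upwards [hslope] with z hz
      exact ((Lp.aestronglyMeasurable _).congr hz).norm
    · filter_upwards [hball] with z hz
      refine .of_forall fun a ↦ ?_
      have hle := norm_slope_le_of_norm_hasDerivAt_le (convex_ball z₀ r)
        (fun w hw ↦ hderiv w hw a) (fun w hw ↦ hbound w hw a) hz₀ hz
      rw [norm_norm]
      exact (norm_sub_le _ _).trans (add_le_add hle (hbound z₀ hz₀ a))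
    · exact tendsto_iff_norm_sub_tendsto_zero.1 (hasDerivAt_iff_tendsto_slope.1 (hderiv z₀ hz₀ a))
  rw [integral_zero] at hdom
  refine hdom.congr' ?_
  filter_upwards [hslope] with z hz
  rw [L1.norm_eq_integral_norm]
  exact integral_congr_ae (hz.fun_comp norm).symm

end L1Calculus

section VerticalStrip

open Complex Metric

variable {E : Type*} [NormedAddCommGroup E]

/-- The open vertical strip `|Re s| < R` in the complex plane. -/
def verticalStrip (R : ℝ) : Set ℂ := {s | |s.re| < R}

theorem isOpen_verticalStrip (R : ℝ) : IsOpen (verticalStrip R) :=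
  isOpen_lt (by fun_prop) continuous_const

theorem convex_verticalStrip (R : ℝ) : Convex ℝ (verticalStrip R) := by
  have hpreimage : verticalStrip R = reLm ⁻¹' Set.Ioo (-R) R := by
    ext s
    simp [verticalStrip, abs_lt]
  exact hpreimage ▸ (convex_Ioo (-R) R).linear_preimage reLm

theorem verticalStrip_mono {r R : ℝ} (h : r ≤ R) : verticalStrip r ⊆ verticalStrip R :=
  fun _ hs ↦ lt_of_lt_of_le hs h

theorem zero_mem_verticalStrip {R : ℝ} (hR : 0 < R) : 0 ∈ verticalStrip R := by
  simpa [verticalStrip] using hR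

theorem neg_mem_verticalStrip {R : ℝ} {s : ℂ} : -s ∈ verticalStrip R ↔ s ∈ verticalStrip R := by
  simp only [verticalStrip, Set.mem_ofPred_eq, neg_re, abs_neg]

theorem add_mul_I_mem_verticalStrip {R : ℝ} {ζ : ℂ} (t : ℝ) :
    ζ + t * I ∈ verticalStrip R ↔ ζ ∈ verticalStrip R := by
  simp [verticalStrip]

theorem mem_verticalStrip_of_dist_le {r δ : ℝ} {s z : ℂ} (hs : s ∈ verticalStrip r)
    (hz : dist z s ≤ δ) : z ∈ verticalStrip (r + δ) := by
  have hre : |z.re - s.re| ≤ δ := (abs_re_le_norm (z - s)).trans (dist_eq_norm z s ▸ hz)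
  have hs : |s.re| < r := hs
  change |z.re| < r + δ
  calc |z.re| = |(z.re - s.re) + s.re| := by ring_nf
    _ ≤ |z.re - s.re| + |s.re| := abs_add_le _ _
    _ < r + δ := by linarith

theorem inv_one_add_sq_le_of_abs_sub_le {a b δ : ℝ} (h : |a - b| ≤ δ) :
    (1 + a ^ 2)⁻¹ ≤ 2 * (1 + δ ^ 2) * (1 + b ^ 2)⁻¹ := by
  have hsq : (a - b) ^ 2 ≤ δ ^ 2 := sq_le_sq' (abs_le.1 h).1 (abs_le.1 h).2
  rw [← div_eq_mul_inv, le_div_iff₀ (by positivity), inv_mul_le_iff₀ (by positivity)]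
  nlinarith [sq_nonneg (a - b - a), sq_nonneg (a * δ), sq_nonneg (b - 2 * a)]

/-- The restriction `t ↦ F (ζ + i t)` of `F` to the vertical line through `ζ`, as an element of
`L¹`; it is `0` when this restriction is not integrable. -/
noncomputable def verticalSlice (F : ℂ → E) (ζ : ℂ) : ℝ →₁[volume] E :=
  open Classical in if h : Integrable (fun t : ℝ ↦ F (ζ + t * I)) then h.toL1 _ else 0

theorem coeFn_verticalSlice {F : ℂ → E} {ζ : ℂ} (h : Integrable fun t : ℝ ↦ F (ζ + t * I)) :
    verticalSlice F ζ =ᵐ[volume] fun t ↦ F (ζ + t * I) := by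
  rw [verticalSlice, dif_pos h]
  exact h.coeFn_toL1

variable [NormedSpace ℂ E]

/-- Functions holomorphic on the strip `|Re s| < R` that are `O((1 + (Im s)²)⁻¹)` uniformly on every
smaller strip; their restrictions to vertical lines are integrable, and so are those of all their
derivatives. -/
structure HasQuadraticDecay (R : ℝ) (F : ℂ → E) : Prop where
  differentiableOn : DifferentiableOn ℂ F (verticalStrip R)
  exists_norm_le : ∀ r < R, ∃ C, ∀ s ∈ verticalStrip r, ‖F s‖ ≤ C * (1 + s.im ^ 2)⁻¹

namespace HasQuadraticDecay

variable {R : ℝ} {F : ℂ → E}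

theorem continuous_slice (hF : HasQuadraticDecay R F) {ζ : ℂ} (hζ : ζ ∈ verticalStrip R) :
    Continuous fun t : ℝ ↦ F (ζ + t * I) :=
  hF.differentiableOn.continuousOn.comp_continuous (by fun_prop)
    fun t ↦ (add_mul_I_mem_verticalStrip t).2 hζ

theorem exists_integrable_bound (hF : HasQuadraticDecay R F) {ζ : ℂ} (hζ : ζ ∈ verticalStrip R) :
    ∃ δ > 0, ∃ bound : ℝ → ℝ, Integrable bound ∧
      ∀ z ∈ ball ζ δ, z ∈ verticalStrip R ∧ ∀ t : ℝ, ‖F (z + t * I)‖ ≤ bound t := by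
  have hζ' : |ζ.re| < R := hζ
  obtain ⟨δ, hδ, hδR⟩ : ∃ δ, 0 < δ ∧ |ζ.re| + δ + δ < R :=
    ⟨(R - |ζ.re|) / 4, by linarith, by linarith⟩
  obtain ⟨C, hC⟩ := hF.exists_norm_le _ hδR
  have hint : Integrable fun t : ℝ ↦ (1 + (t + ζ.im) ^ 2)⁻¹ :=
    integrable_inv_one_add_sq.comp_add_right ζ.im
  refine ⟨δ, hδ, _, (hint.const_mul (2 * (1 + δ ^ 2))).const_mul |C|, fun z hz ↦ ?_⟩
  have hz' : z ∈ verticalStrip (|ζ.re| + δ + δ) :=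
    mem_verticalStrip_of_dist_le (show |ζ.re| < |ζ.re| + δ by linarith) hz.le
  refine ⟨verticalStrip_mono hδR.le hz', fun t ↦ ?_⟩
  have him : |(z + t * I).im - (t + ζ.im)| ≤ δ := by
    have hdist : |(z - ζ).im| ≤ δ := (abs_im_le_norm _).trans (mem_ball_iff_norm.1 hz).le
    simpa [add_comm t] using hdist
  calc ‖F (z + t * I)‖ ≤ C * (1 + (z + t * I).im ^ 2)⁻¹ :=
        hC _ ((add_mul_I_mem_verticalStrip t).2 hz')
    _ ≤ |C| * (1 + (z + t * I).im ^ 2)⁻¹ := by gcongr; exact le_abs_self C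
    _ ≤ _ := by gcongr; exact inv_one_add_sq_le_of_abs_sub_le him

theorem integrable_slice (hF : HasQuadraticDecay R F) {ζ : ℂ} (hζ : ζ ∈ verticalStrip R) :
    Integrable fun t : ℝ ↦ F (ζ + t * I) := by
  obtain ⟨δ, hδ, bound, hbound, hle⟩ := hF.exists_integrable_bound hζ
  exact hbound.mono' (hF.continuous_slice hζ).aestronglyMeasurable
    (.of_forall (hle ζ (mem_ball_self hδ)).2)

theorem vadd_verticalSlice (hF : HasQuadraticDecay R F) {ζ : ℂ} (hζ : ζ ∈ verticalStrip R) (s : ℝ) :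
    DomAddAct.mk s +ᵥ verticalSlice F ζ = verticalSlice F (ζ + s * I) := by
  have hright := coeFn_verticalSlice (hF.integrable_slice ((add_mul_I_mem_verticalStrip s).2 hζ))
  refine Lp.ext ?_
  filter_upwards [DomAddAct.vadd_Lp_ae_eq (DomAddAct.mk s) (verticalSlice F ζ), hright,
    (measurePreserving_add_left volume s).quasiMeasurePreserving.ae
      (coeFn_verticalSlice (hF.integrable_slice hζ))] with t h₁ h₂ h₃
  rw [h₁, Equiv.symm_apply_apply, vadd_eq_add, h₃, h₂]
  push_cast
  ring_nf

variable [CompleteSpace E]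

theorem deriv (hF : HasQuadraticDecay R F) : HasQuadraticDecay R (deriv F) where
  differentiableOn := hF.differentiableOn.deriv (isOpen_verticalStrip R)
  exists_norm_le r hr := by
    obtain ⟨δ, hδ, hrδ⟩ : ∃ δ, 0 < δ ∧ r + δ < R := ⟨(R - r) / 2, by linarith, by linarith⟩
    obtain ⟨C, hC⟩ := hF.exists_norm_le (r + δ) hrδ
    refine ⟨|C| * (2 * (1 + δ ^ 2)) / δ, fun s hs ↦ ?_⟩
    have hstrip : ∀ z ∈ closedBall s δ, z ∈ verticalStrip (r + δ) :=
      fun z hz ↦ mem_verticalStrip_of_dist_le hs hz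
    have hsphere : ∀ z ∈ sphere s δ, ‖F z‖ ≤ |C| * (2 * (1 + δ ^ 2) * (1 + s.im ^ 2)⁻¹) := by
      intro z hz
      have him : |z.im - s.im| ≤ δ :=
        (abs_im_le_norm (z - s)).trans (mem_sphere_iff_norm.1 hz).le
      calc ‖F z‖ ≤ C * (1 + z.im ^ 2)⁻¹ := hC z (hstrip z (sphere_subset_closedBall hz))
        _ ≤ |C| * (1 + z.im ^ 2)⁻¹ := by gcongr; exact le_abs_self C
        _ ≤ _ := by gcongr; exact inv_one_add_sq_le_of_abs_sub_le him
    have hdiff : DiffContOnCl ℂ F (ball s δ) :=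
      DifferentiableOn.diffContOnCl_ball (U := verticalStrip R) hF.differentiableOn fun z hz ↦
        verticalStrip_mono hrδ.le (hstrip z hz)
    calc ‖_root_.deriv F s‖ ≤ |C| * (2 * (1 + δ ^ 2) * (1 + s.im ^ 2)⁻¹) / δ :=
          norm_deriv_le_of_forall_mem_sphere_norm_le hδ hdiff hsphere
      _ = |C| * (2 * (1 + δ ^ 2)) / δ * (1 + s.im ^ 2)⁻¹ := by ring

theorem iteratedDeriv (hF : HasQuadraticDecay R F) (n : ℕ) :
    HasQuadraticDecay R (iteratedDeriv n F) := by
  induction n with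
  | zero => simpa only [iteratedDeriv_zero] using hF
  | succ n ih => simpa only [iteratedDeriv_succ] using ih.deriv

theorem hasDerivAt_verticalSlice (hF : HasQuadraticDecay R F) {ζ : ℂ} (hζ : ζ ∈ verticalStrip R) :
    HasDerivAt (verticalSlice F) (verticalSlice (_root_.deriv F) ζ) ζ := by
  obtain ⟨δ, hδ, bound, hbound, hle⟩ := hF.deriv.exists_integrable_bound hζ
  refine hasDerivAt_L1_of_dominated_loc_of_deriv_le (f := fun z (t : ℝ) ↦ F (z + t * I))
    (f' := fun z (t : ℝ) ↦ _root_.deriv F (z + t * I)) hδ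
    (fun z hz ↦ coeFn_verticalSlice (hF.integrable_slice (hle z hz).1))
    (coeFn_verticalSlice (hF.deriv.integrable_slice hζ)) (fun z hz ↦ (hle z hz).2) hbound
    fun z hz t ↦ ?_
  have hmem := (add_mul_I_mem_verticalStrip t).2 (hle z hz).1
  exact ((hF.differentiableOn.differentiableAt
    ((isOpen_verticalStrip R).mem_nhds hmem)).hasDerivAt).comp_add_const z _

theorem iteratedDeriv_verticalSlice (hF : HasQuadraticDecay R F) (n : ℕ) :
    (verticalStrip R).EqOn (_root_.iteratedDeriv n (verticalSlice F))
      (verticalSlice (_root_.iteratedDeriv n F)) := by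
  induction n with
  | zero => intro ζ _; simp only [iteratedDeriv_zero]
  | succ n ih =>
    intro ζ hζ
    rw [iteratedDeriv_succ, iteratedDeriv_succ, (ih.eventuallyEq_of_mem
      ((isOpen_verticalStrip R).mem_nhds hζ)).deriv_eq]
    exact ((hF.iteratedDeriv n).hasDerivAt_verticalSlice hζ).deriv

theorem verticalSlice_mem_topologicalClosure_span (hF : HasQuadraticDecay R F) {z₀ z : ℂ}
    (hz₀ : z₀ ∈ verticalStrip R) (hz : z ∈ verticalStrip R) :
    verticalSlice F z ∈ (Submodule.span ℂ (Set.range fun n ↦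
      verticalSlice (_root_.iteratedDeriv n F) z₀)).topologicalClosure := by
  have hdiff : DifferentiableOn ℂ (verticalSlice F) (verticalStrip R) := fun ζ hζ ↦
    (hF.hasDerivAt_verticalSlice hζ).differentiableAt.differentiableWithinAt
  have hmem := mem_topologicalClosure_span_iteratedDeriv hdiff (isOpen_verticalStrip R)
    (convex_verticalStrip R).isPreconnected hz₀ hz
  simpa only [hF.iteratedDeriv_verticalSlice _ hz₀] using hmem

end HasQuadraticDecay

end VerticalStrip

section Convolution

variable {X Y E : Type*} [MeasurableSpace X] [MeasurableSpace Y] {μ : Measure X} {ν : Measure Y}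
  [NormedAddCommGroup E] [NormedSpace ℝ E] [CompleteSpace E]

theorem setIntegral_coeFn_integral {F : X → Y →₁[ν] E} (hF : Integrable F μ) (A : Set Y) :
    ∫ y in A, (∫ x, F x ∂μ : Y →₁[ν] E) y ∂ν = ∫ x, ∫ y in A, F x y ∂ν ∂μ := by
  let L : (Y →₁[ν] E) →L[ℝ] E := L1.integralCLM ∘L LpToLpRestrictCLM Y E ℝ ν 1 A
  have hL : ∀ f : Y →₁[ν] E, L f = ∫ y in A, f y ∂ν := fun f ↦
    (L1.integral_eq _).symm.trans <| (L1.integral_eq_integral _).trans <|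
      integral_congr_ae (LpToLpRestrictCLM_coeFn ℝ A f)
  simp only [← hL, L.integral_comp_comm hF]

theorem coeFn_integral_ae_eq [SFinite μ] [SFinite ν] {F : X → Y →₁[ν] E} {f : X → Y → E}
    (hF : Integrable F μ) (hf : ∀ x, F x =ᵐ[ν] f x)
    (hfi : Integrable (Function.uncurry f) (μ.prod ν)) :
    (∫ x, F x ∂μ : Y →₁[ν] E) =ᵐ[ν] fun y ↦ ∫ x, f x y ∂μ := by
  refine Integrable.ae_eq_of_forall_setIntegral_eq _ _ (L1.integrable_coeFn _)
    hfi.integral_prod_right fun A _ _ ↦ ?_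
  have hfA : Integrable (Function.uncurry f) (μ.prod (ν.restrict A)) := by
    rw [← Measure.restrict_univ (μ := μ), Measure.prod_restrict]
    exact hfi.restrict
  calc ∫ y in A, (∫ x, F x ∂μ : Y →₁[ν] E) y ∂ν = ∫ x, ∫ y in A, F x y ∂ν ∂μ :=
        setIntegral_coeFn_integral hF A
    _ = ∫ x, ∫ y in A, f x y ∂ν ∂μ := by
        simp only [integral_congr_ae (ae_restrict_of_ae (hf _))]
    _ = ∫ y in A, ∫ x, f x y ∂μ ∂ν := integral_integral_swap hfA

section Group

open DomAddAct ContinuousLinearMap Convolution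

variable {G E : Type*} [AddCommGroup G] [TopologicalSpace G] [IsTopologicalAddGroup G]
  [LocallyCompactSpace G] [SecondCountableTopology G] [MeasurableSpace G] [BorelSpace G]
  {μ : Measure G} [μ.IsAddHaarMeasure] [NormedAddCommGroup E]

theorem continuous_mk_neg_vadd (f : G →₁[μ] E) : Continuous fun s : G ↦ mk (-s) +ᵥ f :=
  have : Fact ((1 : ENNReal) ≠ ⊤) := ⟨ENNReal.one_ne_top⟩
  (continuous_mk.comp continuous_neg).vadd continuous_const

variable [NormedSpace ℂ E]

/-- The convolution of a scalar and a vector-valued element of `L¹`, as a Bochner integral of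
translates: `mk (-s) +ᵥ f` is the translate `t ↦ f (t - s)`. -/
noncomputable def l1Convolution (k : G →₁[μ] ℂ) (f : G →₁[μ] E) : G →₁[μ] E :=
  ∫ s, k s • (mk (-s) +ᵥ f) ∂μ

theorem integrable_smul_mk_neg_vadd (k : G →₁[μ] ℂ) (f : G →₁[μ] E) :
    Integrable (fun s ↦ k s • (mk (-s) +ᵥ f)) μ := by
  refine ((L1.integrable_coeFn k).norm.mul_const ‖f‖).mono'
    ((Lp.aestronglyMeasurable k).smul (continuous_mk_neg_vadd f).aestronglyMeasurable)
    (.of_forall fun s ↦ ?_)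
  rw [norm_smul, norm_vadd_Lp]

theorem coeFn_l1Convolution [CompleteSpace E] (k : G →₁[μ] ℂ) (f : G →₁[μ] E) :
    l1Convolution k f =ᵐ[μ] k ⋆[lsmul ℂ ℂ, μ] f := by
  refine coeFn_integral_ae_eq (integrable_smul_mk_neg_vadd k f) (fun s ↦ ?_)
    ((L1.integrable_coeFn k).convolution_integrand (lsmul ℂ ℂ) (L1.integrable_coeFn f)).swap
  filter_upwards [Lp.coeFn_smul (k s) (mk (-s) +ᵥ f), vadd_Lp_ae_eq (mk (-s)) f] with t h₁ h₂
  rw [h₁, Pi.smul_apply, h₂, Equiv.symm_apply_apply, vadd_eq_add, neg_add_eq_sub]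
  rfl

theorem l1Convolution_comm (k f : G →₁[μ] ℂ) : l1Convolution k f = l1Convolution f k := by
  refine Lp.ext <| (coeFn_l1Convolution k f).trans <|
    .trans (.of_eq ?_) (coeFn_l1Convolution f k).symm
  funext t
  rw [convolution_lsmul_swap, convolution_lsmul]
  simp only [smul_eq_mul, mul_comm]

theorem l1Convolution_mem [CompleteSpace E] {S : Submodule ℂ (G →₁[μ] E)}
    (hS : IsClosed (S : Set (G →₁[μ] E))) (hS_vadd : ∀ s : Gᵈᵃᵃ, ∀ f ∈ S, s +ᵥ f ∈ S)
    (k : G →₁[μ] ℂ) {f : G →₁[μ] E} (hf : f ∈ S) :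
    l1Convolution k f ∈ S :=
  integral_mem_of_isClosed hS fun s ↦ S.smul_mem (k s) (hS_vadd (mk (-s)) f hf)

theorem topologicalClosure_span_vadd_mem {A : Set (G →₁[μ] E)}
    (hA : ∀ s : Gᵈᵃᵃ, ∀ f ∈ A, s +ᵥ f ∈ A) (s : Gᵈᵃᵃ) (f : G →₁[μ] E)
    (hf : f ∈ (Submodule.span ℂ A).topologicalClosure) :
    s +ᵥ f ∈ (Submodule.span ℂ A).topologicalClosure := by
  refine map_mem_closure (continuous_const_vadd s) hf fun g hg ↦ ?_
  induction hg using Submodule.span_induction with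
  | mem g hg => exact Submodule.subset_span (hA s g hg)
  | zero => rw [vadd_Lp_zero]; exact Submodule.zero_mem _
  | add g₁ g₂ _ _ h₁ h₂ => rw [vadd_Lp_add]; exact Submodule.add_mem _ h₁ h₂
  | smul c g _ h =>
    have hsmul : s +ᵥ c • g = c • (s +ᵥ g) :=
      (Lp.compMeasurePreservingₗ ℂ _ (measurePreserving_vadd (mk.symm s) μ)).map_smul c g
    exact hsmul ▸ Submodule.smul_mem _ c h

end Group

end Convolution

section ExpNegAbs

open Complex

variable {c : ℝ} {s : ℂ}

theorem eqOn_Iic_exp_mul_sub_mul_abs :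
    (Set.Iic 0).EqOn (fun x : ℝ ↦ cexp (s * x - c * |x|)) fun x ↦ cexp ((c + s) * x) := by
  intro x hx
  simp only [abs_of_nonpos (Set.mem_Iic.1 hx), ofReal_neg]
  ring_nf

theorem eqOn_Ioi_exp_mul_sub_mul_abs :
    (Set.Ioi 0).EqOn (fun x : ℝ ↦ cexp (s * x - c * |x|)) fun x ↦ cexp (-(c - s) * x) := by
  intro x hx
  simp only [abs_of_pos (Set.mem_Ioi.1 hx)]
  ring_nf

theorem re_add_pos_of_abs_re_lt (hs : |s.re| < c) : 0 < (c + s).re := by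
  simpa using neg_lt_iff_pos_add'.1 (neg_lt_of_abs_lt hs)

theorem re_neg_sub_neg_of_abs_re_lt (hs : |s.re| < c) : (-(c - s)).re < 0 := by
  simpa using lt_of_abs_lt hs

theorem integrableOn_Iic_exp_mul_sub_mul_abs (hs : |s.re| < c) :
    IntegrableOn (fun x : ℝ ↦ cexp (s * x - c * |x|)) (Set.Iic 0) :=
  (integrableOn_exp_mul_complex_Iic (re_add_pos_of_abs_re_lt hs) 0).congr_fun
    eqOn_Iic_exp_mul_sub_mul_abs.symm measurableSet_Iic

theorem integrableOn_Ioi_exp_mul_sub_mul_abs (hs : |s.re| < c) :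
    IntegrableOn (fun x : ℝ ↦ cexp (s * x - c * |x|)) (Set.Ioi 0) :=
  (integrableOn_exp_mul_complex_Ioi (re_neg_sub_neg_of_abs_re_lt hs) 0).congr_fun
    eqOn_Ioi_exp_mul_sub_mul_abs.symm measurableSet_Ioi

theorem integrable_exp_mul_sub_mul_abs (hs : |s.re| < c) :
    Integrable fun x : ℝ ↦ cexp (s * x - c * |x|) := by
  rw [← integrableOn_univ, ← Set.Iic_union_Ioi (a := (0 : ℝ))]
  exact (integrableOn_Iic_exp_mul_sub_mul_abs hs).union (integrableOn_Ioi_exp_mul_sub_mul_abs hs)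

theorem integral_exp_mul_sub_mul_abs (hs : |s.re| < c) :
    ∫ x : ℝ, cexp (s * x - c * |x|) = (c - s)⁻¹ + (c + s)⁻¹ := by
  rw [← intervalIntegral.integral_Iic_add_Ioi (integrableOn_Iic_exp_mul_sub_mul_abs hs)
    (integrableOn_Ioi_exp_mul_sub_mul_abs hs),
    setIntegral_congr_fun measurableSet_Iic eqOn_Iic_exp_mul_sub_mul_abs,
    setIntegral_congr_fun measurableSet_Ioi eqOn_Ioi_exp_mul_sub_mul_abs,
    integral_exp_mul_complex_Iic (re_add_pos_of_abs_re_lt hs),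
    integral_exp_mul_complex_Ioi (re_neg_sub_neg_of_abs_re_lt hs),
    neg_div_neg_eq]
  simp [add_comm]

theorem integrable_exp_neg_mul_abs (hc : 0 < c) : Integrable fun x : ℝ ↦ cexp (-c * |x|) := by
  simpa using integrable_exp_mul_sub_mul_abs (s := 0) (by simpa using hc)

end ExpNegAbs

section CauchyKernel

open Complex ProbabilityTheory NNReal FourierTransform Convolution ContinuousLinearMap

/-- The Poisson kernel of the upper half-plane at height `γ`, i.e. the density of the centred Cauchy
distribution of scale `γ`, as a complex-valued function. -/
noncomputable def cauchyKernel (γ : ℝ≥0) (t : ℝ) : ℂ := cauchyPDFReal 0 γ t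

variable (γ : ℝ≥0)

theorem integrable_cauchyKernel : Integrable (cauchyKernel γ) :=
  (integrable_cauchyPDFReal 0).ofReal

variable {γ} {δ : ℝ≥0}

theorem cauchyKernel_eq (t : ℝ) :
    cauchyKernel γ t = (2 * Real.pi)⁻¹ * ((γ - t * I)⁻¹ + (γ + t * I)⁻¹) := by
  rcases eq_or_ne γ 0 with rfl | hγ
  · simp [cauchyKernel]
  have hsub : (γ : ℂ) - t * I ≠ 0 := fun h ↦ hγ (by simpa using congrArg re h)
  have hadd : (γ : ℂ) + t * I ≠ 0 := fun h ↦ hγ (by simpa using congrArg re h)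
  have hsq : (t : ℂ) ^ 2 + γ ^ 2 = (γ - t * I) * (γ + t * I) := by ring_nf; simp
  have hpi : (Real.pi : ℂ) ≠ 0 := by simp
  rw [cauchyKernel, cauchyPDFReal_def]
  push_cast
  rw [sub_zero, hsq]
  field_simp
  ring

theorem fourierInv_exp_neg_abs (hγ : γ ≠ 0) :
    𝓕⁻ (fun x : ℝ ↦ cexp (-(2 * Real.pi * γ : ℝ) * |x|)) = cauchyKernel γ := by
  funext t
  have hs : |(2 * Real.pi * t * I : ℂ).re| < 2 * Real.pi * γ := by
    simpa using (by positivity : 0 < 2 * Real.pi * (γ : ℝ))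
  rw [Real.fourierInv_eq']
  calc ∫ x : ℝ, cexp (↑(2 * Real.pi * inner ℝ x t) * I) • cexp (-(2 * Real.pi * γ : ℝ) * |x|)
      = ∫ x : ℝ, cexp (2 * Real.pi * t * I * x - (2 * Real.pi * γ : ℝ) * |x|) := by
        congr 1 with x
        rw [smul_eq_mul, ← Complex.exp_add]
        simp
        ring_nf
    _ = cauchyKernel γ t := by
        rw [integral_exp_mul_sub_mul_abs hs, cauchyKernel_eq, ofReal_inv, mul_add,
          ← mul_inv, ← mul_inv]
        push_cast
        ring_nf

theorem fourier_exp_neg_abs (hγ : γ ≠ 0) :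
    𝓕 (fun x : ℝ ↦ cexp (-(2 * Real.pi * γ : ℝ) * |x|)) = cauchyKernel γ := by
  rw [← fourierInv_exp_neg_abs hγ, Real.fourierInv_eq_fourier_comp_neg]
  simp only [abs_neg]

theorem fourier_cauchyKernel (hγ : γ ≠ 0) :
    𝓕 (cauchyKernel γ) = fun x : ℝ ↦ cexp (-(2 * Real.pi * γ : ℝ) * |x|) := by
  rw [← fourierInv_exp_neg_abs hγ]
  refine Continuous.fourier_fourierInv_eq (by fun_prop)
    (integrable_exp_neg_mul_abs (by positivity)) ?_
  exact fourier_exp_neg_abs hγ ▸ integrable_cauchyKernel γ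

theorem continuous_cauchyKernel (hγ : γ ≠ 0) : Continuous (cauchyKernel γ) := by
  have h : ∀ t : ℝ, (t - 0) ^ 2 + (γ : ℝ) ^ 2 ≠ 0 := fun t ↦ by positivity
  unfold cauchyKernel cauchyPDFReal
  fun_prop (disch := assumption)

theorem norm_cauchyKernel_le (hγ : γ ≠ 0) (t : ℝ) :
    ‖cauchyKernel γ t‖ ≤ Real.pi⁻¹ * γ * ((γ : ℝ) ^ 2)⁻¹ := by
  rw [cauchyKernel, norm_real, cauchyPDFReal_def, Real.norm_of_nonneg (by positivity)]
  gcongr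
  nlinarith [sq_nonneg t]

theorem cauchyKernel_convolution_cauchyKernel (hγ : γ ≠ 0) (hδ : δ ≠ 0) :
    cauchyKernel γ ⋆[lsmul ℂ ℂ, volume] cauchyKernel δ = cauchyKernel (γ + δ) := by
  have hγδ : γ + δ ≠ 0 := by positivity
  have hfourier :
      𝓕 (cauchyKernel γ ⋆[lsmul ℂ ℂ, volume] cauchyKernel δ) = 𝓕 (cauchyKernel (γ + δ)) := by
    funext x
    rw [Real.fourier_smul_convolution_eq (integrable_cauchyKernel γ) (integrable_cauchyKernel δ),
      fourier_cauchyKernel hγ, fourier_cauchyKernel hδ, fourier_cauchyKernel hγδ, smul_eq_mul,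
      ← Complex.exp_add]
    push_cast
    ring_nf
  have hcont : Continuous (cauchyKernel γ ⋆[lsmul ℂ ℂ, volume] cauchyKernel δ) :=
    BddAbove.continuous_convolution_right_of_integrable _
      ⟨_, Set.forall_mem_range.2 (norm_cauchyKernel_le hδ)⟩ (integrable_cauchyKernel γ)
      (continuous_cauchyKernel hδ)
  have hint : Integrable (𝓕 (cauchyKernel (γ + δ))) :=
    fourier_cauchyKernel hγδ ▸ integrable_exp_neg_mul_abs (by positivity)
  calc cauchyKernel γ ⋆[lsmul ℂ ℂ, volume] cauchyKernel δ
    _ = 𝓕⁻ (𝓕 (cauchyKernel γ ⋆[lsmul ℂ ℂ, volume] cauchyKernel δ)) :=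
      (hcont.fourierInv_fourier_eq ((integrable_cauchyKernel γ).integrable_convolution _
        (integrable_cauchyKernel δ)) (hfourier ▸ hint)).symm
    _ = cauchyKernel (γ + δ) := by
      rw [hfourier, (continuous_cauchyKernel hγδ).fourierInv_fourier_eq
        (integrable_cauchyKernel _) hint]

end CauchyKernel

section ApproximateIdentity

open Filter Topology DomAddAct ProbabilityTheory NNReal Convolution ContinuousLinearMap

theorem tendsto_integral_smul_mk_neg_vadd {V E : Type*} [NormedAddCommGroup V] [NormedSpace ℝ V]
    [FiniteDimensional ℝ V] [MeasurableSpace V] [BorelSpace V] {μ : Measure V} [μ.IsAddHaarMeasure]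
    [NormedAddCommGroup E] [NormedSpace ℂ E] [CompleteSpace E] {k : V → ℂ}
    (hk : Integrable k μ) (f : V →₁[μ] E) :
    Tendsto (fun ε : ℝ ↦ ∫ u, k u • (mk (-(ε • u)) +ᵥ f) ∂μ) (𝓝 0) (𝓝 ((∫ u, k u ∂μ) • f)) := by
  rw [← integral_smul_const]
  refine tendsto_integral_filter_of_dominated_convergence (fun u ↦ ‖k u‖ * ‖f‖)
    (.of_forall fun ε ↦ ?_) (.of_forall fun ε ↦ .of_forall fun u ↦ ?_) (hk.norm.mul_const _)
    (.of_forall fun u ↦ ?_)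
  · exact hk.aestronglyMeasurable.smul
      ((continuous_mk_neg_vadd f).comp (continuous_const_smul ε)).aestronglyMeasurable
  · rw [norm_smul, norm_vadd_Lp]
  · refine Tendsto.const_smul ?_ (k u)
    have hcont : Continuous fun ε : ℝ ↦ mk (-(ε • u)) +ᵥ f :=
      (continuous_mk_neg_vadd f).comp (continuous_id.smul continuous_const)
    simpa using hcont.tendsto 0

/-- The Cauchy density of scale `γ` as an element of `L¹(ℝ; ℂ)`. -/
noncomputable def cauchyL1 (γ : ℝ≥0) : ℝ →₁[volume] ℂ := (integrable_cauchyKernel γ).toL1 _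

theorem coeFn_cauchyL1 (γ : ℝ≥0) : cauchyL1 γ =ᵐ[volume] cauchyKernel γ :=
  (integrable_cauchyKernel γ).coeFn_toL1

theorem l1Convolution_cauchyL1_cauchyL1 {γ δ : ℝ≥0} (hγ : γ ≠ 0) (hδ : δ ≠ 0) :
    l1Convolution (cauchyL1 γ) (cauchyL1 δ) = cauchyL1 (γ + δ) := by
  refine Lp.ext ((coeFn_l1Convolution _ _).trans (.trans (.of_eq ?_) (coeFn_cauchyL1 _).symm))
  rw [← cauchyKernel_convolution_cauchyKernel hγ hδ]
  exact convolution_congr _ (coeFn_cauchyL1 γ) (coeFn_cauchyL1 δ)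

theorem cauchyKernel_one_eq {γ : ℝ≥0} (hγ : γ ≠ 0) (u : ℝ) :
    cauchyKernel 1 u = γ * cauchyKernel γ (γ * u) := by
  have : (γ : ℝ) ≠ 0 := by positivity
  simp only [cauchyKernel, cauchyPDFReal_def]
  norm_cast
  field_simp
  simp
  ring

theorem l1Convolution_cauchyL1 {γ : ℝ≥0} (hγ : γ ≠ 0) (f : ℝ →₁[volume] ℂ) :
    l1Convolution (cauchyL1 γ) f = ∫ u : ℝ, cauchyKernel 1 u • (mk (-((γ : ℝ) • u)) +ᵥ f) := by
  have hγ' : (γ : ℝ) ≠ 0 := by positivity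
  calc l1Convolution (cauchyL1 γ) f = ∫ s, cauchyKernel γ s • (mk (-s) +ᵥ f) := by
        refine integral_congr_ae ?_
        filter_upwards [coeFn_cauchyL1 γ] with s hs
        rw [hs]
    _ = (γ : ℝ) • ∫ u : ℝ, cauchyKernel γ (γ * u) • (mk (-(γ * u)) +ᵥ f) := by
        rw [Measure.integral_comp_mul_left (fun s ↦ cauchyKernel γ s • (mk (-s) +ᵥ f)),
          abs_of_nonneg (by positivity), smul_inv_smul₀ hγ']
    _ = _ := by
        rw [← integral_smul]
        simp only [cauchyKernel_one_eq hγ, ← smul_smul, smul_eq_mul]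
        rfl

theorem tendsto_l1Convolution_cauchyL1 (f : ℝ →₁[volume] ℂ) :
    Tendsto (fun γ ↦ l1Convolution (cauchyL1 γ) f) (𝓝[≠] 0) (𝓝 f) := by
  have hone : ∫ u, cauchyKernel 1 u = 1 := by
    simp only [cauchyKernel, integral_complex_ofReal, integral_cauchyPDFReal_eq_one 0 one_ne_zero,
      Complex.ofReal_one]
  have hcoe : Tendsto ((↑) : ℝ≥0 → ℝ) (𝓝[≠] 0) (𝓝 0) :=
    (NNReal.continuous_coe.tendsto 0).mono_left nhdsWithin_le_nhds
  have htend := (tendsto_integral_smul_mk_neg_vadd (integrable_cauchyKernel 1) f).comp hcoe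
  rw [hone, one_smul] at htend
  refine htend.congr' ?_
  filter_upwards [self_mem_nhdsWithin] with γ hγ
  exact (l1Convolution_cauchyL1 hγ f).symm

theorem eq_top_of_cauchyL1_add_mem {S : Submodule ℂ (ℝ →₁[volume] ℂ)}
    (hS : IsClosed (S : Set (ℝ →₁[volume] ℂ))) (hS_vadd : ∀ s : ℝᵈᵃᵃ, ∀ f ∈ S, s +ᵥ f ∈ S)
    (hmem : ∀ γ σ : ℝ≥0, γ ≠ 0 → γ + σ = 1 → cauchyL1 γ + cauchyL1 (1 + σ) ∈ S) : S = ⊤ := by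
  have hone : cauchyL1 1 ∈ S := by
    have htwo : (2 : ℂ) • cauchyL1 1 ∈ S := by
      simpa only [two_smul, add_zero] using hmem 1 0 one_ne_zero (add_zero 1)
    exact (S.smul_mem_iff two_ne_zero).1 htwo
  have hlow : ∀ γ : ℝ≥0, γ ≠ 0 → γ < 1 → cauchyL1 γ ∈ S := by
    intro γ hγ hγ₁
    obtain ⟨σ, hσ, hγσ⟩ := exists_pos_add_of_lt' hγ₁
    have hhigh : cauchyL1 (1 + σ) ∈ S := by
      rw [add_comm, ← l1Convolution_cauchyL1_cauchyL1 hσ.ne' one_ne_zero]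
      exact l1Convolution_mem hS hS_vadd _ hone
    exact (S.add_mem_iff_left hhigh).1 (hmem γ σ hγ hγσ)
  refine (Submodule.eq_top_iff').2 fun f ↦ hS.mem_of_tendsto (tendsto_l1Convolution_cauchyL1 f) ?_
  filter_upwards [self_mem_nhdsWithin, mem_nhdsWithin_of_mem_nhds (Iio_mem_nhds one_pos)]
    with γ hγ hγ₁
  rw [l1Convolution_comm]
  exact l1Convolution_mem hS hS_vadd f (hlow γ hγ hγ₁)

end ApproximateIdentity

section Transform

open Complex ProbabilityTheory

/-- The measure `e^{-|x|} dx` on `ℝ`; its moment generating function is the two-sided Laplace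
transform of `e^{-|x|}`. -/
noncomputable def expNegAbsMeasure : Measure ℝ :=
  volume.withDensity fun x ↦ ENNReal.ofReal (Real.exp (-|x|))

theorem integrable_expNegAbsMeasure_iff {f : ℝ → ℂ} :
    Integrable f expNegAbsMeasure ↔ Integrable fun x : ℝ ↦ cexp (-(|x| : ℝ)) * f x := by
  rw [expNegAbsMeasure, integrable_withDensity_iff_integrable_smul₀' (by fun_prop) (by simp)]
  simp [ENNReal.toReal_ofReal, Real.exp_nonneg]

theorem integral_expNegAbsMeasure (f : ℝ → ℂ) :
    ∫ x, f x ∂expNegAbsMeasure = ∫ x : ℝ, cexp (-(|x| : ℝ)) * f x := by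
  rw [expNegAbsMeasure, integral_withDensity_eq_integral_toReal_smul (by fun_prop) (by simp)]
  simp [ENNReal.toReal_ofReal, Real.exp_nonneg]

/-- The two-sided Laplace transform `s ↦ ∫ e^{sx} e^{-|x|} dx` of `e^{-|x|}`, whose derivatives on
the imaginary axis are the functions `laguerreFourier n`. -/
noncomputable def laplaceExpNegAbs : ℂ → ℂ := complexMGF id expNegAbsMeasure

theorem exp_neg_abs_mul_exp (s : ℂ) (x : ℝ) :
    cexp (-(|x| : ℝ)) * cexp (s * x) = cexp (s * x - (1 : ℝ) * |x|) := by
  rw [← Complex.exp_add]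
  congr 1
  push_cast
  ring

theorem Ioo_subset_integrableExpSet_expNegAbsMeasure :
    Set.Ioo (-1) 1 ⊆ integrableExpSet id expNegAbsMeasure := by
  intro u hu
  have hu' : |(u : ℂ).re| < 1 := abs_lt.2 hu
  have hint : Integrable (fun x : ℝ ↦ cexp (u * x)) expNegAbsMeasure := by
    simpa only [integrable_expNegAbsMeasure_iff, exp_neg_abs_mul_exp] using
      integrable_exp_mul_sub_mul_abs hu'
  change Integrable (fun x : ℝ ↦ Real.exp (u * x)) expNegAbsMeasure
  simpa only [← ofReal_mul, norm_exp_ofReal] using hint.norm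

theorem re_mem_interior_integrableExpSet_expNegAbsMeasure {s : ℂ} (hs : s ∈ verticalStrip 1) :
    s.re ∈ interior (integrableExpSet id expNegAbsMeasure) :=
  interior_maximal Ioo_subset_integrableExpSet_expNegAbsMeasure isOpen_Ioo (abs_lt.1 hs)

theorem laplaceExpNegAbs_eq {s : ℂ} (hs : s ∈ verticalStrip 1) :
    laplaceExpNegAbs s = (1 - s)⁻¹ + (1 + s)⁻¹ := by
  calc laplaceExpNegAbs s = ∫ x : ℝ, cexp (s * x - (1 : ℝ) * |x|) := by
        simp only [laplaceExpNegAbs, complexMGF, id, integral_expNegAbsMeasure, exp_neg_abs_mul_exp]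
    _ = (1 - s)⁻¹ + (1 + s)⁻¹ := by rw [integral_exp_mul_sub_mul_abs hs, ofReal_one]

theorem laguerreFourier_eq_iteratedDeriv_laplaceExpNegAbs (n : ℕ) (t : ℝ) :
    laguerreFourier n t = iteratedDeriv n laplaceExpNegAbs (t * I) := by
  have hmem : (t * I : ℂ) ∈ verticalStrip 1 := by simp [verticalStrip]
  rw [laplaceExpNegAbs, iteratedDeriv_complexMGF
    (re_mem_interior_integrableExpSet_expNegAbsMeasure hmem), integral_expNegAbsMeasure]
  refine integral_congr_ae (.of_forall fun x ↦ ?_)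
  simp only [id]
  ring_nf

theorem one_sub_mul_sqrt_le_norm_one_add {r : ℝ} (hr : r ≤ 1) {s : ℂ} (hs : s ∈ verticalStrip r) :
    (1 - r) * √(1 + s.im ^ 2) ≤ ‖1 + s‖ := by
  have hre : |s.re| < r := hs
  have hr₀ : 0 < r := (abs_nonneg _).trans_lt hre
  have hlow : (1 - r) ^ 2 ≤ (1 + s.re) ^ 2 :=
    pow_le_pow_left₀ (sub_nonneg.2 hr) (by linarith [neg_lt_of_abs_lt hre]) 2
  have hone : (1 - r) ^ 2 ≤ 1 := pow_le_one₀ (sub_nonneg.2 hr) (by linarith)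
  refine abs_le_of_sq_le_sq' ?_ (norm_nonneg _) |>.2
  rw [mul_pow, Real.sq_sqrt (by positivity), Complex.sq_norm, normSq_apply]
  simp only [add_re, one_re, add_im, one_im, zero_add]
  nlinarith [mul_le_mul_of_nonneg_right hone (sq_nonneg s.im)]

theorem norm_inv_one_sub_add_inv_one_add_le {r : ℝ} (hr : r < 1) {s : ℂ}
    (hs : s ∈ verticalStrip r) :
    ‖(1 - s)⁻¹ + (1 + s)⁻¹‖ ≤ 2 * ((1 - r) ^ 2)⁻¹ * (1 + s.im ^ 2)⁻¹ := by
  have : 0 < 1 - r := sub_pos.2 hr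
  have hadd := one_sub_mul_sqrt_le_norm_one_add hr.le hs
  have hsub := one_sub_mul_sqrt_le_norm_one_add hr.le (neg_mem_verticalStrip.2 hs)
  rw [neg_im, neg_sq, ← sub_eq_add_neg] at hsub
  have hpos : 0 < (1 - r) * √(1 + s.im ^ 2) := by positivity
  have hadd₀ : 1 + s ≠ 0 := norm_pos_iff.1 (hpos.trans_le hadd)
  have hsub₀ : 1 - s ≠ 0 := norm_pos_iff.1 (hpos.trans_le hsub)
  calc ‖(1 - s)⁻¹ + (1 + s)⁻¹‖ = 2 * (‖1 - s‖ * ‖1 + s‖)⁻¹ := by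
        rw [inv_add_inv hsub₀ hadd₀, norm_div, norm_mul, div_eq_mul_inv]
        norm_num
    _ ≤ 2 * ((1 - r) * √(1 + s.im ^ 2) * ((1 - r) * √(1 + s.im ^ 2)))⁻¹ := by gcongr
    _ = 2 * ((1 - r) ^ 2)⁻¹ * (1 + s.im ^ 2)⁻¹ := by
        rw [mul_mul_mul_comm, Real.mul_self_sqrt (by positivity), ← sq, mul_inv, mul_assoc]

theorem hasQuadraticDecay_laplaceExpNegAbs :
    HasQuadraticDecay 1 laplaceExpNegAbs where
  differentiableOn := (differentiableOn_complexMGF (X := id)).mono fun _ hs ↦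
    re_mem_interior_integrableExpSet_expNegAbsMeasure hs
  exists_norm_le r hr := by
    refine ⟨2 * ((1 - r) ^ 2)⁻¹, fun s hs ↦ ?_⟩
    rw [laplaceExpNegAbs_eq (lt_trans hs hr)]
    exact norm_inv_one_sub_add_inv_one_add_le hr hs

end Transform

section Density

open Complex NNReal DomAddAct

theorem coe_mem_verticalStrip_one {γ σ : ℝ≥0} (hγ : γ ≠ 0) (hγσ : γ + σ = 1) :
    (σ : ℂ) ∈ verticalStrip 1 := by
  have hσ : σ < 1 := hγσ ▸ lt_add_of_pos_left σ (pos_iff_ne_zero.2 hγ)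
  simpa [verticalStrip] using hσ

theorem verticalSlice_laplaceExpNegAbs_add_neg {γ σ : ℝ≥0} (hγ : γ ≠ 0) (hγσ : γ + σ = 1) :
    verticalSlice laplaceExpNegAbs σ + verticalSlice laplaceExpNegAbs (-σ) =
      (2 * Real.pi : ℂ) • (cauchyL1 γ + cauchyL1 (1 + σ)) := by
  have hσ := coe_mem_verticalStrip_one hγ hγσ
  have hneg := neg_mem_verticalStrip.2 hσ
  have hslice : ∀ ζ ∈ verticalStrip 1, verticalSlice laplaceExpNegAbs ζ =ᵐ[volume]
      fun t ↦ (1 - (ζ + t * I))⁻¹ + (1 + (ζ + t * I))⁻¹ := fun ζ hζ ↦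
    (coeFn_verticalSlice (hasQuadraticDecay_laplaceExpNegAbs.integrable_slice hζ)).trans
      (.of_forall fun t ↦ laplaceExpNegAbs_eq ((add_mul_I_mem_verticalStrip t).2 hζ))
  have hγ' : (γ : ℂ) = 1 - σ := eq_sub_of_add_eq (mod_cast hγσ)
  have hpi : (2 * Real.pi : ℂ) ≠ 0 := by simp
  refine Lp.ext ?_
  filter_upwards [hslice σ hσ, hslice (-σ) hneg,
    Lp.coeFn_add (verticalSlice laplaceExpNegAbs σ) (verticalSlice laplaceExpNegAbs (-σ)),
    Lp.coeFn_smul (2 * Real.pi : ℂ) (cauchyL1 γ + cauchyL1 (1 + σ)),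
    Lp.coeFn_add (cauchyL1 γ) (cauchyL1 (1 + σ)), coeFn_cauchyL1 γ, coeFn_cauchyL1 (1 + σ)]
    with t h₁ h₂ h₃ h₄ h₅ h₆ h₇
  rw [h₃, Pi.add_apply, h₁, h₂, h₄, Pi.smul_apply, h₅, Pi.add_apply, h₆, h₇, cauchyKernel_eq,
    cauchyKernel_eq, ← mul_add, smul_eq_mul]
  push_cast
  rw [mul_inv_cancel_left₀ hpi, hγ']
  ring_nf

theorem topologicalClosure_span_verticalSlice_laplaceExpNegAbs :
    (Submodule.span ℂ (verticalSlice laplaceExpNegAbs '' verticalStrip 1)).topologicalClosure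
      = ⊤ := by
  refine eq_top_of_cauchyL1_add_mem (Submodule.isClosed_topologicalClosure _)
    (topologicalClosure_span_vadd_mem ?_) fun γ σ hγ hγσ ↦ ?_
  · rintro s _ ⟨ζ, hζ, rfl⟩
    exact ⟨_, (add_mul_I_mem_verticalStrip _).2 hζ,
      (hasQuadraticDecay_laplaceExpNegAbs.vadd_verticalSlice hζ (mk.symm s)).symm⟩
  · have hσ := coe_mem_verticalStrip_one hγ hγσ
    have hpi : (2 * Real.pi : ℂ) ≠ 0 := by simp
    have hslice : ∀ ζ ∈ verticalStrip 1, verticalSlice laplaceExpNegAbs ζ ∈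
        (Submodule.span ℂ (verticalSlice laplaceExpNegAbs '' verticalStrip 1)).topologicalClosure :=
      fun ζ hζ ↦ Submodule.le_topologicalClosure _ (Submodule.subset_span ⟨ζ, hζ, rfl⟩)
    rw [← Submodule.smul_mem_iff _ hpi, ← verticalSlice_laplaceExpNegAbs_add_neg hγ hγσ]
    exact Submodule.add_mem _ (hslice σ hσ) (hslice (-σ) (neg_mem_verticalStrip.2 hσ))

theorem integrable_laguerreFourier (n : ℕ) : Integrable (laguerreFourier n) := by
  have hint := (hasQuadraticDecay_laplaceExpNegAbs.iteratedDeriv n).integrable_slice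
    (zero_mem_verticalStrip one_pos)
  simpa only [zero_add, ← laguerreFourier_eq_iteratedDeriv_laplaceExpNegAbs] using hint

theorem verticalSlice_iteratedDeriv_laplaceExpNegAbs_zero (n : ℕ) :
    verticalSlice (iteratedDeriv n laplaceExpNegAbs) 0 = (integrable_laguerreFourier n).toL1 _ := by
  have hint := (hasQuadraticDecay_laplaceExpNegAbs.iteratedDeriv n).integrable_slice
    (zero_mem_verticalStrip one_pos)
  refine Lp.ext ((coeFn_verticalSlice hint).trans
    (.trans (.of_eq ?_) (Integrable.coeFn_toL1 _).symm))
  simp only [zero_add, ← laguerreFourier_eq_iteratedDeriv_laplaceExpNegAbs]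

theorem topologicalClosure_span_laguerreFourier :
    (Submodule.span ℂ (Set.range fun n ↦
      (integrable_laguerreFourier n).toL1 (laguerreFourier n))).topologicalClosure = ⊤ := by
  simp only [← verticalSlice_iteratedDeriv_laplaceExpNegAbs_zero]
  rw [eq_top_iff, ← topologicalClosure_span_verticalSlice_laplaceExpNegAbs]
  refine Submodule.topologicalClosure_minimal _ (Submodule.span_le.2 ?_)
    (Submodule.isClosed_topologicalClosure _)
  rintro _ ⟨ζ, hζ, rfl⟩
  exact hasQuadraticDecay_laplaceExpNegAbs.verticalSlice_mem_topologicalClosure_span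
    (zero_mem_verticalStrip one_pos) hζ

end Density

/-- The linear span of the Fourier transforms of the functions `x ↦ xⁿ e^{−|x|}` (`n ∈ ℕ`)
is dense in `L¹(ℝ; ℂ)`: every integrable function can be approximated in the `L¹` norm by
finite linear combinations of these Fourier transforms. -/
theorem stmt18 :
    (∀ n : ℕ, Integrable (laguerreFourier n) (volume : Measure ℝ)) ∧
    ∀ g : ℝ → ℂ, Integrable g (volume : Measure ℝ) →
      ∀ ε : ℝ, 0 < ε →
        ∃ (s : Finset ℕ) (c : ℕ → ℂ),
          ∫ t : ℝ, ‖g t - ∑ n ∈ s, c n * laguerreFourier n t‖ < ε := by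
  refine ⟨integrable_laguerreFourier, fun g hg ε hε ↦ ?_⟩
  have hmem : hg.toL1 g ∈ (Submodule.span ℂ (Set.range fun n ↦
      (integrable_laguerreFourier n).toL1 (laguerreFourier n))).topologicalClosure :=
    topologicalClosure_span_laguerreFourier ▸ Submodule.mem_top
  exact exists_integral_norm_sub_sum_lt integrable_laguerreFourier hg hmem hε
end
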